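/- Let m > n ≥ 1 and let U be an m×m Haar distributed unitary matrix. Then, for every bounded measurable symmetric function f : D^n → ℝ, the expectation of f evaluated at the n eigenvalues ζ_1,…,ζ_n of the n×n truncation U_{[m,n]} equals (1/C_{[m,n]}) ∫_{D^n} f(ζ_1,…,ζ_n) ∏_{1≤i<j≤n} |ζ_i - ζ_j|² ∏_{i=1}^n (1-|ζ_i|²)^{m-n-1} dζ_1 ⋯ dζ_n, where dζ denotes Lebesgue measure on ℂ and C_{[m,n]} = π^n n! ∏_{j=0}^{n-1} (m-n+j-1 choose j)^{-1} (m-n+j)^{-1}. -/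

import Mathlib

open MeasureTheory Filter Topology Matrix Polynomial
open scoped ENNReal NNReal

noncomputable section

instance matMS (k : ℕ) : MeasurableSpace (Matrix (Fin k) (Fin k) ℂ) :=
  MeasurableSpace.pi

/-- The `n × n` upper-left corner of an `m × m` matrix. -/
def truncation (m n : ℕ) (U : Matrix (Fin m) (Fin m) ℂ) : Matrix (Fin n) (Fin n) ℂ :=
  Matrix.of fun i j => if h : (i : ℕ) < m ∧ (j : ℕ) < m then U ⟨i, h.1⟩ ⟨j, h.2⟩ else 0

/-- An enumeration (with multiplicity) of the eigenvalues of an `n × n` complex matrix,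
i.e. of the roots of its characteristic polynomial. -/
def eigTuple {n : ℕ} (A : Matrix (Fin n) (Fin n) ℂ) : Fin n → ℂ :=
  fun i => A.charpoly.roots.toList.getD i 0

/-- The normalizing constant `C_{[m,n]}` of the joint eigenvalue density of the `n × n`
truncation of an `m × m` Haar unitary matrix. -/
def Cconst (m n : ℕ) : ℝ :=
  Real.pi ^ n * (n.factorial : ℝ) *
    ∏ j ∈ Finset.range n, ((((m - n + j - 1).choose j : ℕ) : ℝ)⁻¹ * ((m - n + j : ℕ) : ℝ)⁻¹)

/-!
Let `G` be an `(n + k) × n` complex matrix with density proportional to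
`det(G*G) ^ t * exp(-t * tr(G*G))`.  This weight is unitarily invariant, and it is the `t`-th power
of a function of `G` attaining its maximum exactly at the isometries `G*G = 1`.  So as `t → ∞` the
ensemble concentrates on the isometries, and the top `n × n` block of `G` converges to the
truncation of a Haar unitary matrix of size `n + k`.

For fixed `t` the eigenvalues of the top block are found by induction on `n`.  Its
lexicographically minimal eigenvalue has an eigenvector `(1, y)`, almost surely unique; trading the
lower part of the first column for `y` is a change of variables, and rotating `(1, y)` to a
coordinate vector splits off the eigenvalue and leaves a matrix of the same kind with `n - 1`
columns.  The Jacobians combine to the squared Vandermonde factor, and each eigenvalue `z` receives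
the weight `∫ W (‖z‖² + ‖w‖²) dw` over `w ∈ ℂ ^ k`, where `W R = R ^ t * exp(-t * R)`
concentrates at `R = 1` as `t → ∞`.  In the limit this weight is therefore proportional to
`(1 - ‖z‖²)₊ ^ (k - 1)`.

The normalising constant comes from Andréief's identity, the matrix of moments being diagonal for a
radial weight.  Finally, a symmetric function of the eigenvalues is a measurable function of the
characteristic polynomial, because Viète's map is a surjection of standard Borel spaces.
-/

/-! ### Monic polynomials, their coefficients and their roots -/

/-- The vector of the coefficients of `1, X, …, X ^ (n - 1)`.  It determines a monic polynomial of
degree `n`, so that these polynomials are parametrised by `Fin n → R`. -/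
def lowerCoeffs {R : Type*} [Semiring R] (n : ℕ) (p : R[X]) : Fin n → R := fun i => p.coeff i

/-- The monic polynomial of degree `n` with prescribed lower coefficients, the inverse of
`lowerCoeffs n` on monic polynomials of degree `n`. -/
def monicOfCoeffs {R : Type*} [Semiring R] {n : ℕ} (q : Fin n → R) : R[X] :=
  X ^ n + ∑ i : Fin n, C (q i) * X ^ (i : ℕ)

/-- The monic polynomial whose roots, with multiplicity, are the entries of a tuple. -/
def monicOfRoots {ι R : Type*} [Fintype ι] [CommRing R] (ζ : ι → R) : R[X] := ∏ i, (X - C (ζ i))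

/-- Viète's map, from a tuple of roots to the lower coefficients of the monic polynomial with these
roots.  Its fibres are the orbits of the permutations of the roots. -/
def vieta {R : Type*} [CommRing R] {n : ℕ} (ζ : Fin n → R) : Fin n → R :=
  lowerCoeffs n (monicOfRoots ζ)

/-- Continuity, coefficient by coefficient, of a family of polynomials; there is no topology on
`R[X]` in Mathlib. -/
def ContinuousCoeffs {Y R : Type*} [TopologicalSpace Y] [Semiring R] [TopologicalSpace R]
    (P : Y → R[X]) : Prop :=
  ∀ i, Continuous fun y => (P y).coeff i

namespace ContinuousCoeffs

variable {Y : Type*} [TopologicalSpace Y]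

section Semiring

variable {R : Type*} [Semiring R] [TopologicalSpace R]

lemma const (p : R[X]) : ContinuousCoeffs fun _ : Y => p := fun _ => continuous_const

lemma C {f : Y → R} (hf : Continuous f) : ContinuousCoeffs fun y => C (f y) := by
  intro i
  by_cases h : i = 0 <;> simp [coeff_C, h, hf, continuous_const]

lemma lowerCoeffs {P : Y → R[X]} (hP : ContinuousCoeffs P) (n : ℕ) :
    Continuous fun y => lowerCoeffs n (P y) :=
  continuous_pi fun i => hP i

lemma mul [IsTopologicalSemiring R] {P Q : Y → R[X]} (hP : ContinuousCoeffs P)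
    (hQ : ContinuousCoeffs Q) : ContinuousCoeffs fun y => P y * Q y := by
  intro i
  simp only [coeff_mul]
  exact continuous_finsetSum _ fun _ _ => (hP _).mul (hQ _)

lemma sum [ContinuousAdd R] {ι : Type*} (s : Finset ι) {P : ι → Y → R[X]}
    (hP : ∀ j, ContinuousCoeffs (P j)) : ContinuousCoeffs fun y => ∑ j ∈ s, P j y := by
  intro i
  simp only [finsetSum_coeff]
  exact continuous_finsetSum _ fun j _ => hP j i

end Semiring

section CommRing

variable {R : Type*} [CommRing R] [TopologicalSpace R] [IsTopologicalRing R]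

lemma sub {P Q : Y → R[X]} (hP : ContinuousCoeffs P) (hQ : ContinuousCoeffs Q) :
    ContinuousCoeffs fun y => P y - Q y := by
  intro i
  simp only [coeff_sub]
  exact (hP i).sub (hQ i)

lemma prod {ι : Type*} (s : Finset ι) {P : ι → Y → R[X]} (hP : ∀ j, ContinuousCoeffs (P j)) :
    ContinuousCoeffs fun y => ∏ j ∈ s, P j y := by
  classical
  induction s using Finset.induction_on with
  | empty => simpa using const 1
  | insert j s hj ih => simpa only [Finset.prod_insert hj] using (hP j).mul ih

lemma monicOfRoots {ι : Type*} [Fintype ι] {ζ : Y → ι → R} (hζ : Continuous ζ) :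
    ContinuousCoeffs fun y => monicOfRoots (ζ y) :=
  prod _ fun i => (const X).sub (C ((continuous_apply i).comp hζ))

lemma charpoly {ι : Type*} [Fintype ι] [DecidableEq ι] {A : Y → Matrix ι ι R} (hA : Continuous A) :
    ContinuousCoeffs fun y => (A y).charpoly := by
  have hentry (i j : ι) : ContinuousCoeffs fun y => (A y).charmatrix i j := by
    have hdiag : ContinuousCoeffs fun _ : Y => Matrix.diagonal (fun _ : ι => (X : R[X])) i j :=
      const _
    simpa only [charmatrix_apply] using hdiag.sub (C (hA.matrix_elem i j))
  simp only [Matrix.charpoly, Matrix.det_apply']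
  exact sum _ fun σ => (const _).mul (prod _ fun i => hentry _ _)

end CommRing

end ContinuousCoeffs

section MonicPolynomials

variable {R : Type*} {n : ℕ}

lemma monicOfCoeffs_monic [Semiring R] (q : Fin n → R) : (monicOfCoeffs q).Monic :=
  monic_X_pow_add (degree_sum_fin_lt q)

lemma monicOfCoeffs_natDegree [Semiring R] [Nontrivial R] (q : Fin n → R) :
    (monicOfCoeffs q).natDegree = n := by
  refine natDegree_eq_of_degree_eq_some ?_
  rw [monicOfCoeffs, degree_add_eq_left_of_degree_lt, degree_X_pow]
  simpa only [degree_X_pow] using degree_sum_fin_lt q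

lemma lowerCoeffs_monicOfCoeffs [Semiring R] (q : Fin n → R) :
    lowerCoeffs n (monicOfCoeffs q) = q := by
  funext i
  have hval (j : Fin n) : (i : ℕ) = j ↔ i = j := Fin.ext_iff.symm
  simp [lowerCoeffs, monicOfCoeffs, coeff_X_pow, finsetSum_coeff, hval, i.2.ne]

lemma lowerCoeffs_injOn [Semiring R] :
    Set.InjOn (lowerCoeffs n) {p : R[X] | p.Monic ∧ p.natDegree = n} := by
  rintro p ⟨hp, hpn⟩ q ⟨hq, hqn⟩ hpq
  ext i
  rcases lt_trichotomy i n with hi | rfl | hi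
  · exact congrFun hpq ⟨i, hi⟩
  · have hpi : p.coeff i = 1 := hpn ▸ hp.coeff_natDegree
    have hqi : q.coeff i = 1 := hqn ▸ hq.coeff_natDegree
    rw [hpi, hqi]
  · rw [coeff_eq_zero_of_natDegree_lt (hpn ▸ hi), coeff_eq_zero_of_natDegree_lt (hqn ▸ hi)]

lemma monicOfCoeffs_lowerCoeffs [Semiring R] [Nontrivial R] {p : R[X]} (hp : p.Monic)
    (hpn : p.natDegree = n) : monicOfCoeffs (lowerCoeffs n p) = p :=
  lowerCoeffs_injOn ⟨monicOfCoeffs_monic _, monicOfCoeffs_natDegree _⟩ ⟨hp, hpn⟩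
    (lowerCoeffs_monicOfCoeffs _)

section Roots

variable [CommRing R]

lemma monicOfRoots_monic {ι : Type*} [Fintype ι] (ζ : ι → R) : (monicOfRoots ζ).Monic :=
  monic_prod_X_sub_C _ _

lemma monicOfRoots_natDegree [Nontrivial R] (ζ : Fin n → R) : (monicOfRoots ζ).natDegree = n := by
  simp [monicOfRoots, natDegree_prod_of_monic _ _ fun i _ => monic_X_sub_C (ζ i)]

lemma monicOfRoots_eval {ι : Type*} [Fintype ι] (ζ : ι → R) (z : R) :
    (monicOfRoots ζ).eval z = ∏ i, (z - ζ i) := by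
  simp [monicOfRoots, eval_prod]

lemma monicOfRoots_eq_multiset_prod {ι : Type*} [Fintype ι] (ζ : ι → R) :
    monicOfRoots ζ = ((Finset.univ.val.map ζ).map fun a => X - C a).prod := by
  rw [Multiset.map_map]; rfl

lemma monicOfRoots_cons (z : R) (ζ : Fin n → R) :
    monicOfRoots (Fin.cons z ζ : Fin (n + 1) → R) = (X - C z) * monicOfRoots ζ := by
  simp [monicOfRoots, Fin.prod_univ_succ]

lemma monicOfRoots_comp_perm {ι : Type*} [Fintype ι] (ζ : ι → R) (σ : Equiv.Perm ι) :
    monicOfRoots (ζ ∘ σ) = monicOfRoots ζ :=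
  Equiv.prod_comp σ fun i => X - C (ζ i)

lemma monicOfRoots_toList_roots [IsDomain R] {p : R[X]} (hs : p.Splits) (hp : p.Monic)
    (hpn : p.natDegree = n) : monicOfRoots (fun i : Fin n => p.roots.toList.getD i 0) = p := by
  have hlen : p.roots.toList.length = n := by
    rw [Multiset.length_toList, ← hs.natDegree_eq_card_roots, hpn]
  have hlist : List.ofFn (fun i : Fin n => p.roots.toList.getD i 0) = p.roots.toList :=
    List.ext_getElem (by simp [hlen]) fun i _ hi => by
      rw [List.getElem_ofFn, List.getD_eq_getElem _ _ hi]
  rw [monicOfRoots_eq_multiset_prod, Fin.univ_val_map, hlist, Multiset.coe_toList]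
  exact (hs.eq_prod_roots_of_monic hp).symm

lemma exists_perm_of_monicOfRoots_eq [IsDomain R] {ι : Type*} [Fintype ι] {ζ η : ι → R}
    (h : monicOfRoots ζ = monicOfRoots η) : ∃ σ : Equiv.Perm ι, η ∘ σ = ζ := by
  classical
  have hroots : Finset.univ.val.map ζ = Finset.univ.val.map η := by
    simpa only [monicOfRoots_eq_multiset_prod, roots_multiset_prod_X_sub_C] using
      congrArg Polynomial.roots h
  have hcard (z : R) : Fintype.card {i // ζ i = z} = Fintype.card {i // η i = z} := by
    have := congrArg (Multiset.count z) hroots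
    rw [Multiset.count_map, Multiset.count_map] at this
    simpa only [Fintype.card_subtype, Finset.card_def, Finset.filter_val, eq_comm] using this
  exact ⟨Equiv.ofFiberEquiv fun z => Fintype.equivOfCardEq (hcard z),
    funext (Equiv.ofFiberEquiv_map _)⟩

lemma vieta_eq_iff [Nontrivial R] {ζ : Fin n → R} {p : R[X]} (hp : p.Monic)
    (hpn : p.natDegree = n) : vieta ζ = lowerCoeffs n p ↔ monicOfRoots ζ = p :=
  ⟨fun h => lowerCoeffs_injOn ⟨monicOfRoots_monic ζ, monicOfRoots_natDegree ζ⟩ ⟨hp, hpn⟩ h,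
    fun h => congrArg (lowerCoeffs n) h⟩

lemma continuous_vieta [TopologicalSpace R] [IsTopologicalRing R] :
    Continuous (vieta : (Fin n → R) → Fin n → R) :=
  (ContinuousCoeffs.monicOfRoots continuous_id).lowerCoeffs n

end Roots

lemma vieta_surjective {K : Type*} [Field K] [IsAlgClosed K] :
    Function.Surjective (vieta : (Fin n → K) → Fin n → K) := fun q =>
  ⟨_, ((vieta_eq_iff (monicOfCoeffs_monic q) (monicOfCoeffs_natDegree q)).2
    (monicOfRoots_toList_roots (IsAlgClosed.splits _) (monicOfCoeffs_monic q)
      (monicOfCoeffs_natDegree q))).trans (lowerCoeffs_monicOfCoeffs q)⟩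

-- A Borel surjection between standard Borel spaces is a measurable quotient map.
lemma measurable_of_comp_vieta {Z β : Type*} [MeasurableSpace Z] [StandardBorelSpace Z]
    [MeasurableSpace β] {g : Z × (Fin n → ℂ) → β}
    (hg : Measurable fun x : Z × (Fin n → ℂ) => g (x.1, vieta x.2)) : Measurable g := by
  have hmap : Measurable (Prod.map id vieta : Z × (Fin n → ℂ) → Z × (Fin n → ℂ)) :=
    measurable_id.prodMap continuous_vieta.measurable
  exact (hmap.measurable_comp_iff_of_surjective
    (Function.surjective_id.prodMap vieta_surjective)).1 hg

lemma monicOfRoots_eigTuple (A : Matrix (Fin n) (Fin n) ℂ) :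
    monicOfRoots (eigTuple A) = A.charpoly :=
  monicOfRoots_toList_roots (IsAlgClosed.splits _) (charpoly_monic A) (by simp)

end MonicPolynomials

/-! ### Unitary completion of an isometry -/

section UnitaryCompletion

variable {𝕜 ι κ : Type*} [RCLike 𝕜] [Fintype ι] [DecidableEq κ]

lemma orthonormal_col_iff (M : Matrix ι κ 𝕜) :
    Orthonormal 𝕜 (fun j => WithLp.toLp 2 (M.col j)) ↔ Mᴴ * M = 1 := by
  simp only [orthonormal_iff_ite, ← Matrix.ext_iff, EuclideanSpace.inner_eq_star_dotProduct,
    dotProduct_comm _ (star _), Matrix.mul_apply', one_apply]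
  rfl

lemma exists_unitary_extending_isometry [DecidableEq ι] (e : κ ↪ ι) {M : Matrix ι κ 𝕜}
    (hM : Mᴴ * M = 1) : ∃ U : unitaryGroup ι 𝕜, U.val.submatrix id e = M := by
  let f : ι → EuclideanSpace 𝕜 ι := Function.extend e (fun j => WithLp.toLp 2 (M.col j)) 0
  have hfe (j : κ) : f (e j) = WithLp.toLp 2 (M.col j) := e.injective.extend_apply _ _ j
  have hf : Orthonormal 𝕜 ((Set.range e).domRestrict f) := by
    have hcol := orthonormal_iff_ite.1 ((orthonormal_col_iff M).2 hM)
    rw [orthonormal_iff_ite]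
    rintro ⟨_, i, rfl⟩ ⟨_, j, rfl⟩
    simpa only [Set.domRestrict_apply, hfe, Subtype.ext_iff, e.apply_eq_iff_eq] using hcol i j
  obtain ⟨b, hb⟩ := hf.exists_orthonormalBasis_extension_of_card_eq (by simp)
  refine ⟨⟨of fun i j => b j i, mem_unitaryGroup_iff'.2 ?_⟩, ?_⟩
  · exact (orthonormal_col_iff _).1 b.orthonormal
  ext i j
  simp [hb _ ⟨j, rfl⟩, hfe]

lemma exists_unitary_mulVec_eq_single {k : ℕ} (x : Fin (k + 1) → ℂ) :
    ∃ U : Matrix (Fin (k + 1)) (Fin (k + 1)) ℂ, Uᴴ * U = 1 ∧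
      U *ᵥ x = Pi.single 0 ((√(∑ i, ‖x i‖ ^ 2) : ℝ) : ℂ) := by
  set r := √(∑ i, ‖x i‖ ^ 2) with hr
  rcases eq_or_ne x 0 with rfl | hx
  · exact ⟨1, by simp, by simp [hr]⟩
  have hsum : 0 < ∑ i, ‖x i‖ ^ 2 := by
    obtain ⟨i, hi⟩ := Function.ne_iff.1 hx
    exact Finset.sum_pos' (fun _ _ => by positivity) ⟨i, Finset.mem_univ i,
      pow_pos (norm_pos_iff.2 hi) 2⟩
  have hr0 : (r : ℂ) ≠ 0 := by exact_mod_cast (Real.sqrt_pos.2 hsum).ne'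
  have hrr : ∑ i, star (x i) * x i = (r : ℂ) * r := by
    rw [← Complex.ofReal_mul, Real.mul_self_sqrt hsum.le]
    push_cast
    exact Finset.sum_congr rfl fun i _ => Complex.conj_mul' (x i)
  obtain ⟨V, hV⟩ := exists_unitary_extending_isometry (⟨fun _ : Unit => 0, fun _ _ _ => rfl⟩ :
    Unit ↪ Fin (k + 1)) (M := replicateCol Unit ((r : ℂ)⁻¹ • x)) (by
      ext
      have hunit : ∑ i, star ((r : ℂ)⁻¹ * x i) * ((r : ℂ)⁻¹ * x i) = 1 := by
        simp only [star_mul', star_inv₀, RCLike.star_def, Complex.conj_ofReal] at hrr ⊢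
        rw [Finset.sum_congr rfl fun i _ => mul_mul_mul_comm _ _ _ _, ← Finset.mul_sum, hrr]
        field_simp
      simpa [Matrix.mul_apply] using hunit)
  have hx' : x = (r : ℂ) • V.val *ᵥ Pi.single 0 1 := by
    have hcol : V.val.col 0 = (r : ℂ)⁻¹ • x := funext fun i => congrFun (congrFun hV i) ()
    rw [mulVec_single_one, hcol, smul_smul, mul_inv_cancel₀ hr0, one_smul]
  refine ⟨V.valᴴ, by
    rw [conjTranspose_conjTranspose]; exact mem_unitaryGroup_iff.1 V.2, ?_⟩
  have hVV : V.valᴴ * V.val = 1 := mem_unitaryGroup_iff'.1 V.2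
  rw [hx', mulVec_smul, mulVec_mulVec, hVV, one_mulVec, ← Pi.single_smul, smul_eq_mul, mul_one]

end UnitaryCompletion

/-! ### The weights `det(G*G)^t exp(-t tr(G*G))` -/

/-- The squared Frobenius norm of a matrix. -/
def frobeniusSq {ι κ : Type*} [Fintype ι] [Fintype κ] (G : Matrix ι κ ℂ) : ℝ :=
  ∑ i, ∑ j, ‖G i j‖ ^ 2

/-- The density `det(G*G)^t exp(-t tr(G*G))` of a Laguerre type ensemble of rectangular matrices.
It depends only on the Gram matrix `G*G`, and concentrates on the isometries as `t → ∞`. -/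
def gramWeight (t : ℕ) {ι κ : Type*} [Fintype ι] [Fintype κ] [DecidableEq κ] (G : Matrix ι κ ℂ) :
    ℝ :=
  ‖(Gᴴ * G).det‖ ^ t * Real.exp (-(t * frobeniusSq G))

/-- The rectangular matrix `[[x, Z], [c, D]]` with one distinguished column and a distinguished
square block `D`. -/
def tallBordered {R μ ι : Type*} (x : μ → R) (Z : Matrix μ ι R) (c : ι → R) (D : Matrix ι ι R) :
    Matrix (μ ⊕ ι) (Unit ⊕ ι) R :=
  fromBlocks (replicateCol Unit x) Z (replicateCol Unit c) D

section GramWeight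

variable {ι ι' κ κ' : Type*} [Fintype ι] [Fintype ι'] [Fintype κ] [Fintype κ']

lemma frobeniusSq_eq_trace (G : Matrix ι κ ℂ) : (frobeniusSq G : ℂ) = (Gᴴ * G).trace := by
  simp only [frobeniusSq, Matrix.trace, Matrix.diag, Matrix.mul_apply, conjTranspose_apply]
  push_cast
  rw [Finset.sum_comm]
  exact Finset.sum_congr rfl fun j _ => Finset.sum_congr rfl fun i _ =>
    (Complex.conj_mul' (G i j)).symm

lemma frobeniusSq_eq_of_trace_eq {G : Matrix ι κ ℂ} {G' : Matrix ι' κ' ℂ}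
    (h : (Gᴴ * G).trace = (G'ᴴ * G').trace) : frobeniusSq G = frobeniusSq G' := by
  rw [← frobeniusSq_eq_trace, ← frobeniusSq_eq_trace] at h
  exact_mod_cast h

lemma frobeniusSq_isometry_mul [DecidableEq ι] {U : Matrix ι' ι ℂ} (hU : Uᴴ * U = 1)
    (G : Matrix ι κ ℂ) : frobeniusSq (U * G) = frobeniusSq G :=
  frobeniusSq_eq_of_trace_eq <| by
    rw [conjTranspose_mul, Matrix.mul_assoc, ← Matrix.mul_assoc Uᴴ, hU, Matrix.one_mul]

lemma continuous_frobeniusSq : Continuous (frobeniusSq : Matrix ι κ ℂ → ℝ) :=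
  continuous_finsetSum _ fun i _ => continuous_finsetSum _ fun j _ =>
    (continuous_id.matrix_elem i j).norm.pow 2

variable [DecidableEq κ] [DecidableEq κ'] (t : ℕ)

lemma gramWeight_nonneg (G : Matrix ι κ ℂ) : 0 ≤ gramWeight t G := by
  unfold gramWeight; positivity

lemma continuous_gramWeight : Continuous (gramWeight t : Matrix ι κ ℂ → ℝ) := by
  have hdet : Continuous fun G : Matrix ι κ ℂ => (Gᴴ * G).det :=
    (continuous_id.matrix_conjTranspose.matrix_mul continuous_id).matrix_det
  exact (hdet.norm.pow t).mul (Real.continuous_exp.comp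
    (continuous_const.mul continuous_frobeniusSq).neg)

lemma gramWeight_eq_of_gram {G : Matrix ι κ ℂ} {G' : Matrix ι' κ ℂ} (h : Gᴴ * G = G'ᴴ * G') :
    gramWeight t G = gramWeight t G' := by
  simp only [gramWeight, h, frobeniusSq_eq_of_trace_eq (congrArg trace h)]

lemma gramWeight_isometry_mul [DecidableEq ι] {U : Matrix ι' ι ℂ} (hU : Uᴴ * U = 1)
    (G : Matrix ι κ ℂ) : gramWeight t (U * G) = gramWeight t G :=
  gramWeight_eq_of_gram t <| by
    rw [conjTranspose_mul, Matrix.mul_assoc, ← Matrix.mul_assoc Uᴴ, hU, Matrix.one_mul]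

lemma gramWeight_mul_unitary {V : Matrix κ κ ℂ} (hV : V * Vᴴ = 1) (G : Matrix ι κ ℂ) :
    gramWeight t (G * V) = gramWeight t G := by
  have hgram : (G * V)ᴴ * (G * V) = Vᴴ * (Gᴴ * G * V) := by
    simp only [conjTranspose_mul, Matrix.mul_assoc]
  have htrace : (Vᴴ * (Gᴴ * G * V)).trace = (Gᴴ * G).trace := by
    rw [trace_mul_comm, Matrix.mul_assoc _ V, hV, Matrix.mul_one]
  have hdet : (Vᴴ * (Gᴴ * G * V)).det = (Gᴴ * G).det := by
    rw [det_mul_comm, Matrix.mul_assoc _ V, hV, Matrix.mul_one]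
  have hfrob : frobeniusSq (G * V) = frobeniusSq G :=
    frobeniusSq_eq_of_trace_eq (by rw [hgram, htrace])
  rw [gramWeight, gramWeight, hfrob, hgram, hdet]

lemma gramWeight_submatrix (e : ι' ≃ ι) (f : κ' ≃ κ) (G : Matrix ι κ ℂ) :
    gramWeight t (G.submatrix e f) = gramWeight t G := by
  have hgram : (G.submatrix e f)ᴴ * G.submatrix e f = (Gᴴ * G).submatrix f f := by
    rw [conjTranspose_submatrix, submatrix_mul_equiv]
  have hfrob : frobeniusSq (G.submatrix e f) = frobeniusSq G := by
    simp only [frobeniusSq, submatrix_apply]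
    rw [Equiv.sum_comp e fun i => ∑ j, ‖G i (f j)‖ ^ 2]
    exact Finset.sum_congr rfl fun i _ => Equiv.sum_comp f fun j => ‖G i j‖ ^ 2
  rw [gramWeight, gramWeight, hgram, hfrob, det_submatrix_equiv_self]

end GramWeight

section TallBordered

variable {ι : Type*}

lemma continuous_tallBordered {Y R μ : Type*} [TopologicalSpace Y] [TopologicalSpace R]
    {x : Y → μ → R} {Z : Y → Matrix μ ι R} {c : Y → ι → R} {D : Y → Matrix ι ι R}
    (hx : Continuous x) (hZ : Continuous Z) (hc : Continuous c) (hD : Continuous D) :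
    Continuous fun y => tallBordered (x y) (Z y) (c y) (D y) :=
  (hx.matrix_replicateCol).matrix_fromBlocks hZ hc.matrix_replicateCol hD

variable [Fintype ι] {k : ℕ} (r : ℝ) (Z : Matrix (Fin (k + 1)) ι ℂ) (B : Matrix ι ι ℂ)

lemma frobeniusSq_tallBordered_single :
    frobeniusSq (tallBordered (Pi.single 0 (r : ℂ)) Z 0 B) =
      r ^ 2 + ∑ j, ‖Z 0 j‖ ^ 2 + frobeniusSq (fromRows (of fun i : Fin k => Z i.succ) B) := by
  simp only [frobeniusSq, tallBordered, Fintype.sum_sum_type, Fin.sum_univ_succ]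
  simp
  ring

variable [DecidableEq ι] (t : ℕ)

lemma gramWeight_tallBordered_isometry_mul {μ μ' : Type*} [Fintype μ] [DecidableEq μ] [Fintype μ']
    {U : Matrix μ' μ ℂ} (hU : Uᴴ * U = 1) (x : μ → ℂ) (Z : Matrix μ ι ℂ) :
    gramWeight t (tallBordered (U *ᵥ x) (U * Z) 0 B) = gramWeight t (tallBordered x Z 0 B) := by
  have hblock :
      (fromBlocks U 0 0 (1 : Matrix ι ι ℂ))ᴴ * fromBlocks U 0 0 (1 : Matrix ι ι ℂ) = 1 := by
    simp [fromBlocks_conjTranspose, fromBlocks_multiply, hU]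
  have hmul : fromBlocks U 0 0 (1 : Matrix ι ι ℂ) * tallBordered x Z 0 B =
      tallBordered (U *ᵥ x) (U * Z) 0 B := by
    simp [tallBordered, fromBlocks_multiply, replicateCol_mulVec]
  rw [← hmul, gramWeight_isometry_mul t hblock]

lemma gram_tallBordered_single :
    (tallBordered (Pi.single 0 (r : ℂ)) Z 0 B)ᴴ * tallBordered (Pi.single 0 (r : ℂ)) Z 0 B =
      (fromBlocks (of fun _ _ => (r : ℂ)) (replicateRow Unit (Z 0)) 0 1)ᴴ *
        (fromBlocks (1 : Matrix Unit Unit ℂ) 0 0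
          ((fromRows (of fun i : Fin k => Z i.succ) B)ᴴ *
            fromRows (of fun i : Fin k => Z i.succ) B) *
        fromBlocks (of fun _ _ => (r : ℂ)) (replicateRow Unit (Z 0)) 0 1) := by
  simp only [tallBordered, fromBlocks_conjTranspose, fromBlocks_multiply]
  congr 1 <;> ext i j <;>
    simp [Matrix.mul_apply, Fin.sum_univ_succ, Fintype.sum_sum_type, add_assoc]

lemma gramWeight_tallBordered_single :
    gramWeight t (tallBordered (Pi.single 0 (r : ℂ)) Z 0 B) =
      (r ^ 2) ^ t * Real.exp (-(t * r ^ 2)) * Real.exp (-(t * ∑ j, ‖Z 0 j‖ ^ 2)) *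
        gramWeight t (fromRows (of fun i : Fin k => Z i.succ) B) := by
  set H := fromRows (of fun i : Fin k => Z i.succ) B
  set T : Matrix (Unit ⊕ ι) (Unit ⊕ ι) ℂ :=
    fromBlocks (of fun _ _ => (r : ℂ)) (replicateRow Unit (Z 0)) 0 1 with hT
  have hTdet : ‖T.det‖ = |r| := by simp [hT]
  have hdet : ‖(Tᴴ * (fromBlocks (1 : Matrix Unit Unit ℂ) 0 0 (Hᴴ * H) * T)).det‖ =
      r ^ 2 * ‖(Hᴴ * H).det‖ := by
    rw [det_mul, det_mul, det_fromBlocks_zero₂₁, det_conjTranspose, norm_mul, norm_mul, norm_star,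
      hTdet, det_one, one_mul, ← sq_abs r]
    ring
  have hexp : -(t * (r ^ 2 + ∑ j, ‖Z 0 j‖ ^ 2 + frobeniusSq H)) =
      -(t * r ^ 2) + -(t * ∑ j, ‖Z 0 j‖ ^ 2) + -(t * frobeniusSq H) := by ring
  rw [gramWeight, gramWeight, gram_tallBordered_single, frobeniusSq_tallBordered_single, hdet,
    mul_pow, hexp, Real.exp_add, Real.exp_add]
  ring

end TallBordered
/-! ### Deflation of a bordered matrix along an eigenvector -/

section Deflation

variable {ι R : Type*} [Fintype ι] [CommRing R] (a : R) (b : ι → R) (D : Matrix ι ι R) (y : ι → R)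

/-- The square matrix `[[a, b], [c, D]]` with a distinguished row and column. -/
def bordered {ι R : Type*} (a : R) (b c : ι → R) (D : Matrix ι ι R) :
    Matrix (Unit ⊕ ι) (Unit ⊕ ι) R :=
  fromBlocks (of fun _ _ => a) (replicateRow Unit b) (replicateCol Unit c) D

/-- The eigenvalue of a bordered matrix with top row `(a, b)` at an eigenvector `(1, y)`. -/
def borderEigenvalue : R := a + b ⬝ᵥ y

/-- The column `c` for which `(1, y)` is an eigenvector of `[[a, b], [c, D]]`. -/
def borderColumn : ι → R := borderEigenvalue a b y • y - D *ᵥ y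

/-- The compression of `[[a, b], [c, D]]` to the quotient by its eigenvector `(1, y)`. -/
def deflation {ι R : Type*} [CommRing R] (b : ι → R) (D : Matrix ι ι R) (y : ι → R) :
    Matrix ι ι R :=
  D - vecMulVec y b

lemma charpoly_bordered_borderColumn [DecidableEq ι] :
    (bordered a b (borderColumn a b D y) D).charpoly =
      (X - C (borderEigenvalue a b y)) * (deflation b D y).charpoly := by
  set P : Matrix (Unit ⊕ ι) (Unit ⊕ ι) R := fromBlocks 1 0 (replicateCol Unit y) 1 with hP
  set Q : Matrix (Unit ⊕ ι) (Unit ⊕ ι) R := fromBlocks 1 0 (-replicateCol Unit y) 1 with hQ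
  have hPQ : P * Q = 1 := by
    rw [hP, hQ, fromBlocks_multiply, ← fromBlocks_one]
    congr 1 <;> simp
  have hconj : Q * (bordered a b (borderColumn a b D y) D * P) =
      fromBlocks (of fun _ _ => borderEigenvalue a b y) (replicateRow Unit b) 0
        (deflation b D y) := by
    rw [hP, hQ, bordered, fromBlocks_multiply, fromBlocks_multiply]
    congr 1 <;> ext i j <;>
      simp [Matrix.mul_apply, borderEigenvalue, borderColumn, deflation, dotProduct, mulVec,
        vecMulVec_apply]
    all_goals ring
  have hunit : (of fun _ _ : Unit => borderEigenvalue a b y).charpoly =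
      X - C (borderEigenvalue a b y) := by
    simp [Matrix.charpoly, det_unique]
  have hsim : (bordered a b (borderColumn a b D y) D).charpoly =
      (Q * (bordered a b (borderColumn a b D y) D * P)).charpoly := by
    rw [Matrix.charpoly_mul_comm, Matrix.mul_assoc, hPQ, Matrix.mul_one]
  rw [hsim, hconj, Matrix.charpoly_fromBlocks_zero₂₁, hunit]

/-- Observability of the pair `(b, D)`, in the form of the Hautus test: no eigenvector of `D` is
annihilated by `b`. -/
def IsObservable : Prop := ∀ (z : ι → R) (μ : R), D *ᵥ z = μ • z → b ⬝ᵥ z = 0 → z = 0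

variable {a b D y}

lemma IsObservable.eq_of_borderColumn_eq {y' : ι → R} (h : IsObservable b D)
    (hcol : borderColumn a b D y = borderColumn a b D y')
    (heig : borderEigenvalue a b y = borderEigenvalue a b y') : y = y' := by
  refine sub_eq_zero.1 (h (y - y') (borderEigenvalue a b y) ?_ ?_)
  · rw [borderColumn, borderColumn, ← heig] at hcol
    rw [mulVec_sub, smul_sub]
    linear_combination -hcol
  · rw [dotProduct_sub, sub_eq_zero]
    exact add_left_cancel heig

lemma IsObservable.exists_borderColumn_eq {K : Type*} [Field K] [DecidableEq ι] {a z : K}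
    {b c : ι → K} {D : Matrix ι ι K} (h : IsObservable b D)
    (hz : (bordered a b c D).charpoly.IsRoot z) :
    ∃ y, borderEigenvalue a b y = z ∧ borderColumn a b D y = c := by
  obtain ⟨v, hv0, hv⟩ := exists_mulVec_eq_zero_iff.2 ((eval_charpoly _ z).symm.trans hz)
  rw [sub_mulVec, sub_eq_zero, scalar_apply, ← smul_one_eq_diagonal, smul_mulVec, one_mulVec] at hv
  obtain ⟨p, w, rfl⟩ : ∃ p w, v = Sum.elim (fun _ : Unit => p) w :=
    ⟨v (Sum.inl ()), v ∘ Sum.inr, (Sum.elim_comp_inl_inr v).symm⟩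
  have htop : a * p + b ⬝ᵥ w = z * p := by
    simpa [bordered, fromBlocks_mulVec, mulVec, dotProduct] using (congrFun hv (Sum.inl ())).symm
  have hbot : p • c + D *ᵥ w = z • w := funext fun i => by
    simpa [bordered, fromBlocks_mulVec, mulVec, dotProduct, mul_comm] using
      (congrFun hv (Sum.inr i)).symm
  have hp : p ≠ 0 := by
    rintro rfl
    have hw : w = 0 := h w z (by simpa using hbot) (by simpa using htop)
    exact hv0 (by subst hw; ext (i | i) <;> rfl)
  have heig : borderEigenvalue a b (p⁻¹ • w) = z := by
    rw [borderEigenvalue, dotProduct_smul, smul_eq_mul]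
    field_simp
    linear_combination htop
  refine ⟨p⁻¹ • w, heig, ?_⟩
  rw [borderColumn, heig, mulVec_smul, smul_comm, ← smul_sub, ← hbot, add_sub_cancel_right,
    inv_smul_smul₀ hp]

end Deflation

/-! ### The lexicographically minimal eigenvalue -/

/-- The real and imaginary parts, ordered lexicographically.  This total order selects one
eigenvalue of a matrix in a measurable way. -/
def complexLex (z : ℂ) : ℝ ×ₗ ℝ := toLex (z.re, z.im)

lemma complexLex_injective : Function.Injective complexLex := fun _ _ h =>
  Complex.ext (congrArg (fun p => (ofLex p).1) h) (congrArg (fun p => (ofLex p).2) h)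

lemma measurableSet_complexLex_le {Y : Type*} [MeasurableSpace Y] {f g : Y → ℂ}
    (hf : Measurable f) (hg : Measurable g) :
    MeasurableSet {y | complexLex (f y) ≤ complexLex (g y)} := by
  have hre : MeasurableSet {y | (f y).re < (g y).re} :=
    measurableSet_lt (Complex.measurable_re.comp hf) (Complex.measurable_re.comp hg)
  have hre_eq : MeasurableSet {y | (f y).re = (g y).re} :=
    measurableSet_eq_fun (Complex.measurable_re.comp hf) (Complex.measurable_re.comp hg)
  have him : MeasurableSet {y | (f y).im ≤ (g y).im} :=
    measurableSet_le (Complex.measurable_im.comp hf) (Complex.measurable_im.comp hg)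
  simp only [complexLex, Prod.Lex.toLex_le_toLex]
  exact hre.union (hre_eq.inter him)

/-- The pairs of a number `z` and the lower coefficients of a monic polynomial of degree `n`, all of
whose roots are lexicographically at least `z`. -/
def lexMinimalPairs (n : ℕ) : Set (ℂ × (Fin n → ℂ)) :=
  {p | ∀ μ, (monicOfCoeffs p.2).IsRoot μ → complexLex p.1 ≤ complexLex μ}

lemma mem_lexMinimalPairs_iff {n : ℕ} {z : ℂ} {p : ℂ[X]} (hp : p.Monic) (hpn : p.natDegree = n) :
    (z, lowerCoeffs n p) ∈ lexMinimalPairs n ↔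
      ∀ μ, p.IsRoot μ → complexLex z ≤ complexLex μ := by
  rw [lexMinimalPairs, Set.mem_ofPred_eq, monicOfCoeffs_lowerCoeffs hp hpn]

lemma vieta_mem_lexMinimalPairs_iff {n : ℕ} {z : ℂ} {ζ : Fin n → ℂ} :
    (z, vieta ζ) ∈ lexMinimalPairs n ↔ ∀ i, complexLex z ≤ complexLex (ζ i) := by
  simp only [vieta, mem_lexMinimalPairs_iff (monicOfRoots_monic ζ) (monicOfRoots_natDegree ζ),
    IsRoot.def, monicOfRoots_eval, Finset.prod_eq_zero_iff, sub_eq_zero, Finset.mem_univ, true_and,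
    forall_exists_index]
  exact ⟨fun h i => h _ i rfl, fun h _ i hi => hi ▸ h i⟩

lemma measurableSet_lexMinimalPairs (n : ℕ) : MeasurableSet (lexMinimalPairs n) := by
  suffices Measurable fun p : ℂ × (Fin n → ℂ) => p ∈ lexMinimalPairs n from
    measurableSet_setOfPred.2 this
  refine measurable_of_comp_vieta ?_
  simp only [vieta_mem_lexMinimalPairs_iff]
  exact Measurable.forall fun i => measurableSet_setOfPred.1 <|
    measurableSet_complexLex_le measurable_fst ((measurable_pi_apply i).comp measurable_snd)

/-- The vectors `y` such that the eigenvalue of the bordered matrix at `(1, y)` is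
lexicographically minimal among all of its eigenvalues. -/
def minEigenvalueDomain {n : ℕ} (a : ℂ) (b : Fin n → ℂ) (D : Matrix (Fin n) (Fin n) ℂ) :
    Set (Fin n → ℂ) :=
  {y | (borderEigenvalue a b y, lowerCoeffs n (deflation b D y).charpoly) ∈ lexMinimalPairs n}

section MinEigenvalueDomain

variable {n : ℕ} {a : ℂ} {b : Fin n → ℂ} {D : Matrix (Fin n) (Fin n) ℂ} {y : Fin n → ℂ}

lemma mem_minEigenvalueDomain_iff : y ∈ minEigenvalueDomain a b D ↔
    ∀ μ, (bordered a b (borderColumn a b D y) D).charpoly.IsRoot μ →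
      complexLex (borderEigenvalue a b y) ≤ complexLex μ := by
  rw [minEigenvalueDomain, Set.mem_ofPred_eq,
    mem_lexMinimalPairs_iff (charpoly_monic _) (by simp), charpoly_bordered_borderColumn]
  simp only [root_mul, root_X_sub_C]
  exact ⟨fun h μ hμ => hμ.elim (fun e => e ▸ le_rfl) (h μ), fun h μ hμ => h μ (Or.inr hμ)⟩

lemma isRoot_borderEigenvalue :
    (bordered a b (borderColumn a b D y) D).charpoly.IsRoot (borderEigenvalue a b y) := by
  rw [charpoly_bordered_borderColumn]
  exact root_mul.2 (Or.inl (root_X_sub_C.2 rfl))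

lemma IsObservable.injOn_borderColumn (h : IsObservable b D) :
    Set.InjOn (borderColumn a b D) (minEigenvalueDomain a b D) := by
  intro y hy y' hy' heq
  refine h.eq_of_borderColumn_eq heq (complexLex_injective (le_antisymm ?_ ?_))
  · exact mem_minEigenvalueDomain_iff.1 hy _ (heq ▸ isRoot_borderEigenvalue)
  · exact mem_minEigenvalueDomain_iff.1 hy' _ (heq ▸ isRoot_borderEigenvalue)

lemma IsObservable.image_borderColumn (h : IsObservable b D) :
    borderColumn a b D '' minEigenvalueDomain a b D = Set.univ := by
  refine Set.eq_univ_iff_forall.2 fun c => ?_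
  set p := (bordered a b c D).charpoly with hp
  have hp0 : p ≠ 0 := (charpoly_monic _).ne_zero
  have hroots : p.roots.toFinset.Nonempty := by
    obtain ⟨z, hz⟩ := IsAlgClosed.exists_root p (by
      rw [hp, charpoly_degree_eq_dim, Fintype.card_sum, Fintype.card_unit]
      exact_mod_cast (Nat.succ_ne_zero _ : (Fintype.card (Fin n)).succ ≠ 0) ∘ (add_comm _ _).trans)
    exact ⟨z, Multiset.mem_toFinset.2 ((mem_roots hp0).2 hz)⟩
  obtain ⟨z, hz, hmin⟩ := p.roots.toFinset.exists_min_image complexLex hroots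
  simp only [Multiset.mem_toFinset, mem_roots hp0] at hz hmin
  obtain ⟨y, rfl, rfl⟩ := h.exists_borderColumn_eq hz
  exact ⟨y, mem_minEigenvalueDomain_iff.2 hmin, rfl⟩

end MinEigenvalueDomain
/-! ### The change of variables from the border column to the eigenvector -/

section ZeroSet

variable {V F : Type*} [NormedAddCommGroup V] [NormedSpace ℝ V] [FiniteDimensional ℝ V]
  [MeasurableSpace V] [BorelSpace V] [NormedAddCommGroup F] [NormedSpace ℝ F]

-- On almost every line through `x₀` the function has countably many zeros, so its zero set meets
-- almost every dilate of `V` about `x₀` in a null set; but all dilates are alike.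
lemma measure_zeroSet_of_analyticOnNhd (μ : Measure V) [μ.IsAddHaarMeasure] {f : V → F}
    (hf : AnalyticOnNhd ℝ f Set.univ) {x₀ : V} (hx₀ : f x₀ ≠ 0) : μ {x | f x = 0} = 0 := by
  have hcont : Continuous f := continuousOn_univ.1 hf.continuousOn
  set T : Set (V × ℝ) := {p | f (x₀ + p.2 • p.1) = 0} with hT
  have hTm : MeasurableSet T := (isClosed_eq (by fun_prop) continuous_const).measurableSet
  have hline (x : V) : volume (Prod.mk x ⁻¹' T) = 0 := by
    have hana : AnalyticOnNhd ℝ (fun s : ℝ => f (x₀ + s • x)) Set.univ := fun s _ =>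
      (hf _ trivial).comp (f := fun s : ℝ => x₀ + s • x)
        (analyticAt_const.add (analyticAt_id.smul analyticAt_const))
    have hzero := ae_restrict_le_codiscreteWithin (μ := (volume : Measure ℝ)) MeasurableSet.univ
      (hana.preimage_zero_mem_codiscrete (x := 0) (by simpa using hx₀))
    rw [Measure.restrict_univ, mem_ae_iff] at hzero
    simpa [hT, Set.preimage, Set.compl_def] using hzero
  have hswap : ((volume : Measure ℝ).prod μ) (Prod.swap ⁻¹' T) = 0 := by
    rw [← Measure.map_apply measurable_swap hTm, Measure.prod_swap,
      Measure.measure_prod_null hTm]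
    exact Eventually.of_forall hline
  rw [Measure.measure_prod_null (measurable_swap hTm)] at hswap
  have hne : ∀ᵐ s : ℝ, s ≠ 0 := by simp [ae_iff]
  obtain ⟨s, hs, hs0⟩ := (hswap.and hne).exists
  have hdil : μ ((s • ·) ⁻¹' ((x₀ + ·) ⁻¹' {x | f x = 0})) = 0 := hs
  rw [Measure.addHaar_preimage_smul μ hs0, measure_preimage_add, mul_eq_zero] at hdil
  exact hdil.resolve_left (by simpa using pow_pos (abs_pos.2 hs0) _)

end ZeroSet

section Observability

variable {n : ℕ} {R : Type*} [CommRing R]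

/-- The observability matrix of the pair `(b, D)`, with rows `b, b D, …, b D ^ (n - 1)`. -/
def observabilityMatrix (b : Fin n → R) (D : Matrix (Fin n) (Fin n) R) :
    Matrix (Fin n) (Fin n) R :=
  of fun i => b ᵥ* D ^ (i : ℕ)

lemma isObservable_of_det_ne_zero [IsDomain R] {b : Fin n → R} {D : Matrix (Fin n) (Fin n) R}
    (h : (observabilityMatrix b D).det ≠ 0) : IsObservable b D := by
  intro z μ hz hbz
  have hpow (i : ℕ) : D ^ i *ᵥ z = μ ^ i • z := by
    induction i with
    | zero => simp
    | succ i ih => rw [pow_succ, ← mulVec_mulVec, hz, mulVec_smul, ih, smul_smul, pow_succ']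
  by_contra hz0
  refine h (exists_mulVec_eq_zero_iff.1 ⟨z, hz0, funext fun i => ?_⟩)
  change (b ᵥ* D ^ (i : ℕ)) ⬝ᵥ z = 0
  rw [← dotProduct_mulVec, hpow, dotProduct_smul, hbz, smul_zero]

lemma observabilityMatrix_one_diagonal (d : Fin n → R) :
    observabilityMatrix 1 (diagonal d) = (vandermonde d)ᵀ := by
  ext i j
  simp [observabilityMatrix, diagonal_pow, vecMul_diagonal, vandermonde_apply]

lemma analyticAt_det_observabilityMatrix {E : Type*} [NormedAddCommGroup E] [NormedSpace ℝ E]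
    {b : E → Fin n → ℂ} {D : E → Matrix (Fin n) (Fin n) ℂ} {x : E}
    (hb : ∀ j, AnalyticAt ℝ (fun x => b x j) x) (hD : ∀ i j, AnalyticAt ℝ (fun x => D x i j) x) :
    AnalyticAt ℝ (fun x => (observabilityMatrix (b x) (D x)).det) x := by
  have hpow (m : ℕ) (i j : Fin n) : AnalyticAt ℝ (fun x => (D x ^ m) i j) x := by
    induction m generalizing i j with
    | zero => simpa only [pow_zero] using analyticAt_const
    | succ m ih =>
      simp only [pow_succ, Matrix.mul_apply]
      exact Finset.analyticAt_fun_sum _ fun l _ => (ih i l).mul (hD l j)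
  simp only [det_apply', observabilityMatrix, of_apply, vecMul, dotProduct]
  exact Finset.analyticAt_fun_sum _ fun σ _ => analyticAt_const.mul <|
    Finset.analyticAt_fun_prod _ fun i _ =>
      Finset.analyticAt_fun_sum _ fun l _ => (hb l).mul (hpow _ l i)

end Observability

instance isAddHaarMeasure_volume_pi {ι : Type*} [Fintype ι] {E : Type*} [NormedAddCommGroup E]
    [NormedSpace ℝ E] [FiniteDimensional ℝ E] [MeasureSpace E] [BorelSpace E]
    [(volume : Measure E).IsAddHaarMeasure] : (volume : Measure (ι → E)).IsAddHaarMeasure :=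
  Measure.pi.isAddHaarMeasure fun _ => volume

instance isAddHaarMeasure_volume_prod {E F : Type*} [NormedAddCommGroup E] [NormedSpace ℝ E]
    [FiniteDimensional ℝ E] [MeasureSpace E] [BorelSpace E] [NormedAddCommGroup F]
    [NormedSpace ℝ F] [FiniteDimensional ℝ F] [MeasureSpace F] [BorelSpace F]
    [(volume : Measure E).IsAddHaarMeasure] [(volume : Measure F).IsAddHaarMeasure] :
    (volume : Measure (E × F)).IsAddHaarMeasure :=
  Measure.prod.instIsAddHaarMeasure volume volume

/-- The blocks `(x, Z, D)` of a rectangular matrix `[[x, Z], [c, D]]` whose entry `c` is treated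
separately.  Plain functions stand for the matrices since these carry Lebesgue measure. -/
abbrev BorderParams (k n : ℕ) :=
  (Fin (k + 1) → ℂ) × (Fin (k + 1) → Fin n → ℂ) × (Fin n → Fin n → ℂ)

instance isAddHaarMeasure_volume_borderParams (k n : ℕ) :
    (volume : Measure (BorderParams k n)).IsAddHaarMeasure :=
  isAddHaarMeasure_volume_prod

lemma ae_isObservable (k n : ℕ) :
    ∀ᵐ e : BorderParams k n, IsObservable (e.2.1 0) (of e.2.2) := by
  let d : Fin n → ℂ := fun j => (j : ℕ)
  have hd : Function.Injective d := Nat.cast_injective.comp Fin.val_injective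
  have hentry {p q : ℕ} (i : Fin p) (j : Fin q) (Z : Fin p → Fin q → ℂ) :
      AnalyticAt ℝ (fun Z : Fin p → Fin q → ℂ => Z i j) Z :=
    (ContinuousLinearMap.proj (R := ℝ) j ∘L
      ContinuousLinearMap.proj (φ := fun _ => Fin q → ℂ) i).analyticAt Z
  have hana : AnalyticOnNhd ℝ
      (fun e : BorderParams k n => (observabilityMatrix (e.2.1 0) (of e.2.2)).det) Set.univ :=
    fun e _ => analyticAt_det_observabilityMatrix
      (fun j => (hentry 0 j _).comp (analyticAt_fst.comp analyticAt_snd))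
      (fun i j => (hentry i j _).comp (analyticAt_snd.comp analyticAt_snd))
  have hne : (observabilityMatrix 1 (diagonal d)).det ≠ 0 := by
    rwa [observabilityMatrix_one_diagonal, det_transpose, det_vandermonde_ne_zero_iff]
  have hnull := measure_zeroSet_of_analyticOnNhd volume hana
    (x₀ := (0, fun _ => 1, of.symm (diagonal d))) hne
  exact measure_mono_null (fun e he => by_contra fun h => he (isObservable_of_det_ne_zero h)) hnull

section BorderColumn

variable {n : ℕ} (a : ℂ) (b : Fin n → ℂ) (D : Matrix (Fin n) (Fin n) ℂ) (y : Fin n → ℂ)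

lemma hasFDerivAt_borderColumn :
    HasFDerivAt (borderColumn a b D)
      (toLin' (scalar (Fin n) (borderEigenvalue a b y) - deflation b D y)).toContinuousLinearMap
      y := by
  have heig : HasFDerivAt (borderEigenvalue a b)
      (dotProductBilin ℂ ℂ b).toContinuousLinearMap y :=
    (dotProductBilin ℂ ℂ b).toContinuousLinearMap.hasFDerivAt.const_add a
  refine ((heig.smul (hasFDerivAt_id y)).sub
    (toLin' D).toContinuousLinearMap.hasFDerivAt).congr_fderiv ?_
  ext1 v
  simp [deflation, vecMulVec_mulVec]
  abel

lemma abs_det_fderiv_borderColumn :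
    |((toLin' (scalar (Fin n) (borderEigenvalue a b y) -
      deflation b D y)).toContinuousLinearMap.restrictScalars ℝ).det| =
      ‖(deflation b D y).charpoly.eval (borderEigenvalue a b y)‖ ^ 2 := by
  change |LinearMap.det ((toLin' (scalar (Fin n) (borderEigenvalue a b y) -
    deflation b D y)).restrictScalars ℝ)| = _
  rw [LinearMap.det_restrictScalars, LinearMap.det_toLin', eval_charpoly,
    Algebra.norm_complex_apply, Complex.normSq_eq_norm_sq, abs_of_nonneg (by positivity)]

variable {a b D}

lemma continuous_borderEigenvalue {Y : Type*} [TopologicalSpace Y] {a : Y → ℂ} {b y : Y → Fin n → ℂ}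
    (ha : Continuous a) (hb : Continuous b) (hy : Continuous y) :
    Continuous fun s => borderEigenvalue (a s) (b s) (y s) :=
  ha.add (hb.dotProduct hy)

lemma continuous_lowerCoeffs_charpoly_deflation {Y : Type*} [TopologicalSpace Y]
    {b y : Y → Fin n → ℂ} {D : Y → Matrix (Fin n) (Fin n) ℂ} (hb : Continuous b)
    (hD : Continuous D) (hy : Continuous y) :
    Continuous fun s => lowerCoeffs n (deflation (b s) (D s) (y s)).charpoly :=
  (ContinuousCoeffs.charpoly (hD.sub (hy.matrix_vecMulVec hb))).lowerCoeffs n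

lemma measurableSet_minEigenvalueDomain : MeasurableSet (minEigenvalueDomain a b D) :=
  ((continuous_borderEigenvalue continuous_const continuous_const continuous_id).prodMk
    (continuous_lowerCoeffs_charpoly_deflation continuous_const continuous_const
      continuous_id)).measurable (measurableSet_lexMinimalPairs n)

lemma lintegral_borderColumn (h : IsObservable b D) (F : (Fin n → ℂ) → ℝ≥0∞) :
    ∫⁻ c, F c = ∫⁻ y in minEigenvalueDomain a b D,
      ENNReal.ofReal (‖(deflation b D y).charpoly.eval (borderEigenvalue a b y)‖ ^ 2) *
        F (borderColumn a b D y) := by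
  have hcov := lintegral_image_eq_lintegral_abs_det_fderiv_mul volume
    measurableSet_minEigenvalueDomain
    (fun y _ => ((hasFDerivAt_borderColumn a b D y).restrictScalars ℝ).hasFDerivWithinAt)
    h.injOn_borderColumn F
  simpa only [h.image_borderColumn, Measure.restrict_univ, abs_det_fderiv_borderColumn] using hcov

end BorderColumn
/-! ### Reflecting the eigenvector to a coordinate vector -/

section Householder

variable {ι : Type*} [Fintype ι]

open scoped ComplexOrder in
lemma star_dotProduct_self_ne_zero {u : ι → ℂ} (hu : u ≠ 0) : star u ⬝ᵥ u ≠ 0 :=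
  mt dotProduct_star_self_eq_zero.1 hu

variable [DecidableEq ι]

/-- The Householder involution fixing `u` and negating the orthogonal complement of `u`. -/
def householder (u : ι → ℂ) : Matrix ι ι ℂ :=
  (2 / (star u ⬝ᵥ u)) • vecMulVec u (star u) - 1

lemma householder_mulVec (u v : ι → ℂ) :
    householder u *ᵥ v = (2 * (star u ⬝ᵥ v) / (star u ⬝ᵥ u)) • u - v := by
  rw [householder, sub_mulVec, smul_mulVec, vecMulVec_mulVec, one_mulVec, op_smul_eq_smul,
    smul_smul]
  congr 2
  ring

lemma householder_conjTranspose (u : ι → ℂ) : (householder u)ᴴ = householder u := by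
  have hreal : star (star u ⬝ᵥ u) = star u ⬝ᵥ u := (star_dotProduct u u).symm
  rw [householder, conjTranspose_sub, conjTranspose_smul, conjTranspose_vecMulVec, star_star,
    conjTranspose_one, star_div₀, hreal, star_ofNat]

lemma householder_mul_self {u : ι → ℂ} (hu : u ≠ 0) : householder u * householder u = 1 := by
  have hne : star u ⬝ᵥ u ≠ 0 := star_dotProduct_self_ne_zero hu
  refine ext_of_mulVec_single fun i => ?_
  rw [← mulVec_mulVec, householder_mulVec u (Pi.single i 1), mulVec_sub, mulVec_smul,
    householder_mulVec, householder_mulVec, one_mulVec, mul_div_assoc 2 (star u ⬝ᵥ u),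
    div_self hne]
  module

lemma householder_add_mulVec_left {v w : ι → ℂ} (hvw : v + w ≠ 0)
    (hnorm : star v ⬝ᵥ v = star w ⬝ᵥ w) (hsymm : star v ⬝ᵥ w = star w ⬝ᵥ v) :
    householder (v + w) *ᵥ v = w := by
  have hne : star (v + w) ⬝ᵥ (v + w) ≠ 0 := star_dotProduct_self_ne_zero hvw
  have hcoef : 2 * (star (v + w) ⬝ᵥ v) = star (v + w) ⬝ᵥ (v + w) := by
    simp only [star_add, add_dotProduct, dotProduct_add, hnorm, hsymm]
    ring
  rw [householder_mulVec, hcoef, div_self hne, one_smul, add_sub_cancel_left]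

lemma continuous_householder {Y : Type*} [TopologicalSpace Y] {u : Y → ι → ℂ} (hu : Continuous u)
    (hne : ∀ y, u y ≠ 0) : Continuous fun y => householder (u y) := by
  have hdot : Continuous fun y => star (u y) ⬝ᵥ u y := hu.star.dotProduct hu
  exact ((continuous_const.div hdot fun y => star_dotProduct_self_ne_zero (hne y)).smul
    (hu.matrix_vecMulVec hu.star)).sub continuous_const

end Householder

section AlignReflection

variable {ι κ : Type*} [Fintype ι] [DecidableEq κ] (i₀ : κ) (y : ι → ℂ)

/-- The norm of the vector `(1, y)`. -/
def homogeneousNorm : ℝ := √(1 + ∑ i, ‖y i‖ ^ 2)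

lemma homogeneousNorm_pos : 0 < homogeneousNorm y := Real.sqrt_pos.2 (by positivity)

lemma continuous_homogeneousNorm : Continuous (homogeneousNorm : (ι → ℂ) → ℝ) := by
  unfold homogeneousNorm
  fun_prop

lemma star_dotProduct_self_eq : star y ⬝ᵥ y = (homogeneousNorm y : ℂ) ^ 2 - 1 := by
  have hnormSq (i : ι) : star y i * y i = ((‖y i‖ ^ 2 : ℝ) : ℂ) := by
    rw [Pi.star_apply, Complex.ofReal_pow]
    exact Complex.conj_mul' (y i)
  rw [← Complex.ofReal_pow, homogeneousNorm, Real.sq_sqrt (by positivity)]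
  simp only [dotProduct, hnormSq]
  simp

/-- The sum of the vector `(e, y)` and of the multiple `r • (e, 0)` of the same norm, where `e` is
the basis vector at `i₀`; the reflection through this vector exchanges the two summands. -/
def alignVector : κ ⊕ ι → ℂ :=
  Sum.elim (Pi.single i₀ 1) y + Sum.elim (Pi.single i₀ (homogeneousNorm y : ℂ)) 0

lemma alignVector_ne_zero : alignVector i₀ y ≠ 0 := fun h => by
  have hi₀ : 1 + (homogeneousNorm y : ℂ) = 0 := by
    simpa [alignVector] using congrFun h (Sum.inl i₀)
  have hpos := homogeneousNorm_pos y
  exact (by positivity : (1 + homogeneousNorm y : ℝ) ≠ 0) (mod_cast hi₀)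

variable [Fintype κ]

lemma star_alignVector_dotProduct (w : κ ⊕ ι → ℂ) :
    star (alignVector i₀ y) ⬝ᵥ w =
      (1 + homogeneousNorm y) * w (Sum.inl i₀) + star y ⬝ᵥ (w ∘ Sum.inr) := by
  have hinl : ∑ i, star (alignVector i₀ y (Sum.inl i)) * w (Sum.inl i) =
      (1 + homogeneousNorm y) * w (Sum.inl i₀) := by
    rw [Finset.sum_eq_single i₀ (fun i _ hi => by simp [alignVector, hi]) (by simp)]
    simp [alignVector]
  simp only [dotProduct, Pi.star_apply, Fintype.sum_sum_type, hinl]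
  simp [alignVector]

lemma star_alignVector_dotProduct_self :
    star (alignVector i₀ y) ⬝ᵥ alignVector i₀ y =
      2 * (homogeneousNorm y * (1 + homogeneousNorm y)) := by
  have hinr : alignVector i₀ y ∘ Sum.inr = y := by ext; simp [alignVector]
  rw [star_alignVector_dotProduct, hinr, star_dotProduct_self_eq]
  simp only [alignVector, Pi.add_apply, Sum.elim_inl, Pi.single_eq_same]
  ring

variable [DecidableEq ι]

/-- The unitary involution exchanging `(e, y)` and `r • (e, 0)`, where `e` is the basis vector at
`i₀` and `r` is the norm of `(e, y)`. -/
def alignReflection : Matrix (κ ⊕ ι) (κ ⊕ ι) ℂ := householder (alignVector i₀ y)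

lemma alignReflection_mul_self : alignReflection i₀ y * alignReflection i₀ y = 1 :=
  householder_mul_self (alignVector_ne_zero i₀ y)

lemma alignReflection_mulVec_pointed :
    alignReflection i₀ y *ᵥ Sum.elim (Pi.single i₀ 1) y =
      Sum.elim (Pi.single i₀ (homogeneousNorm y : ℂ)) 0 := by
  refine householder_add_mulVec_left (alignVector_ne_zero i₀ y) ?_ ?_ <;>
    simp only [Function.star_sumElim, sumElim_dotProduct_sumElim, star_dotProduct_self_eq,
      Pi.star_single, dotProduct_single, star_zero, dotProduct_zero]
  · simp [sq]
  · simp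

lemma alignReflection_mulVec (w : κ ⊕ ι → ℂ) :
    alignReflection i₀ y *ᵥ w =
      (((1 + homogeneousNorm y) * w (Sum.inl i₀) + star y ⬝ᵥ (w ∘ Sum.inr)) /
        (homogeneousNorm y * (1 + homogeneousNorm y))) • alignVector i₀ y - w := by
  rw [alignReflection, householder_mulVec, star_alignVector_dotProduct_self,
    mul_div_mul_left _ _ two_ne_zero, star_alignVector_dotProduct]

lemma homogeneousNorm_smul_alignReflection_mulVec (x : κ → ℂ) :
    (homogeneousNorm y : ℂ) • alignReflection i₀ y *ᵥ Sum.elim x 0 =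
      x i₀ • alignVector i₀ y - (homogeneousNorm y : ℂ) • Sum.elim x 0 := by
  have hpos := homogeneousNorm_pos y
  have hne : (homogeneousNorm y : ℂ) ≠ 0 := mod_cast hpos.ne'
  have hne' : 1 + (homogeneousNorm y : ℂ) ≠ 0 :=
    mod_cast (by positivity : (1 + homogeneousNorm y : ℝ) ≠ 0)
  rw [alignReflection_mulVec, smul_sub, smul_smul]
  congr 2
  simp
  field_simp

lemma continuous_alignReflection :
    Continuous fun y : ι → ℂ => alignReflection i₀ y := by
  refine continuous_householder (continuous_pi fun i => ?_) (alignVector_ne_zero i₀)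
  have hnorm := continuous_homogeneousNorm (ι := ι)
  rcases i with i | i <;> simp only [alignVector, Pi.add_apply, Sum.elim_inl, Sum.elim_inr,
    Pi.single_apply, Pi.zero_apply]
  · split_ifs <;> fun_prop
  · fun_prop

lemma alignReflection_mul_submatrix {μ : Type*} (M : Matrix (κ ⊕ ι) μ ℂ) :
    (alignReflection i₀ y * M).submatrix (Sum.map (fun _ : Unit => i₀) id) id =
      alignReflection () y * M.submatrix (Sum.map (fun _ : Unit => i₀) id) id := by
  have hvector : alignVector i₀ y ∘ Sum.map (fun _ : Unit => i₀) id = alignVector () y := by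
    ext i; rcases i with i | i <;> simp [alignVector]
  ext i j
  change (alignReflection i₀ y *ᵥ fun a => M a j) _ =
    (alignReflection () y *ᵥ fun a => M (Sum.map (fun _ : Unit => i₀) id a) j) i
  rw [alignReflection_mulVec, alignReflection_mulVec, ← hvector]
  rfl

end AlignReflection

section RotateParams

lemma tallBordered_mulVec {ι μ : Type*} [Fintype ι] (x : μ → ℂ) (Z : Matrix μ ι ℂ) (c : ι → ℂ)
    (D : Matrix ι ι ℂ) (s : ℂ) (z : ι → ℂ) :
    tallBordered x Z c D *ᵥ Sum.elim (Pi.single () s) z =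
      Sum.elim (s • x + Z *ᵥ z) (s • c + D *ᵥ z) := by
  ext i
  rcases i with i | i <;> simp [tallBordered, mulVec, dotProduct, mul_comm]

variable {k n : ℕ} (y : Fin n → ℂ)

/-- The matrix `[[x, Z], [0, D]]` with the blocks `(x, Z, D)`. -/
def paramsMatrix : BorderParams k n →ₗ[ℝ] Matrix (Fin (k + 1) ⊕ Fin n) (Unit ⊕ Fin n) ℂ where
  toFun e := tallBordered e.1 (of e.2.1) 0 (of e.2.2)
  map_add' e e' := by
    ext i j
    rcases i with i | i <;> rcases j with j | j <;> simp [tallBordered]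
  map_smul' r e := by
    ext i j
    rcases i with i | i <;> rcases j with j | j <;> simp [tallBordered]

/-- The blocks of a matrix other than its lower left one. -/
def matrixParams : Matrix (Fin (k + 1) ⊕ Fin n) (Unit ⊕ Fin n) ℂ →ₗ[ℝ] BorderParams k n where
  toFun G := (fun i => G (Sum.inl i) (Sum.inl ()), G.toBlocks₁₂, G.toBlocks₂₂)
  map_add' _ _ := rfl
  map_smul' _ _ := rfl

lemma matrixParams_paramsMatrix (e : BorderParams k n) : matrixParams (paramsMatrix e) = e := rfl

lemma tallBordered_matrixParams (G : Matrix (Fin (k + 1) ⊕ Fin n) (Unit ⊕ Fin n) ℂ) :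
    tallBordered (matrixParams G).1 (of (matrixParams G).2.1) (fun i => G (Sum.inr i) (Sum.inl ()))
      (of (matrixParams G).2.2) = G := by
  ext i j
  rcases i with i | i <;> rcases j with j | j <;> rfl

/-- Reflecting `[[x, Z], [0, D]]` on both sides so that `(1, y)` takes the place of the first
coordinate vector. -/
def rotateMatrix (G : Matrix (Fin (k + 1) ⊕ Fin n) (Unit ⊕ Fin n) ℂ) :
    Matrix (Fin (k + 1) ⊕ Fin n) (Unit ⊕ Fin n) ℂ :=
  alignReflection (0 : Fin (k + 1)) y * G * alignReflection () y

lemma rotateMatrix_rotateMatrix (G : Matrix (Fin (k + 1) ⊕ Fin n) (Unit ⊕ Fin n) ℂ) :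
    rotateMatrix y (rotateMatrix y G) = G := by
  simp only [rotateMatrix, Matrix.mul_assoc, alignReflection_mul_self, Matrix.mul_one]
  rw [← Matrix.mul_assoc, alignReflection_mul_self, Matrix.one_mul]

lemma gramWeight_rotateMatrix (t : ℕ) (G : Matrix (Fin (k + 1) ⊕ Fin n) (Unit ⊕ Fin n) ℂ) :
    gramWeight t (rotateMatrix y G) = gramWeight t G := by
  have hunit {κ : Type} [Fintype κ] [DecidableEq κ] (i₀ : κ) :
      (alignReflection i₀ y)ᴴ = alignReflection i₀ y := householder_conjTranspose _
  rw [rotateMatrix, gramWeight_mul_unitary, gramWeight_isometry_mul] <;>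
    rw [hunit, alignReflection_mul_self]

/-- The linear change of the parameters `(x, Z, D)` induced by `rotateMatrix`. -/
def rotateParams : BorderParams k n →ₗ[ℝ] BorderParams k n where
  toFun e := matrixParams (rotateMatrix y (paramsMatrix e))
  map_add' e e' := by simp only [rotateMatrix, map_add, Matrix.mul_add, Matrix.add_mul]
  map_smul' r e := by
    simp only [rotateMatrix, map_smul, Matrix.mul_smul, Matrix.smul_mul, RingHom.id_apply]

variable (e : BorderParams k n)

lemma rotateMatrix_paramsMatrix_mulVec :
    rotateMatrix y (paramsMatrix e) *ᵥ Sum.elim (Pi.single () 1) y =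
      e.1 0 • alignVector 0 y - (homogeneousNorm y : ℂ) • Sum.elim e.1 0 := by
  have hcol : paramsMatrix e *ᵥ Sum.elim (Pi.single () (homogeneousNorm y : ℂ)) 0 =
      (homogeneousNorm y : ℂ) • Sum.elim e.1 0 := by
    refine (tallBordered_mulVec _ _ _ _ _ _).trans ?_
    ext i; rcases i with i | i <;> simp
  rw [rotateMatrix, ← mulVec_mulVec, alignReflection_mulVec_pointed, ← mulVec_mulVec, hcol,
    mulVec_smul, homogeneousNorm_smul_alignReflection_mulVec]

lemma borderEigenvalue_rotateParams :
    borderEigenvalue ((rotateParams y e).1 0) ((rotateParams y e).2.1 0) y = e.1 0 := by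
  have h := congrFun (rotateMatrix_paramsMatrix_mulVec y e) (Sum.inl 0)
  rw [← tallBordered_matrixParams (rotateMatrix y _), tallBordered_mulVec] at h
  simp only [alignVector, Sum.elim_inl, Pi.add_apply, Pi.sub_apply, Pi.smul_apply,
    Pi.single_eq_same, smul_eq_mul] at h
  simp only [borderEigenvalue, rotateParams]
  refine Eq.trans ?_ (h.trans (by ring))
  simp [mulVec]
  rfl

lemma tallBordered_rotateParams :
    tallBordered (rotateParams y e).1 (of (rotateParams y e).2.1)
      (borderColumn ((rotateParams y e).1 0) ((rotateParams y e).2.1 0) (of (rotateParams y e).2.2)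
        y) (of (rotateParams y e).2.2) = rotateMatrix y (paramsMatrix e) := by
  have hcol : borderColumn ((rotateParams y e).1 0) ((rotateParams y e).2.1 0)
      (of (rotateParams y e).2.2) y =
        fun i => rotateMatrix y (paramsMatrix e) (Sum.inr i) (Sum.inl ()) := by
    have h := congrArg (· ∘ Sum.inr) (rotateMatrix_paramsMatrix_mulVec y e)
    rw [← tallBordered_matrixParams (rotateMatrix y _), tallBordered_mulVec] at h
    have hright : (e.1 0 • alignVector 0 y - (homogeneousNorm y : ℂ) • Sum.elim e.1 0) ∘ Sum.inr =
        e.1 0 • y := by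
      ext i
      simp [alignVector]
    rw [hright] at h
    rw [borderColumn, borderEigenvalue_rotateParams, sub_eq_iff_eq_add]
    simp only [one_smul, Sum.elim_comp_inr] at h
    exact h.symm
  rw [hcol]
  exact tallBordered_matrixParams _

lemma bordered_eq_submatrix_tallBordered {ι : Type*} (x : Fin (k + 1) → ℂ)
    (Z : Matrix (Fin (k + 1)) ι ℂ) (c : ι → ℂ) (D : Matrix ι ι ℂ) :
    bordered (x 0) (Z 0) c D =
      (tallBordered x Z c D).submatrix (Sum.map (fun _ : Unit => 0) id) id := by
  ext i j
  rcases i with i | i <;> rcases j with j | j <;> rfl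

lemma charpoly_deflation_rotateParams :
    (deflation ((rotateParams y e).2.1 0) (of (rotateParams y e).2.2) y).charpoly =
      (of e.2.2).charpoly := by
  have hborder := charpoly_bordered_borderColumn ((rotateParams y e).1 0)
    ((rotateParams y e).2.1 0) (of (rotateParams y e).2.2) y
  have hrotate : (rotateMatrix y (paramsMatrix e)).submatrix (Sum.map (fun _ : Unit => 0) id) id =
      alignReflection () y * bordered (e.1 0) (e.2.1 0) 0 (of e.2.2) * alignReflection () y := by
    rw [rotateMatrix, ← submatrix_mul_equiv _ _ _ (Equiv.refl _), Equiv.coe_refl,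
      alignReflection_mul_submatrix]
    exact congrArg (fun M => _ * M * _) (bordered_eq_submatrix_tallBordered _ (of e.2.1) _ _).symm
  have hzero : (bordered (e.1 0) (e.2.1 0) 0 (of e.2.2)).charpoly =
      (X - C (e.1 0)) * (of e.2.2).charpoly := by
    simpa [borderColumn, borderEigenvalue, deflation] using
      charpoly_bordered_borderColumn (e.1 0) (e.2.1 0) (of e.2.2) 0
  have hrow := bordered_eq_submatrix_tallBordered (rotateParams y e).1 (of (rotateParams y e).2.1)
  change ∀ c D, bordered _ ((rotateParams y e).2.1 0) c D = _ at hrow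
  rw [hrow, tallBordered_rotateParams, hrotate, Matrix.charpoly_mul_comm, ← Matrix.mul_assoc,
    alignReflection_mul_self, Matrix.one_mul, hzero, borderEigenvalue_rotateParams] at hborder
  exact (mul_left_cancel₀ (X_sub_C_ne_zero _) hborder).symm

lemma det_rotateParams_ne_zero : LinearMap.det (rotateParams (k := k) y) ≠ 0 := by
  have hinj : Function.Injective (rotateParams (k := k) y) := by
    refine (injective_iff_map_eq_zero _).2 fun e he => ?_
    have hzero : rotateMatrix y (paramsMatrix e) = 0 := by
      rw [← tallBordered_rotateParams, he]
      ext i j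
      rcases i with i | i <;> rcases j with j | j <;>
        simp [tallBordered, borderColumn, borderEigenvalue, dotProduct]
    rw [← matrixParams_paramsMatrix e, ← rotateMatrix_rotateMatrix y (paramsMatrix e), hzero]
    simp [rotateMatrix]
  exact (LinearEquiv.isUnit_det' (LinearEquiv.ofInjectiveEndo _ hinj)).ne_zero

lemma continuous_det_rotateParams :
    Continuous fun y : Fin n → ℂ => LinearMap.det (rotateParams (k := k) y) := by
  refine ContinuousLinearMap.continuous_det.comp (g := fun A : BorderParams k n →L[ℝ] _ => A.det)
    (f := fun y => (rotateParams y).toContinuousLinearMap) (continuous_clm_apply.2 fun e => ?_)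
  have hrotate : Continuous fun y => rotateMatrix y (paramsMatrix e) :=
    ((continuous_alignReflection 0).matrix_mul continuous_const).matrix_mul
      (continuous_alignReflection ())
  exact (LinearMap.continuous_of_finiteDimensional matrixParams).comp hrotate

variable (t : ℕ)

/-- The integrand `h(ζ, p) W_t` at the bordered matrix for which `(1, y)` is an eigenvector with
eigenvalue `ζ`, where `p` is the characteristic polynomial of the deflation. -/
def deflationIntegrand (h : ℂ × (Fin n → ℂ) → ℝ≥0∞) (e : BorderParams k n) (y : Fin n → ℂ) :
    ℝ≥0∞ :=
  h (borderEigenvalue (e.1 0) (e.2.1 0) y,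
      lowerCoeffs n (deflation (e.2.1 0) (of e.2.2) y).charpoly) *
    ENNReal.ofReal (gramWeight t (tallBordered e.1 (of e.2.1)
      (borderColumn (e.1 0) (e.2.1 0) (of e.2.2) y) (of e.2.2)))

lemma deflationIntegrand_rotateParams (h : ℂ × (Fin n → ℂ) → ℝ≥0∞) :
    deflationIntegrand t h (rotateParams y e) y =
      h (e.1 0, lowerCoeffs n (of e.2.2).charpoly) *
        ENNReal.ofReal (gramWeight t (tallBordered e.1 (of e.2.1) 0 (of e.2.2))) := by
  rw [deflationIntegrand, borderEigenvalue_rotateParams, charpoly_deflation_rotateParams,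
    tallBordered_rotateParams, gramWeight_rotateMatrix]
  rfl

lemma measurable_deflationIntegrand {h : ℂ × (Fin n → ℂ) → ℝ≥0∞} (hh : Measurable h) :
    Measurable fun p : BorderParams k n × (Fin n → ℂ) => deflationIntegrand t h p.1 p.2 := by
  have heig : Continuous fun p : BorderParams k n × (Fin n → ℂ) =>
      borderEigenvalue (p.1.1 0) (p.1.2.1 0) p.2 :=
    continuous_borderEigenvalue (by fun_prop) (by fun_prop) (by fun_prop)
  have hcoeffs : Continuous fun p : BorderParams k n × (Fin n → ℂ) =>
      lowerCoeffs n (deflation (p.1.2.1 0) (of p.1.2.2) p.2).charpoly :=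
    continuous_lowerCoeffs_charpoly_deflation (by fun_prop) (by fun_prop) (by fun_prop)
  have hcol : Continuous fun p : BorderParams k n × (Fin n → ℂ) =>
      borderColumn (p.1.1 0) (p.1.2.1 0) (of p.1.2.2) p.2 :=
    (heig.smul continuous_snd).sub
      (Continuous.matrix_mulVec
        (A := fun p : BorderParams k n × (Fin n → ℂ) => of p.1.2.2) (by fun_prop) continuous_snd)
  exact (hh.comp (heig.prodMk hcoeffs).measurable).mul
    ((continuous_gramWeight t).comp (continuous_tallBordered (by fun_prop) (by fun_prop) hcol
      (by fun_prop))).measurable.ennreal_ofReal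

lemma exists_lintegral_deflationIntegrand (k n : ℕ) :
    ∃ J : ℝ≥0∞, ∀ h : ℂ × (Fin n → ℂ) → ℝ≥0∞, Measurable h →
      ∫⁻ e : BorderParams k n, ∫⁻ y, deflationIntegrand t h e y =
        J * ∫⁻ e : BorderParams k n, h (e.1 0, lowerCoeffs n (of e.2.2).charpoly) *
          ENNReal.ofReal (gramWeight t (tallBordered e.1 (of e.2.1) 0 (of e.2.2))) := by
  refine ⟨∫⁻ y : Fin n → ℂ, ENNReal.ofReal |LinearMap.det (rotateParams (k := k) y)|,
    fun h hh => ?_⟩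
  have hmeas := measurable_deflationIntegrand (k := k) t hh
  rw [lintegral_lintegral_swap hmeas.aemeasurable,
    ← lintegral_mul_const _ continuous_det_rotateParams.abs.measurable.ennreal_ofReal]
  refine lintegral_congr fun y => ?_
  have hdet := det_rotateParams_ne_zero (k := k) y
  have hmap := lintegral_map (μ := volume)
    (hmeas.comp (measurable_id.prodMk (measurable_const (a := y))))
    (LinearMap.continuous_of_finiteDimensional (rotateParams y)).measurable
  simp only [Function.comp_def, id] at hmap
  simp only [← deflationIntegrand_rotateParams y]
  rw [← hmap, Measure.map_linearMap_addHaar_eq_smul_addHaar volume hdet, lintegral_smul_measure,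
    smul_eq_mul, ← mul_assoc, ← ENNReal.ofReal_mul (abs_nonneg _), ← abs_mul, mul_inv_cancel₀ hdet,
    abs_one, ENNReal.ofReal_one, one_mul]

end RotateParams
/-! ### Integrating out the blocks of a bordered matrix -/

section LeftMultiplication

lemma measurePreserving_of_preimage_eq {E : Type*} [NormedAddCommGroup E] [NormedSpace ℝ E]
    [FiniteDimensional ℝ E] [MeasurableSpace E] [BorelSpace E] {μ : Measure E} [μ.IsAddHaarMeasure]
    {L : E →ₗ[ℝ] E} (hL : LinearMap.det L ≠ 0) {S : Set E} (hS₀ : μ S ≠ 0) (hS : μ S ≠ ∞)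
    (hpre : L ⁻¹' S = S) : MeasurePreserving L μ μ := by
  have hdet : ENNReal.ofReal |(LinearMap.det L)⁻¹| = 1 := by
    have hscale := Measure.addHaar_preimage_linearMap μ hL S
    rw [hpre] at hscale
    exact (ENNReal.mul_left_inj hS₀ hS).1 (by rw [← hscale, one_mul])
  refine ⟨(LinearMap.continuous_of_finiteDimensional L).measurable, ?_⟩
  rw [Measure.map_linearMap_addHaar_eq_smul_addHaar μ hL, hdet, one_smul]

variable {ι κ : Type*} [Fintype ι]

/-- Left multiplication by a matrix, on the space of functions carrying Lebesgue measure. -/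
def leftMul (κ : Type*) (U : Matrix ι ι ℂ) : (ι → κ → ℂ) →ₗ[ℝ] (ι → κ → ℂ) where
  toFun Z := of.symm (U * of Z)
  map_add' Z Z' := Matrix.mul_add U (of Z) (of Z')
  map_smul' r Z := Matrix.mul_smul U r (of Z)

lemma of_leftMul (U : Matrix ι ι ℂ) (Z : ι → κ → ℂ) : of (leftMul κ U Z) = U * of Z := rfl

lemma det_leftMul_ne_zero [DecidableEq ι] {U : Matrix ι ι ℂ} (hU : Uᴴ * U = 1) :
    LinearMap.det (leftMul κ U) ≠ 0 := by
  have hinv : leftMul κ Uᴴ ∘ₗ leftMul κ U = LinearMap.id := by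
    refine LinearMap.ext fun Z => ?_
    change of.symm (Uᴴ * (U * of Z)) = Z
    rw [← Matrix.mul_assoc, hU, Matrix.one_mul, Equiv.symm_apply_apply]
  refine right_ne_zero_of_mul (a := LinearMap.det (leftMul κ Uᴴ)) ?_
  rw [← LinearMap.det_comp, hinv, LinearMap.det_id]
  exact one_ne_zero

variable [Fintype κ]

lemma norm_sq_le_frobeniusSq (Z : ι → κ → ℂ) : ‖Z‖ ^ 2 ≤ frobeniusSq (of Z) := by
  have hentry (i : ι) (j : κ) : ‖Z i j‖ ^ 2 ≤ frobeniusSq (of Z) :=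
    (Finset.single_le_sum (f := fun j => ‖Z i j‖ ^ 2) (fun _ _ => by positivity)
      (Finset.mem_univ j)).trans
      (Finset.single_le_sum (f := fun i => ∑ j, ‖Z i j‖ ^ 2) (fun _ _ => by positivity)
        (Finset.mem_univ i))
  rw [← Real.le_sqrt (norm_nonneg _) (by unfold frobeniusSq; positivity),
    pi_norm_le_iff_of_nonneg (Real.sqrt_nonneg _)]
  exact fun i => (pi_norm_le_iff_of_nonneg (Real.sqrt_nonneg _)).2 fun j =>
    Real.le_sqrt_of_sq_le (hentry i j)

lemma measurePreserving_leftMul [DecidableEq ι] {U : Matrix ι ι ℂ} (hU : Uᴴ * U = 1) :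
    MeasurePreserving (leftMul κ U) := by
  have hopen : IsOpen {Z : ι → κ → ℂ | frobeniusSq (of Z) < 1} :=
    isOpen_lt (continuous_frobeniusSq.comp (by fun_prop)) continuous_const
  refine measurePreserving_of_preimage_eq (det_leftMul_ne_zero hU)
    (hopen.measure_pos volume ⟨0, by simp [frobeniusSq]⟩).ne'
    ((measure_mono fun Z hZ => ?_).trans_lt
      (measure_closedBall_lt_top (x := (0 : ι → κ → ℂ)) (r := 1))).ne ?_
  · rw [mem_closedBall_zero_iff, ← sq_le_one_iff₀ (norm_nonneg _)]
    exact (norm_sq_le_frobeniusSq Z).trans (le_of_lt hZ)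
  · ext Z
    rw [Set.mem_preimage, Set.mem_ofPred_eq, of_leftMul, frobeniusSq_isometry_mul hU]
    rfl

end LeftMultiplication

section Splitting

variable {k n : ℕ}

lemma measurePreserving_finSucc (k : ℕ) (α : Type*) [MeasureSpace α]
    [SigmaFinite (volume : Measure α)] :
    MeasurePreserving fun Z : Fin (k + 1) → α => (Z 0, fun i : Fin k => Z i.succ) :=
  volume_preserving_piFinSuccAbove (fun _ : Fin (k + 1) => α) 0

lemma measurePreserving_finCons (k : ℕ) (α : Type*) [MeasureSpace α]
    [SigmaFinite (volume : Measure α)] :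
    MeasurePreserving fun p : α × (Fin k → α) => (Fin.cons p.1 p.2 : Fin (k + 1) → α) := by
  convert (volume_preserving_piFinSuccAbove (fun _ : Fin (k + 1) => α) 0).symm using 1
  ext p : 1
  exact (Fin.insertNth_zero' p.1 p.2).symm

lemma measurePreserving_splitColumn (m n : ℕ) :
    MeasurePreserving fun M : Fin m → Fin (n + 1) → ℂ =>
      (fun i => M i 0, fun i (j : Fin n) => M i j.succ) :=
  (volume_measurePreserving_arrowProdEquivProdArrow ℂ (Fin n → ℂ) (Fin m)).comp
    (volume_preserving_pi fun _ => measurePreserving_finSucc n ℂ)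

-- Shortens the instance search on products of matrix spaces, which otherwise exceeds its limit.
instance sigmaFinite_volume_pi_pi (m n : ℕ) : SigmaFinite (volume : Measure (Fin m → Fin n → ℂ)) :=
  inferInstance

lemma measurePreserving_prod_right_comm (α β γ : Type*) [MeasureSpace α] [MeasureSpace β]
    [MeasureSpace γ] [SigmaFinite (volume : Measure α)] [SigmaFinite (volume : Measure β)]
    [SigmaFinite (volume : Measure γ)] :
    MeasurePreserving fun p : (α × β) × γ => ((p.1.1, p.2), p.1.2) :=
  (volume_preserving_prodAssoc.symm.comp
    ((MeasurePreserving.id volume).prod Measure.measurePreserving_swap)).comp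
    volume_preserving_prodAssoc

lemma measurePreserving_prod_assoc_swap (α β γ δ : Type*) [MeasureSpace α] [MeasureSpace β]
    [MeasureSpace γ] [MeasureSpace δ] [SigmaFinite (volume : Measure α)]
    [SigmaFinite (volume : Measure β)] [SigmaFinite (volume : Measure γ)]
    [SigmaFinite (volume : Measure δ)] :
    MeasurePreserving fun p : (α × β) × (γ × δ) => ((p.1.1, p.1.2, p.2.2), p.2.1) :=
  (volume_preserving_prodAssoc.prod (MeasurePreserving.id volume)).comp
    (volume_preserving_prodAssoc.symm.comp
      ((MeasurePreserving.id volume).prod Measure.measurePreserving_swap))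

/-- The blocks `(x, Z, D)` and `c` of the matrix `[[x, Z], [c, D]]` obtained from the
matrix with the square block `A` below `C` by moving the first row of `A` to the top. -/
def borderBlocks (p : (Fin (n + 1) → Fin (n + 1) → ℂ) × (Fin k → Fin (n + 1) → ℂ)) :
    BorderParams k n × (Fin n → ℂ) :=
  let N : Fin (k + 1) → Fin (n + 1) → ℂ := Fin.cons (p.1 0) p.2
  ((fun i => N i 0, fun i j => N i j.succ, fun i j => p.1 i.succ j.succ), fun i => p.1 i.succ 0)

lemma measurePreserving_borderBlocks (k n : ℕ) :
    MeasurePreserving (borderBlocks : _ → BorderParams k n × (Fin n → ℂ)) := by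
  have hfirst := ((measurePreserving_finSucc n (Fin (n + 1) → ℂ)).prod
    (MeasurePreserving.id (volume : Measure (Fin k → Fin (n + 1) → ℂ))))
  have hmove := measurePreserving_prod_right_comm (Fin (n + 1) → ℂ) (Fin n → Fin (n + 1) → ℂ)
    (Fin k → Fin (n + 1) → ℂ)
  have hcols := ((measurePreserving_splitColumn (k + 1) n).comp
    (measurePreserving_finCons k (Fin (n + 1) → ℂ))).prod (measurePreserving_splitColumn n n)
  have hblocks := measurePreserving_prod_assoc_swap (Fin (k + 1) → ℂ) (Fin (k + 1) → Fin n → ℂ)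
    (Fin n → ℂ) (Fin n → Fin n → ℂ)
  exact hblocks.comp (hcols.comp (hmove.comp hfirst))

end Splitting

section RadialWeights

/-- The Gaussian mass `∫ e^{-t ‖w‖²} dw` of `ℂⁿ`. -/
def gaussianMass (t n : ℕ) : ℝ≥0∞ :=
  ∫⁻ w : Fin n → ℂ, ENNReal.ofReal (Real.exp (-(t * ∑ j, ‖w j‖ ^ 2)))

/-- The weight `s^t e^{-t s}` of a column of squared length `s`. -/
def radialWeight (t : ℕ) (s : ℝ) : ℝ≥0∞ := ENNReal.ofReal (s ^ t * Real.exp (-(t * s)))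

variable (t : ℕ)

lemma measurable_radialWeight : Measurable (radialWeight t) := by unfold radialWeight; fun_prop

lemma continuous_gramWeight_fromRows :
    Continuous fun p : (Fin n → Fin n → ℂ) × (Fin k → Fin n → ℂ) =>
      gramWeight t (fromRows (of p.2) (of p.1)) := by
  refine (continuous_gramWeight t).comp (continuous_matrix fun i j => ?_)
  rcases i with i | i <;> simp only [fromRows_apply_inl, fromRows_apply_inr, of_apply] <;> fun_prop

lemma lintegral_gramWeight_tallBordered_single (r : ℝ) (B : Fin n → Fin n → ℂ) :
    ∫⁻ Z : Fin (k + 1) → Fin n → ℂ,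
        ENNReal.ofReal (gramWeight t (tallBordered (Pi.single 0 (r : ℂ)) (of Z) 0 (of B))) =
      radialWeight t (r ^ 2) * (gaussianMass t n *
        ∫⁻ C : Fin k → Fin n → ℂ, ENNReal.ofReal (gramWeight t (fromRows (of C) (of B)))) := by
  have hgauss : Measurable fun w : Fin n → ℂ =>
      ENNReal.ofReal (Real.exp (-(t * ∑ j, ‖w j‖ ^ 2))) := by fun_prop
  have hrest : Measurable fun C : Fin k → Fin n → ℂ =>
      ENNReal.ofReal (gramWeight t (fromRows (of C) (of B))) :=
    ((continuous_gramWeight_fromRows t).comp (Continuous.prodMk_right B)).measurable.ennreal_ofReal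
  have hmeas : Measurable fun p : (Fin n → ℂ) × (Fin k → Fin n → ℂ) =>
      ENNReal.ofReal (Real.exp (-(t * ∑ j, ‖p.1 j‖ ^ 2))) *
        ENNReal.ofReal (gramWeight t (fromRows (of p.2) (of B))) :=
    (hgauss.comp measurable_fst).mul (hrest.comp measurable_snd)
  rw [gaussianMass, radialWeight, ← lintegral_prod_mul hgauss.aemeasurable hrest.aemeasurable,
    ← Measure.volume_eq_prod, ← (measurePreserving_finSucc k (Fin n → ℂ)).lintegral_comp hmeas,
    ← lintegral_const_mul' _ _ ENNReal.ofReal_ne_top]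
  refine lintegral_congr fun Z => ?_
  rw [gramWeight_tallBordered_single, mul_assoc, ENNReal.ofReal_mul (by positivity),
    ENNReal.ofReal_mul (Real.exp_nonneg _)]
  rfl

lemma lintegral_gramWeight_tallBordered (x : Fin (k + 1) → ℂ) (B : Fin n → Fin n → ℂ) :
    ∫⁻ Z : Fin (k + 1) → Fin n → ℂ,
        ENNReal.ofReal (gramWeight t (tallBordered x (of Z) 0 (of B))) =
      radialWeight t (∑ i, ‖x i‖ ^ 2) * (gaussianMass t n *
        ∫⁻ C : Fin k → Fin n → ℂ, ENNReal.ofReal (gramWeight t (fromRows (of C) (of B)))) := by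
  obtain ⟨U, hU, hUx⟩ := exists_unitary_mulVec_eq_single x
  set r : ℝ := √(∑ i, ‖x i‖ ^ 2)
  have hmeas : Measurable fun Z : Fin (k + 1) → Fin n → ℂ =>
      ENNReal.ofReal (gramWeight t (tallBordered (Pi.single 0 (r : ℂ)) (of Z) 0 (of B))) :=
    ((continuous_gramWeight t).comp (continuous_tallBordered (by fun_prop) (by fun_prop)
      (by fun_prop) (by fun_prop))).measurable.ennreal_ofReal
  rw [← Real.sq_sqrt (by positivity : 0 ≤ ∑ i, ‖x i‖ ^ 2),
    ← lintegral_gramWeight_tallBordered_single,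
    ← (measurePreserving_leftMul hU).lintegral_comp hmeas]
  refine lintegral_congr fun Z => ?_
  rw [of_leftMul, ← hUx, gramWeight_tallBordered_isometry_mul (of B) t hU x (of Z)]

end RadialWeights

section Reindexing

/-- The index type of a bordered matrix, as an initial segment with the border in front. -/
def sumUnitEquivFin (n : ℕ) : Unit ⊕ Fin n ≃ Fin (n + 1) :=
  ((Equiv.sumComm _ _).trans (Equiv.optionEquivSumPUnit _).symm).trans (finSuccEquiv n).symm

lemma charpoly_eq_charpoly_bordered (A : Fin (n + 1) → Fin (n + 1) → ℂ) :
    (of A).charpoly = (bordered (A 0 0) (fun j => A 0 j.succ) (fun i => A i.succ 0)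
      (of fun i j : Fin n => A i.succ j.succ)).charpoly := by
  rw [← Matrix.charpoly_reindex (sumUnitEquivFin n).symm (of A)]
  congr 1
  ext i j
  rcases i with i | i <;> rcases j with j | j <;> simp [bordered, sumUnitEquivFin]

lemma gramWeight_fromRows_eq_tallBordered (t : ℕ) (A : Fin (n + 1) → Fin (n + 1) → ℂ)
    (C : Fin k → Fin (n + 1) → ℂ) :
    let q : BorderParams k n × (Fin n → ℂ) := borderBlocks (A, C)
    gramWeight t (fromRows (of C) (of A)) =
      gramWeight t (tallBordered q.1.1 (of q.1.2.1) q.2 (of q.1.2.2)) := by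
  rw [← gramWeight_submatrix t (Equiv.refl _) (sumUnitEquivFin n)]
  refine gramWeight_eq_of_gram t ?_
  ext i j
  rcases i with i | i <;> rcases j with j | j <;>
    simp [Matrix.mul_apply, tallBordered, borderBlocks, Fintype.sum_sum_type, sumUnitEquivFin,
      Fin.sum_univ_succ] <;> ring

end Reindexing

/-! ### The eigenvalue law of the weighted ensemble -/

section Vandermonde

variable {n : ℕ}

/-- The squared modulus `∏_{i<j} ‖ζᵢ - ζⱼ‖²` of the Vandermonde determinant. -/
def vandermondeSq (ζ : Fin n → ℂ) : ℝ :=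
  ∏ p ∈ Finset.univ.filter (fun p : Fin n × Fin n => p.1 < p.2), ‖ζ p.1 - ζ p.2‖ ^ 2

lemma vandermondeSq_nonneg (ζ : Fin n → ℂ) : 0 ≤ vandermondeSq ζ :=
  Finset.prod_nonneg fun _ _ => by positivity

lemma continuous_vandermondeSq : Continuous (vandermondeSq : (Fin n → ℂ) → ℝ) := by
  unfold vandermondeSq; fun_prop

lemma vandermondeSq_cons (z : ℂ) (ζ : Fin n → ℂ) :
    vandermondeSq (Fin.cons z ζ) = (∏ i, ‖z - ζ i‖ ^ 2) * vandermondeSq ζ := by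
  simp only [vandermondeSq, Finset.prod_filter, Fintype.prod_prod_type, Fin.prod_univ_succ]
  simp

lemma vandermondeSq_eq_norm_det_sq (ζ : Fin n → ℂ) :
    vandermondeSq ζ = ‖(vandermonde ζ).det‖ ^ 2 := by
  have hIoi (i : Fin n) : Finset.univ.filter (i < ·) = Finset.Ioi i := by ext; simp
  simp only [det_vandermonde, norm_prod, ← Finset.prod_pow, vandermondeSq, Finset.prod_filter,
    Fintype.prod_prod_type]
  simp only [← Finset.prod_filter, hIoi, norm_sub_rev]

lemma vandermondeSq_comp_perm (ζ : Fin n → ℂ) (σ : Equiv.Perm (Fin n)) :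
    vandermondeSq (ζ ∘ σ) = vandermondeSq ζ := by
  have hsub : vandermonde (ζ ∘ σ) = (vandermonde ζ).submatrix σ id := rfl
  have hsign : ‖((Equiv.Perm.sign σ : ℤ) : ℂ)‖ = 1 := by
    rcases Int.units_eq_one_or (Equiv.Perm.sign σ) with h | h <;> simp [h]
  rw [vandermondeSq_eq_norm_det_sq, vandermondeSq_eq_norm_det_sq, hsub, det_permute, norm_mul,
    hsign, one_mul]

lemma vandermondeSq_eq_zero {ζ : Fin n → ℂ} (hζ : ¬ Function.Injective ζ) :
    vandermondeSq ζ = 0 := by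
  rw [vandermondeSq_eq_norm_det_sq, sq_eq_zero_iff, norm_eq_zero]
  exact not_not.1 (mt det_vandermonde_ne_zero_iff.1 hζ)

end Vandermonde

section Symmetrization

variable {ι α L : Type*} [LinearOrder L] {key : α → L} {F : (ι → α) → ℝ≥0∞}

/-- The families whose `key` is minimal at `j`. -/
def minimalAt (key : α → L) (j : ι) : Set (ι → α) := {η | ∀ i, key (η j) ≤ key (η i)}

lemma sum_indicator_minimalAt [Fintype ι] [Nonempty ι] (hkey : Function.Injective key)
    (hdiag : ∀ η, ¬ Function.Injective η → F η = 0) (η : ι → α) :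
    ∑ j, (minimalAt key j).indicator F η = F η := by
  obtain ⟨j, hj⟩ := Finite.exists_min (key ∘ η)
  rw [Finset.sum_eq_single j, Set.indicator_of_mem (show η ∈ minimalAt key j from hj)]
  · intro i _ hij
    refine Set.indicator_apply_eq_zero.2 fun hi => hdiag η fun hη => hij (hη ?_)
    exact hkey (le_antisymm (hi j) (hj i))
  · simp

variable [MeasureSpace α] [SigmaFinite (volume : Measure α)]

lemma measurePreserving_comp_perm [Fintype ι] (σ : Equiv.Perm ι) :
    MeasurePreserving fun η : ι → α => η ∘ σ := by
  have hσ : (fun η : ι → α => η ∘ σ) = MeasurableEquiv.piCongrLeft (fun _ : ι => α) σ.symm := by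
    ext η i
    simpa only [Equiv.symm_apply_apply, Function.comp_apply] using
      (MeasurableEquiv.piCongrLeft_apply_apply (β := fun _ : ι => α) σ.symm η (σ i)).symm
  exact hσ ▸ volume_measurePreserving_piCongrLeft (fun _ : ι => α) σ.symm

lemma lintegral_eq_card_mul_setLIntegral_minimalAt [Fintype ι] (hkey : Function.Injective key)
    (hmin : ∀ j, MeasurableSet (minimalAt key j : Set (ι → α))) (hF : Measurable F)
    (hperm : ∀ η (σ : Equiv.Perm ι), F (η ∘ σ) = F η)
    (hdiag : ∀ η, ¬ Function.Injective η → F η = 0) (i₀ : ι) :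
    ∫⁻ η, F η = Fintype.card ι * ∫⁻ η in minimalAt key i₀, F η := by
  classical
  have : Nonempty ι := ⟨i₀⟩
  have hswap (j : ι) : ∫⁻ η, (minimalAt key j).indicator F η = ∫⁻ η in minimalAt key i₀, F η := by
    rw [← lintegral_indicator (hmin i₀), ← (measurePreserving_comp_perm
      (Equiv.swap i₀ j)).lintegral_comp (hF.indicator (hmin i₀))]
    refine lintegral_congr fun η => ?_
    have hmem : η ∘ Equiv.swap i₀ j ∈ minimalAt key i₀ ↔ η ∈ minimalAt key j := by
      simp only [minimalAt, Set.mem_ofPred_eq, Function.comp_apply, Equiv.swap_apply_left]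
      exact (Equiv.swap i₀ j).forall_congr_right (q := fun i => key (η j) ≤ key (η i))
    simp only [Set.indicator_apply, hmem, hperm]
  simp only [← sum_indicator_minimalAt hkey hdiag]
  rw [lintegral_finsetSum _ fun j _ => hF.indicator (hmin j)]
  simp only [hswap, sum_indicator_minimalAt hkey hdiag, Finset.sum_const, Finset.card_univ,
    nsmul_eq_mul]

end Symmetrization

section Deflation

variable {n : ℕ}

/-- The observable on the pairs of an eigenvalue and the coefficients of the deflated
characteristic polynomial that corresponds to the observable `g` of the full characteristic
polynomial; it contains the Jacobian of the deflation. -/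
def deflatedObservable (g : (Fin (n + 1) → ℂ) → ℝ≥0∞) : ℂ × (Fin n → ℂ) → ℝ≥0∞ :=
  (lexMinimalPairs n).indicator fun p =>
    ENNReal.ofReal (‖(monicOfCoeffs p.2).eval p.1‖ ^ 2) *
      g (lowerCoeffs (n + 1) ((X - C p.1) * monicOfCoeffs p.2))

open Classical in
lemma deflatedObservable_vieta (g : (Fin (n + 1) → ℂ) → ℝ≥0∞) (z : ℂ) (ζ : Fin n → ℂ) :
    deflatedObservable g (z, vieta ζ) =
      if ∀ i, complexLex z ≤ complexLex (ζ i) then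
        ENNReal.ofReal (∏ i, ‖z - ζ i‖ ^ 2) * g (vieta (Fin.cons z ζ : Fin (n + 1) → ℂ))
      else 0 := by
  simp only [deflatedObservable, Set.indicator_apply, vieta_mem_lexMinimalPairs_iff]
  rw [vieta, vieta, monicOfCoeffs_lowerCoeffs (monicOfRoots_monic ζ) (monicOfRoots_natDegree ζ),
    monicOfRoots_cons, monicOfRoots_eval, norm_prod, Finset.prod_pow]

lemma measurable_deflatedObservable {g : (Fin (n + 1) → ℂ) → ℝ≥0∞} (hg : Measurable g) :
    Measurable (deflatedObservable g) := by
  classical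
  refine measurable_of_comp_vieta ?_
  simp only [deflatedObservable_vieta]
  refine Measurable.ite ?_ (Measurable.mul ?_ (hg.comp (continuous_vieta.measurable.comp ?_)))
    measurable_const
  · simp only [Set.ofPred_forall]
    exact MeasurableSet.iInter fun i => measurableSet_complexLex_le measurable_fst
      ((measurable_pi_apply i).comp measurable_snd)
  · fun_prop
  · exact (measurePreserving_finCons n ℂ).measurable

variable {k : ℕ} (t : ℕ)

lemma lintegral_bordered_eq_lintegral_deflationIntegrand (g : (Fin (n + 1) → ℂ) → ℝ≥0∞)
    {e : BorderParams k n} (he : IsObservable (e.2.1 0) (of e.2.2)) :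
    ∫⁻ c, g (lowerCoeffs (n + 1) (bordered (e.1 0) (e.2.1 0) c (of e.2.2)).charpoly) *
        ENNReal.ofReal (gramWeight t (tallBordered e.1 (of e.2.1) c (of e.2.2))) =
      ∫⁻ y, deflationIntegrand t (deflatedObservable g) e y := by
  rw [lintegral_borderColumn (a := e.1 0) he,
    ← lintegral_indicator measurableSet_minEigenvalueDomain]
  refine lintegral_congr fun y => ?_
  have hcoeffs : monicOfCoeffs (lowerCoeffs n (deflation (e.2.1 0) (of e.2.2) y).charpoly) =
      (deflation (e.2.1 0) (of e.2.2) y).charpoly :=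
    monicOfCoeffs_lowerCoeffs (charpoly_monic _) (by simp)
  simp only [deflationIntegrand, deflatedObservable]
  by_cases hy : y ∈ minEigenvalueDomain (e.1 0) (e.2.1 0) (of e.2.2)
  · rw [Set.indicator_of_mem hy, Set.indicator_of_mem (show _ ∈ lexMinimalPairs n from hy),
      hcoeffs, mul_assoc, charpoly_bordered_borderColumn]
  · rw [Set.indicator_of_notMem hy, Set.indicator_of_notMem (show _ ∉ lexMinimalPairs n from hy),
      zero_mul]

lemma exists_lintegral_charpoly_eq_deflatedObservable (k n : ℕ) :
    ∃ J : ℝ≥0∞, ∀ g : (Fin (n + 1) → ℂ) → ℝ≥0∞, Measurable g →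
      ∫⁻ p : (Fin (n + 1) → Fin (n + 1) → ℂ) × (Fin k → Fin (n + 1) → ℂ),
        g (lowerCoeffs (n + 1) (of p.1).charpoly) *
          ENNReal.ofReal (gramWeight t (fromRows (of p.2) (of p.1))) =
      J * ∫⁻ e : BorderParams k n,
        deflatedObservable g (e.1 0, lowerCoeffs n (of e.2.2).charpoly) *
          ENNReal.ofReal (gramWeight t (tallBordered e.1 (of e.2.1) 0 (of e.2.2))) := by
  obtain ⟨J, hJ⟩ := exists_lintegral_deflationIntegrand t k n
  refine ⟨J, fun g hg => ?_⟩
  have hmeas : Measurable fun q : BorderParams k n × (Fin n → ℂ) =>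
      g (lowerCoeffs (n + 1) (bordered (q.1.1 0) (q.1.2.1 0) q.2 (of q.1.2.2)).charpoly) *
        ENNReal.ofReal (gramWeight t (tallBordered q.1.1 (of q.1.2.1) q.2 (of q.1.2.2))) := by
    have htall : Continuous fun q : BorderParams k n × (Fin n → ℂ) =>
        tallBordered q.1.1 (of q.1.2.1) q.2 (of q.1.2.2) :=
      continuous_tallBordered (by fun_prop) (by fun_prop) (by fun_prop) (by fun_prop)
    refine (hg.comp (ContinuousCoeffs.lowerCoeffs (ContinuousCoeffs.charpoly ?_) _).measurable).mul
      ((continuous_gramWeight t).comp htall).measurable.ennreal_ofReal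
    refine (htall.matrix_submatrix (Sum.map (fun _ : Unit => 0) id) id).congr fun q => ?_
    exact (bordered_eq_submatrix_tallBordered q.1.1 (of q.1.2.1) q.2 (of q.1.2.2)).symm
  rw [← hJ _ (measurable_deflatedObservable hg)]
  simp only [charpoly_eq_charpoly_bordered, gramWeight_fromRows_eq_tallBordered]
  refine ((measurePreserving_borderBlocks k n).lintegral_comp hmeas).trans ?_
  rw [Measure.volume_eq_prod, lintegral_prod _ hmeas.aemeasurable]
  refine lintegral_congr_ae ?_
  filter_upwards [ae_isObservable k n] with e he
  exact lintegral_bordered_eq_lintegral_deflationIntegrand t g he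

end Deflation

section EigenvalueWeights

variable (t k : ℕ) {n : ℕ}

/-- The weight of an eigenvalue `z`: the radial weight of a column with first entry `z`, integrated
over the remaining `k` entries. -/
def tailWeight (z : ℂ) : ℝ≥0∞ := ∫⁻ γ : Fin k → ℂ, radialWeight t (‖z‖ ^ 2 + ∑ i, ‖γ i‖ ^ 2)

lemma measurable_radialWeight_add :
    Measurable fun p : ℂ × (Fin k → ℂ) => radialWeight t (‖p.1‖ ^ 2 + ∑ i, ‖p.2 i‖ ^ 2) :=
  (measurable_radialWeight t).comp (by fun_prop)

lemma measurable_tailWeight : Measurable (tailWeight t k) :=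
  (measurable_radialWeight_add t k).lintegral_prod_right'

/-- The joint weight `|Δ(ζ)|² ∏ᵢ w(ζᵢ)` of the eigenvalues of the weighted ensemble. -/
def eigenvalueWeight (ζ : Fin n → ℂ) : ℝ≥0∞ :=
  ENNReal.ofReal (vandermondeSq ζ) * ∏ i, tailWeight t k (ζ i)

lemma measurable_eigenvalueWeight : Measurable (eigenvalueWeight t k : (Fin n → ℂ) → ℝ≥0∞) :=
  continuous_vandermondeSq.measurable.ennreal_ofReal.mul
    (Finset.measurable_prod _ fun i _ => (measurable_tailWeight t k).comp (measurable_pi_apply i))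

lemma eigenvalueWeight_comp_perm (ζ : Fin n → ℂ) (σ : Equiv.Perm (Fin n)) :
    eigenvalueWeight t k (ζ ∘ σ) = eigenvalueWeight t k ζ := by
  rw [eigenvalueWeight, eigenvalueWeight, vandermondeSq_comp_perm]
  exact congrArg _ (Equiv.prod_comp σ fun i => tailWeight t k (ζ i))

lemma eigenvalueWeight_cons (z : ℂ) (ζ : Fin n → ℂ) :
    eigenvalueWeight t k (Fin.cons z ζ : Fin (n + 1) → ℂ) =
      tailWeight t k z * (ENNReal.ofReal (∏ i, ‖z - ζ i‖ ^ 2) * eigenvalueWeight t k ζ) := by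
  rw [eigenvalueWeight, vandermondeSq_cons, ENNReal.ofReal_mul (by positivity), Fin.prod_univ_succ]
  simp only [eigenvalueWeight, Fin.cons_zero, Fin.cons_succ]
  ring

lemma lintegral_finSucc {α : Type*} [MeasureSpace α] [SigmaFinite (volume : Measure α)]
    {F : α × (Fin n → α) → ℝ≥0∞} (hF : Measurable F) :
    ∫⁻ η : Fin (n + 1) → α, F (η 0, fun i => η i.succ) = ∫⁻ z, ∫⁻ ζ, F (z, ζ) := by
  rw [← lintegral_prod _ hF.aemeasurable]
  exact (measurePreserving_finSucc n α).lintegral_comp hF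

lemma lintegral_radialWeight_mul {I : ℂ → ℝ≥0∞} (hI : Measurable I) :
    ∫⁻ x : Fin (k + 1) → ℂ, radialWeight t (∑ i, ‖x i‖ ^ 2) * I (x 0) =
      ∫⁻ z, tailWeight t k z * I z := by
  have hmeas : Measurable fun p : ℂ × (Fin k → ℂ) =>
      radialWeight t (‖p.1‖ ^ 2 + ∑ i, ‖p.2 i‖ ^ 2) * I p.1 :=
    (measurable_radialWeight_add t k).mul (hI.comp measurable_fst)
  simp only [Fin.sum_univ_succ]
  rw [lintegral_finSucc hmeas]
  refine lintegral_congr fun z => ?_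
  have hz : Measurable fun γ : Fin k → ℂ => radialWeight t (‖z‖ ^ 2 + ∑ i, ‖γ i‖ ^ 2) :=
    (measurable_radialWeight t).comp (by fun_prop)
  rw [tailWeight, lintegral_mul_const (I z) hz]

lemma lintegral_deflatedObservable_vieta {g : (Fin (n + 1) → ℂ) → ℝ≥0∞} (hg : Measurable g) :
    (n + 1 : ℕ) * ∫⁻ z, tailWeight t k z *
        ∫⁻ ζ, deflatedObservable g (z, vieta ζ) * eigenvalueWeight t k ζ =
      ∫⁻ η, g (vieta η) * eigenvalueWeight t k η := by
  classical
  have hmin (j : Fin (n + 1)) : MeasurableSet (minimalAt complexLex j) := by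
    simp only [minimalAt, Set.ofPred_forall]
    exact MeasurableSet.iInter fun i =>
      measurableSet_complexLex_le (measurable_pi_apply j) (measurable_pi_apply i)
  have hsym := lintegral_eq_card_mul_setLIntegral_minimalAt
    (F := fun η : Fin (n + 1) → ℂ => g (vieta η) * eigenvalueWeight t k η) complexLex_injective hmin
    ((hg.comp continuous_vieta.measurable).mul (measurable_eigenvalueWeight t k))
    (fun η σ => by rw [eigenvalueWeight_comp_perm, vieta, monicOfRoots_comp_perm, vieta])
    (fun η hη => by
      rw [eigenvalueWeight, vandermondeSq_eq_zero hη, ENNReal.ofReal_zero, zero_mul, mul_zero]) 0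
  have hw : Measurable fun p : ℂ × (Fin n → ℂ) =>
      deflatedObservable g (p.1, vieta p.2) * eigenvalueWeight t k p.2 :=
    ((measurable_deflatedObservable hg).comp (measurable_fst.prodMk
      (continuous_vieta.measurable.comp measurable_snd))).mul
      ((measurable_eigenvalueWeight t k).comp measurable_snd)
  have hF : Measurable fun p : ℂ × (Fin n → ℂ) => tailWeight t k p.1 *
      (deflatedObservable g (p.1, vieta p.2) * eigenvalueWeight t k p.2) :=
    ((measurable_tailWeight t k).comp measurable_fst).mul hw
  have hpull (z : ℂ) : tailWeight t k z *
      ∫⁻ ζ, deflatedObservable g (z, vieta ζ) * eigenvalueWeight t k ζ =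
      ∫⁻ ζ, tailWeight t k z * (deflatedObservable g (z, vieta ζ) * eigenvalueWeight t k ζ) :=
    (lintegral_const_mul _ (hw.comp measurable_prodMk_left)).symm
  simp only [hpull]
  rw [hsym, Fintype.card_fin, ← lintegral_finSucc hF, ← lintegral_indicator (hmin 0)]
  refine congrArg _ (lintegral_congr fun η => ?_)
  obtain ⟨z, ζ, rfl⟩ : ∃ z ζ, η = Fin.cons z ζ := ⟨η 0, Fin.tail η, (Fin.cons_self_tail η).symm⟩
  have hmem : (Fin.cons z ζ : Fin (n + 1) → ℂ) ∈ minimalAt complexLex 0 ↔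
      ∀ i, complexLex z ≤ complexLex (ζ i) := by
    simp [minimalAt, Fin.forall_fin_succ]
  simp only [Fin.cons_zero, Fin.cons_succ, deflatedObservable_vieta, Set.indicator_apply, hmem]
  split_ifs with hz
  · rw [eigenvalueWeight_cons]
    ring
  · rw [zero_mul, mul_zero]

end EigenvalueWeights

section EigenvalueLaw

variable (t k n : ℕ)

lemma lintegral_charpoly_tallBordered {h : (Fin n → Fin n → ℂ) → ℝ≥0∞} (hh : Measurable h)
    (x : Fin (k + 1) → ℂ) :
    ∫⁻ q : (Fin (k + 1) → Fin n → ℂ) × (Fin n → Fin n → ℂ),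
        h q.2 * ENNReal.ofReal (gramWeight t (tallBordered x (of q.1) 0 (of q.2))) =
      radialWeight t (∑ i, ‖x i‖ ^ 2) * (gaussianMass t n *
        ∫⁻ p : (Fin n → Fin n → ℂ) × (Fin k → Fin n → ℂ),
          h p.1 * ENNReal.ofReal (gramWeight t (fromRows (of p.2) (of p.1)))) := by
  have htall : Measurable fun q : (Fin (k + 1) → Fin n → ℂ) × (Fin n → Fin n → ℂ) =>
      ENNReal.ofReal (gramWeight t (tallBordered x (of q.1) 0 (of q.2))) :=
    ((continuous_gramWeight t).comp (continuous_tallBordered (by fun_prop) (by fun_prop)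
      (by fun_prop) (by fun_prop))).measurable.ennreal_ofReal
  have hrows : Measurable fun p : (Fin n → Fin n → ℂ) × (Fin k → Fin n → ℂ) =>
      ENNReal.ofReal (gramWeight t (fromRows (of p.2) (of p.1))) :=
    (continuous_gramWeight_fromRows t).measurable.ennreal_ofReal
  have htallD (D : Fin n → Fin n → ℂ) : Measurable fun Z : Fin (k + 1) → Fin n → ℂ =>
      ENNReal.ofReal (gramWeight t (tallBordered x (of Z) 0 (of D))) :=
    ((continuous_gramWeight t).comp (continuous_tallBordered (by fun_prop) (by fun_prop)
      (by fun_prop) (by fun_prop))).measurable.ennreal_ofReal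
  have hrowsD (D : Fin n → Fin n → ℂ) : Measurable fun C : Fin k → Fin n → ℂ =>
      ENNReal.ofReal (gramWeight t (fromRows (of C) (of D))) :=
    ((continuous_gramWeight_fromRows t).comp (Continuous.prodMk_right D)).measurable.ennreal_ofReal
  rw [Measure.volume_eq_prod, lintegral_prod_symm _ (by fun_prop), Measure.volume_eq_prod,
    lintegral_prod _ (by fun_prop), ← mul_assoc, ← lintegral_const_mul _ (by fun_prop)]
  refine lintegral_congr fun D => ?_
  dsimp only
  rw [lintegral_const_mul _ (htallD D), lintegral_const_mul _ (hrowsD D),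
    lintegral_gramWeight_tallBordered]
  ring

lemma measurable_lowerCoeffs_charpoly :
    Measurable fun A : Fin n → Fin n → ℂ => lowerCoeffs n (of A).charpoly :=
  (ContinuousCoeffs.lowerCoeffs (ContinuousCoeffs.charpoly
    (show Continuous fun A : Fin n → Fin n → ℂ => of A from continuous_id)) n).measurable

lemma lintegral_borderParams {h : ℂ × (Fin n → ℂ) → ℝ≥0∞} (hh : Measurable h) :
    ∫⁻ e : BorderParams k n, h (e.1 0, lowerCoeffs n (of e.2.2).charpoly) *
        ENNReal.ofReal (gramWeight t (tallBordered e.1 (of e.2.1) 0 (of e.2.2))) =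
      gaussianMass t n * ∫⁻ z, tailWeight t k z *
        ∫⁻ p : (Fin n → Fin n → ℂ) × (Fin k → Fin n → ℂ),
          h (z, lowerCoeffs n (of p.1).charpoly) *
            ENNReal.ofReal (gramWeight t (fromRows (of p.2) (of p.1))) := by
  have hcoeffs : Measurable fun A : Fin n → Fin n → ℂ => lowerCoeffs n (of A).charpoly :=
    measurable_lowerCoeffs_charpoly n
  have htall : Measurable fun e : BorderParams k n =>
      ENNReal.ofReal (gramWeight t (tallBordered e.1 (of e.2.1) 0 (of e.2.2))) :=
    ((continuous_gramWeight t).comp (continuous_tallBordered (by fun_prop) (by fun_prop)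
      (by fun_prop) (by fun_prop))).measurable.ennreal_ofReal
  have hrows : Measurable fun q : ℂ × ((Fin n → Fin n → ℂ) × (Fin k → Fin n → ℂ)) =>
      h (q.1, lowerCoeffs n (of q.2.1).charpoly) *
        ENNReal.ofReal (gramWeight t (fromRows (of q.2.2) (of q.2.1))) :=
    (hh.comp (measurable_fst.prodMk (hcoeffs.comp measurable_snd.fst))).mul
      ((continuous_gramWeight_fromRows t).measurable.ennreal_ofReal.comp measurable_snd)
  have hI : Measurable fun z => ∫⁻ p : (Fin n → Fin n → ℂ) × (Fin k → Fin n → ℂ),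
      h (z, lowerCoeffs n (of p.1).charpoly) *
        ENNReal.ofReal (gramWeight t (fromRows (of p.2) (of p.1))) :=
    hrows.lintegral_prod_right' (ν := volume)
  have hmeas : Measurable fun e : BorderParams k n =>
      h (e.1 0, lowerCoeffs n (of e.2.2).charpoly) *
        ENNReal.ofReal (gramWeight t (tallBordered e.1 (of e.2.1) 0 (of e.2.2))) :=
    (hh.comp (((measurable_pi_apply 0).comp measurable_fst).prodMk
      (hcoeffs.comp measurable_snd.snd))).mul htall
  have hradial : Measurable fun x : Fin (k + 1) → ℂ => radialWeight t (∑ i, ‖x i‖ ^ 2) :=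
    (measurable_radialWeight t).comp (by fun_prop)
  rw [Measure.volume_eq_prod, lintegral_prod _ hmeas.aemeasurable,
    ← lintegral_radialWeight_mul t k hI, ← lintegral_const_mul _
      (by exact hradial.mul (hI.comp (measurable_pi_apply 0)))]
  refine lintegral_congr fun x => ?_
  rw [lintegral_charpoly_tallBordered t k n (h := fun D => h (x 0, lowerCoeffs n (of D).charpoly))
    (hh.comp (measurable_const.prodMk hcoeffs))]
  ring

/-- The eigenvalue law of the weighted ensemble: up to a constant, the observables of the
characteristic polynomial integrate as if the eigenvalues had density `eigenvalueWeight`. -/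
def HasEigenvalueLaw : Prop :=
  ∃ c : ℝ≥0∞, ∀ g : (Fin n → ℂ) → ℝ≥0∞, Measurable g →
    ∫⁻ p : (Fin n → Fin n → ℂ) × (Fin k → Fin n → ℂ),
      g (lowerCoeffs n (of p.1).charpoly) *
        ENNReal.ofReal (gramWeight t (fromRows (of p.2) (of p.1))) =
    c * ∫⁻ ζ, g (vieta ζ) * eigenvalueWeight t k ζ

variable {n} in
lemma HasEigenvalueLaw.succ (hn : HasEigenvalueLaw t k n) : HasEigenvalueLaw t k (n + 1) := by
  obtain ⟨c, hc⟩ := hn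
  obtain ⟨J, hJ⟩ := exists_lintegral_charpoly_eq_deflatedObservable t k n
  refine ⟨J * gaussianMass t n * c * ((n + 1 : ℕ) : ℝ≥0∞)⁻¹, fun g hg => ?_⟩
  have hz (z : ℂ) : Measurable fun a => deflatedObservable g (z, a) :=
    (measurable_deflatedObservable hg).comp measurable_prodMk_left
  have hmeas : Measurable fun z => tailWeight t k z *
      ∫⁻ ζ, deflatedObservable g (z, vieta ζ) * eigenvalueWeight t k ζ :=
    (measurable_tailWeight t k).mul (Measurable.lintegral_prod_right'
      (((measurable_deflatedObservable hg).comp (measurable_fst.prodMk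
        (continuous_vieta.measurable.comp measurable_snd))).mul
        ((measurable_eigenvalueWeight t k).comp measurable_snd)))
  rw [hJ g hg, lintegral_borderParams t k n (measurable_deflatedObservable hg)]
  simp only [fun z => hc _ (hz z), mul_left_comm _ c]
  rw [lintegral_const_mul _ hmeas, ← lintegral_deflatedObservable_vieta t k hg, mul_assoc _ _⁻¹,
    ← mul_assoc _⁻¹, ENNReal.inv_mul_cancel (by simp) (by simp), one_mul]
  ring

lemma hasEigenvalueLaw : HasEigenvalueLaw t k n := by
  induction n with
  | zero =>
    have hpi (α : Type) [MeasureSpace α] [SigmaFinite (volume : Measure α)] :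
        volume (Set.univ : Set (Fin 0 → α)) = 1 := by
      rw [volume_pi, Measure.pi_univ, Finset.univ_eq_empty, Finset.prod_empty]
    have hvol : volume (Set.univ : Set ((Fin 0 → Fin 0 → ℂ) × (Fin k → Fin 0 → ℂ))) = 1 := by
      rw [Measure.volume_eq_prod, ← Set.univ_prod_univ, Measure.prod_prod, hpi, volume_pi,
        Measure.pi_univ]
      simp only [hpi, Finset.prod_const_one, one_mul]
    have hweight (G : Matrix (Fin k ⊕ Fin 0) (Fin 0) ℂ) : gramWeight t G = 1 := by
      simp [gramWeight, frobeniusSq]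
    refine ⟨1, fun g _ => ?_⟩
    simp only [hweight, eigenvalueWeight, vandermondeSq, Subsingleton.elim _ (0 : Fin 0 → ℂ)]
    simp [hpi, hvol]
  | succ n ih => exact ih.succ

end EigenvalueLaw

/-! ### Concentration on the isometries -/

section Laplace

variable {X : Type*} [MeasurableSpace X] {μ : Measure X} {w Ψ : X → ℝ} {L δ : ℝ}

lemma integrable_pow_of_le_one (hw0 : ∀ x, 0 ≤ w x) (hw1 : ∀ x, w x ≤ 1) (hw : Integrable w μ)
    (t : ℕ) : Integrable (fun x => w x ^ (t + 1)) μ := by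
  refine hw.mono' (hw.aestronglyMeasurable.pow _) (ae_of_all _ fun x => ?_)
  rw [Real.norm_of_nonneg (pow_nonneg (hw0 x) _)]
  exact pow_le_of_le_one (hw0 x) (hw1 x) t.succ_ne_zero

lemma pow_mul_measureReal_le_integral_pow (hw0 : ∀ x, 0 ≤ w x) (hw1 : ∀ x, w x ≤ 1)
    (hw : Integrable w μ) (hδ : 0 < δ) (t : ℕ) :
    δ ^ (t + 1) * μ.real {x | δ < w x} ≤ ∫ x, w x ^ (t + 1) ∂μ := by
  have hint := integrable_pow_of_le_one hw0 hw1 hw t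
  have hsub : {x | δ < w x} ⊆ {x | δ ^ (t + 1) ≤ w x ^ (t + 1)} :=
    fun x hx => pow_le_pow_left₀ hδ.le (le_of_lt hx) _
  have hfin : μ {x | δ ^ (t + 1) ≤ w x ^ (t + 1)} ≠ ∞ :=
    (hint.measure_ge_lt_top (pow_pos hδ _)).ne
  calc δ ^ (t + 1) * μ.real {x | δ < w x}
      ≤ δ ^ (t + 1) * μ.real {x | δ ^ (t + 1) ≤ w x ^ (t + 1)} := by
        gcongr
    _ ≤ ∫ x, w x ^ (t + 1) ∂μ :=
        mul_meas_ge_le_integral_of_nonneg (ae_of_all _ fun x => pow_nonneg (hw0 x) _) hint _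

lemma measureReal_superlevel_pos (hw : Integrable w μ) (hpos : μ {x | δ < w x} ≠ 0) (hδ : 0 < δ) :
    0 < μ.real {x | δ < w x} :=
  ENNReal.toReal_pos hpos (hw.measure_gt_lt_top hδ).ne

lemma tendsto_pow_div_integral_pow (hw0 : ∀ x, 0 ≤ w x) (hw1 : ∀ x, w x ≤ 1)
    (hw : Integrable w μ) (hpos : ∀ δ < 1, μ {x | δ < w x} ≠ 0) (hδ0 : 0 ≤ δ) (hδ1 : δ < 1) :
    Tendsto (fun t : ℕ => δ ^ t / ∫ x, w x ^ (t + 1) ∂μ) atTop (𝓝 0) := by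
  obtain ⟨δ', hδδ', hδ'1⟩ := exists_between hδ1
  have hδ'0 : 0 < δ' := hδ0.trans_lt hδδ'
  set v := μ.real {x | δ' < w x}
  have hv : 0 < v := measureReal_superlevel_pos hw (hpos δ' hδ'1) hδ'0
  have hlim : Tendsto (fun t : ℕ => (δ / δ') ^ t / (δ' * v)) atTop (𝓝 (0 / (δ' * v))) :=
    (tendsto_pow_atTop_nhds_zero_of_lt_one (by positivity) ((div_lt_one hδ'0).2 hδδ')).div_const _
  rw [zero_div] at hlim
  refine squeeze_zero (fun t => ?_) (fun t => ?_) hlim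
  · exact div_nonneg (pow_nonneg hδ0 t) (integral_nonneg fun x => pow_nonneg (hw0 x) _)
  · calc δ ^ t / ∫ x, w x ^ (t + 1) ∂μ ≤ δ ^ t / (δ' ^ (t + 1) * v) := by
          gcongr
          exact pow_mul_measureReal_le_integral_pow hw0 hw1 hw hδ'0 t
      _ = (δ / δ') ^ t / (δ' * v) := by rw [div_pow, pow_succ, div_div, mul_assoc]

lemma integral_pow_pos (hw0 : ∀ x, 0 ≤ w x) (hw1 : ∀ x, w x ≤ 1) (hw : Integrable w μ)
    (hpos : ∀ δ < 1, μ {x | δ < w x} ≠ 0) (t : ℕ) : 0 < ∫ x, w x ^ (t + 1) ∂μ := by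
  have hv := measureReal_superlevel_pos hw (hpos (1 / 2) (by norm_num)) (by norm_num)
  exact (mul_pos (by positivity) hv).trans_le
    (pow_mul_measureReal_le_integral_pow hw0 hw1 hw (by norm_num) t)

lemma integrable_mul_pow (hw0 : ∀ x, 0 ≤ w x) (hw1 : ∀ x, w x ≤ 1)
    (hwm : AEStronglyMeasurable w μ) (hΨ : Integrable (fun x => Ψ x * w x) μ) (t : ℕ) :
    Integrable (fun x => Ψ x * w x ^ (t + 1)) μ := by
  refine (hΨ.mul_bdd (hwm.pow t) (c := 1) (ae_of_all _ fun x => ?_)).congr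
    (ae_of_all _ fun x => by simp only [Pi.pow_apply]; ring)
  simpa only [Pi.pow_apply, Real.norm_of_nonneg (pow_nonneg (hw0 x) t)]
    using pow_le_one₀ (hw0 x) (hw1 x)

lemma abs_integral_mul_pow_sub_le {η : ℝ} (hw0 : ∀ x, 0 ≤ w x) (hw1 : ∀ x, w x ≤ 1)
    (hw : Integrable w μ) (hΨ : Integrable (fun x => Ψ x * w x) μ)
    (hη : 0 ≤ η) (hδ : 0 ≤ δ) (hloc : ∀ x, δ < w x → |Ψ x - L| ≤ η) (t : ℕ) :
    |∫ x, Ψ x * w x ^ (t + 1) ∂μ - L * ∫ x, w x ^ (t + 1) ∂μ| ≤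
      η * ∫ x, w x ^ (t + 1) ∂μ + δ ^ t * ∫ x, |Ψ x * w x - L * w x| ∂μ := by
  have hint := integrable_pow_of_le_one hw0 hw1 hw t
  have hΨint := integrable_mul_pow hw0 hw1 hw.aestronglyMeasurable hΨ t
  have hdist : Integrable (fun x => |Ψ x * w x - L * w x|) μ := (hΨ.sub (hw.const_mul L)).abs
  have hpt (x : X) : |Ψ x * w x ^ (t + 1) - L * w x ^ (t + 1)| ≤
      η * w x ^ (t + 1) + δ ^ t * |Ψ x * w x - L * w x| := by
    have := hw0 x
    rw [← sub_mul, ← sub_mul, abs_mul, abs_mul, abs_of_nonneg (hw0 x),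
      abs_of_nonneg (pow_nonneg (hw0 x) _)]
    rcases lt_or_ge δ (w x) with hx | hx
    · exact (mul_le_mul_of_nonneg_right (hloc x hx) (by positivity)).trans
        (le_add_of_nonneg_right (by positivity))
    · calc |Ψ x - L| * w x ^ (t + 1) = w x ^ t * (|Ψ x - L| * w x) := by ring
        _ ≤ δ ^ t * (|Ψ x - L| * w x) := by gcongr
        _ ≤ η * w x ^ (t + 1) + δ ^ t * (|Ψ x - L| * w x) :=
            le_add_of_nonneg_left (by positivity)
  rw [← integral_const_mul, ← integral_const_mul, ← integral_const_mul,
    ← integral_sub hΨint (hint.const_mul L),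
    ← integral_add (hint.const_mul η) (hdist.const_mul _)]
  exact abs_integral_le_integral_abs.trans <| integral_mono (hΨint.sub (hint.const_mul L)).abs
    ((hint.const_mul η).add (hdist.const_mul _)) hpt

lemma tendsto_integral_mul_pow_div (hw0 : ∀ x, 0 ≤ w x) (hw1 : ∀ x, w x ≤ 1)
    (hw : Integrable w μ) (hΨ : Integrable (fun x => Ψ x * w x) μ)
    (hloc : ∀ η > 0, ∃ δ < 1, ∀ x, δ < w x → |Ψ x - L| ≤ η)
    (hpos : ∀ δ < 1, μ {x | δ < w x} ≠ 0) :
    Tendsto (fun t : ℕ => (∫ x, Ψ x * w x ^ t ∂μ) / ∫ x, w x ^ t ∂μ) atTop (𝓝 L) := by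
  rw [← tendsto_add_atTop_iff_nat 1, Metric.tendsto_nhds]
  intro ε hε
  obtain ⟨δ₀, hδ₀, hloc₀⟩ := hloc (ε / 2) (by positivity)
  have hδ : max δ₀ 0 < 1 := max_lt hδ₀ one_pos
  have hloc' (x : X) (hx : max δ₀ 0 < w x) : |Ψ x - L| ≤ ε / 2 :=
    hloc₀ x ((le_max_left _ _).trans_lt hx)
  have hlim := (tendsto_pow_div_integral_pow hw0 hw1 hw hpos (le_max_right δ₀ 0) hδ).mul_const
    (∫ x, |Ψ x * w x - L * w x| ∂μ)
  rw [zero_mul] at hlim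
  filter_upwards [hlim.eventually_lt_const (half_pos hε)] with t ht
  have hI := integral_pow_pos hw0 hw1 hw hpos t
  have hbound := abs_integral_mul_pow_sub_le hw0 hw1 hw hΨ (half_pos hε).le
    (le_max_right δ₀ 0) hloc' t
  rw [div_mul_eq_mul_div, div_lt_iff₀ hI] at ht
  rw [Real.dist_eq, div_sub' hI.ne', abs_div, abs_of_pos hI, div_lt_iff₀ hI, mul_comm _ L]
  linarith

lemma exists_superlevel_subset {Y : Type*} [TopologicalSpace Y] {w : Y → ℝ} {U : Set Y}
    (hw : Continuous w) (hw1 : ∀ x, w x ≤ 1) (hK : IsCompact {x | 1 / 2 ≤ w x})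
    (hU : IsOpen U) (hmem : ∀ x, w x = 1 → x ∈ U) : ∃ δ < 1, {x | δ < w x} ⊆ U := by
  rcases Set.eq_empty_or_nonempty ({x | 1 / 2 ≤ w x} ∩ Uᶜ) with hempty | hne
  · refine ⟨1 / 2, by norm_num, fun x (hx : 1 / 2 < w x) => ?_⟩
    by_contra hfar
    exact (Set.ext_iff.1 hempty x).1 ⟨hx.le, hfar⟩
  · obtain ⟨y, hy, hmax⟩ :=
      (hK.inter_right hU.isClosed_compl).exists_isMaxOn hne hw.continuousOn
    have hy1 : w y < 1 := (hw1 y).lt_of_ne fun h => hy.2 (hmem y h)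
    refine ⟨max (1 / 2) (w y), max_lt (by norm_num) hy1, fun x (hx : _ < w x) => ?_⟩
    by_contra hfar
    exact ((le_max_right _ _).trans_lt hx).not_ge
      (isMaxOn_iff.1 hmax x ⟨((le_max_left _ _).trans_lt hx).le, hfar⟩)

lemma exists_superlevel_abs_sub_le {Y : Type*} [TopologicalSpace Y] {w Ψ : Y → ℝ} {L : ℝ}
    (hw : Continuous w) (hw1 : ∀ x, w x ≤ 1) (hK : IsCompact {x | 1 / 2 ≤ w x})
    (hΨ : ∀ x, w x = 1 → Tendsto Ψ (𝓝 x) (𝓝 L)) {η : ℝ} (hη : 0 < η) :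
    ∃ δ < 1, ∀ x, δ < w x → |Ψ x - L| ≤ η := by
  obtain ⟨δ, hδ, hsub⟩ := exists_superlevel_subset hw hw1 hK
    (isOpen_interior (s := {x | |Ψ x - L| ≤ η})) fun x hx => mem_interior_iff_mem_nhds.2
      ((hΨ x hx).eventually (Metric.closedBall_mem_nhds L hη))
  exact ⟨δ, hδ, fun x hx => interior_subset (s := {x | |Ψ x - L| ≤ η}) (hsub hx)⟩

end Laplace

section MulExpOneSub

lemma mul_exp_one_sub_le_one (x : ℝ) : x * Real.exp (1 - x) ≤ 1 := by
  have hle := Real.add_one_le_exp (x - 1)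
  have hinv : Real.exp (x - 1) * Real.exp (1 - x) = 1 := by rw [← Real.exp_add]; simp
  nlinarith [Real.exp_pos (1 - x)]

lemma eq_one_of_mul_exp_one_sub_eq_one {x : ℝ} (h : x * Real.exp (1 - x) = 1) : x = 1 := by
  by_contra hx
  have hlt := Real.add_one_lt_exp (x := x - 1) (sub_ne_zero.mpr hx)
  have hinv : Real.exp (x - 1) * Real.exp (1 - x) = 1 := by rw [← Real.exp_add]; simp
  nlinarith [Real.exp_pos (1 - x)]

lemma mul_exp_one_sub_le (x : ℝ) : x * Real.exp (1 - x) ≤ 2 * Real.exp (-(x / 2)) := by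
  have hle := Real.add_one_le_exp (x / 2 - 1)
  have hexp : Real.exp (x / 2 - 1) * Real.exp (1 - x) = Real.exp (-(x / 2)) := by
    rw [← Real.exp_add]; congr 1; ring
  nlinarith [Real.exp_pos (1 - x)]

end MulExpOneSub

lemma eq_one_of_prod_eq_one {ι : Type*} [Fintype ι] {f : ι → ℝ} (h0 : ∀ i, 0 ≤ f i)
    (h1 : ∀ i, f i ≤ 1) (h : ∏ i, f i = 1) (i : ι) : f i = 1 := by
  classical
  refine (h1 i).antisymm (h.ge.trans ?_)
  rw [← Finset.mul_prod_erase _ _ (Finset.mem_univ i)]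
  exact mul_le_of_le_one_right (h0 i) (Finset.prod_le_one (fun j _ => h0 j) fun j _ => h1 j)

section NormalizedGramWeight

variable {ι κ : Type*} [Fintype ι] [Fintype κ] [DecidableEq κ]

/-- The Gram weight `det(G*G) e^{-tr G*G}` rescaled to have maximum `1`, which is attained exactly
at the isometries. -/
def normalizedGramWeight (G : Matrix ι κ ℂ) : ℝ :=
  Real.exp (Fintype.card κ) * gramWeight 1 G

lemma normalizedGramWeight_nonneg (G : Matrix ι κ ℂ) : 0 ≤ normalizedGramWeight G :=
  mul_nonneg (Real.exp_pos _).le (gramWeight_nonneg _ _)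

lemma normalizedGramWeight_pow (t : ℕ) (G : Matrix ι κ ℂ) :
    normalizedGramWeight G ^ t = Real.exp (Fintype.card κ * t) * gramWeight t G := by
  simp only [normalizedGramWeight, gramWeight, mul_pow, pow_one, ← Real.exp_nat_mul, Nat.cast_one]
  ring_nf

lemma continuous_normalizedGramWeight :
    Continuous (normalizedGramWeight : Matrix ι κ ℂ → ℝ) :=
  continuous_const.mul (continuous_gramWeight 1)

lemma frobeniusSq_eq_sum_eigenvalues (G : Matrix ι κ ℂ) :
    frobeniusSq G = ∑ i, (isHermitian_conjTranspose_mul_self G).eigenvalues i := by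
  apply Complex.ofReal_injective
  rw [frobeniusSq_eq_trace, (isHermitian_conjTranspose_mul_self G).trace_eq_sum_eigenvalues]
  push_cast; rfl

open scoped ComplexOrder in
lemma eigenvalues_gram_nonneg (G : Matrix ι κ ℂ) (i : κ) :
    0 ≤ (isHermitian_conjTranspose_mul_self G).eigenvalues i :=
  (posSemidef_conjTranspose_mul_self G).eigenvalues_nonneg i

lemma normalizedGramWeight_eq_prod_eigenvalues (G : Matrix ι κ ℂ) :
    normalizedGramWeight G = ∏ i, (isHermitian_conjTranspose_mul_self G).eigenvalues i *
      Real.exp (1 - (isHermitian_conjTranspose_mul_self G).eigenvalues i) := by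
  set hH := isHermitian_conjTranspose_mul_self G
  have hdet : ‖(Gᴴ * G).det‖ = ∏ i, hH.eigenvalues i := by
    rw [hH.det_eq_prod_eigenvalues, norm_prod]
    exact Finset.prod_congr rfl fun i _ => RCLike.norm_of_nonneg (eigenvalues_gram_nonneg G i)
  rw [normalizedGramWeight, gramWeight, hdet, frobeniusSq_eq_sum_eigenvalues,
    Finset.prod_mul_distrib, ← Real.exp_sum, Finset.sum_sub_distrib, sub_eq_add_neg, Real.exp_add]
  simp only [pow_one, Nat.cast_one, one_mul, Finset.sum_const, Finset.card_univ, nsmul_eq_mul,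
    mul_one]
  ring

lemma normalizedGramWeight_le_one (G : Matrix ι κ ℂ) : normalizedGramWeight G ≤ 1 := by
  rw [normalizedGramWeight_eq_prod_eigenvalues]
  exact Finset.prod_le_one
    (fun i _ => mul_nonneg (eigenvalues_gram_nonneg G i) (Real.exp_pos _).le)
    fun i _ => mul_exp_one_sub_le_one _

lemma normalizedGramWeight_le_exp (G : Matrix ι κ ℂ) :
    normalizedGramWeight G ≤ 2 ^ Fintype.card κ * Real.exp (-(frobeniusSq G / 2)) := by
  rw [normalizedGramWeight_eq_prod_eigenvalues, frobeniusSq_eq_sum_eigenvalues]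
  refine (Finset.prod_le_prod
    (fun i _ => mul_nonneg (eigenvalues_gram_nonneg G i) (Real.exp_pos _).le)
    fun i _ => mul_exp_one_sub_le _).trans_eq ?_
  rw [Finset.prod_mul_distrib, ← Real.exp_sum, Finset.sum_neg_distrib, Finset.sum_div,
    Finset.prod_const, Finset.card_univ]

lemma normalizedGramWeight_eq_one_iff (G : Matrix ι κ ℂ) :
    normalizedGramWeight G = 1 ↔ Gᴴ * G = 1 := by
  set hH := isHermitian_conjTranspose_mul_self G
  constructor <;> intro h
  · rw [normalizedGramWeight_eq_prod_eigenvalues] at h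
    have heig (i : κ) : hH.eigenvalues i = 1 :=
      eq_one_of_mul_exp_one_sub_eq_one <| eq_one_of_prod_eq_one
        (fun i => mul_nonneg (eigenvalues_gram_nonneg G i) (Real.exp_pos _).le)
        (fun _ => mul_exp_one_sub_le_one _) h i
    have hdiag : (diagonal (RCLike.ofReal ∘ hH.eigenvalues) : Matrix κ κ ℂ) = 1 := by
      rw [← diagonal_one]
      congr 1
      ext i
      simp [heig i]
    rw [hH.spectral_theorem, hdiag, map_one]
  · have htrace : frobeniusSq G = Fintype.card κ := by
      have := frobeniusSq_eq_trace G
      rw [h, trace_one] at this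
      exact_mod_cast this
    rw [normalizedGramWeight, gramWeight, h, htrace, det_one, ← Real.exp_zero]
    simp [← Real.exp_add]

end NormalizedGramWeight

section RectangularMatrices

lemma continuous_normalizedGramWeight_of (a n : ℕ) :
    Continuous fun M : Fin a → Fin n → ℂ => normalizedGramWeight (of M) :=
  continuous_normalizedGramWeight.comp continuous_id

lemma frobeniusSq_le_of_half_le {ι κ : Type*} [Fintype ι] [Fintype κ] [DecidableEq κ]
    {G : Matrix ι κ ℂ} (hG : 1 / 2 ≤ normalizedGramWeight G) :
    frobeniusSq G ≤ 2 * ((Fintype.card κ + 1) * Real.log 2) := by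
  have hle := Real.log_le_log (by norm_num) (hG.trans (normalizedGramWeight_le_exp G))
  rw [Real.log_mul (by positivity) (Real.exp_pos _).ne', Real.log_exp, Real.log_pow, one_div,
    Real.log_inv] at hle
  linarith

lemma isCompact_half_le_normalizedGramWeight (a n : ℕ) :
    IsCompact {M : Fin a → Fin n → ℂ | 1 / 2 ≤ normalizedGramWeight (of M)} := by
  refine Metric.isCompact_of_isClosed_isBounded
    (isClosed_le continuous_const (continuous_normalizedGramWeight_of a n)) ?_
  refine isBounded_iff_forall_norm_le.2 ⟨√(2 * ((n + 1) * Real.log 2)), fun M hM => ?_⟩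
  refine Real.le_sqrt_of_sq_le ((norm_sq_le_frobeniusSq M).trans ?_)
  simpa only [Fintype.card_fin] using frobeniusSq_le_of_half_le hM

lemma integrable_exp_neg_half_norm_sq : Integrable fun z : ℂ => Real.exp (-(‖z‖ ^ 2 / 2)) := by
  have hG := GaussianFourier.integrable_cexp_neg_mul_sq_norm_add (V := ℂ) (b := 1 / 2)
    (by norm_num) 0 0
  refine hG.norm.congr (ae_of_all _ fun z => ?_)
  have hreal : -(1 / 2) * (‖z‖ : ℂ) ^ 2 = (-(‖z‖ ^ 2 / 2) : ℝ) := by push_cast; ring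
  simp only [zero_mul, add_zero, Complex.norm_exp, hreal, Complex.ofReal_re]

lemma integrable_exp_neg_half_frobeniusSq (a n : ℕ) :
    Integrable fun M : Fin a → Fin n → ℂ => Real.exp (-(frobeniusSq (of M) / 2)) := by
  have hrow : Integrable fun v : Fin n → ℂ => ∏ j, Real.exp (-(‖v j‖ ^ 2 / 2)) :=
    Integrable.fintype_prod fun _ => integrable_exp_neg_half_norm_sq
  refine (Integrable.fintype_prod (ι := Fin a) fun _ => hrow).congr (ae_of_all _ fun M => ?_)
  simp only [← Real.exp_sum, frobeniusSq, of_apply, Finset.sum_neg_distrib, Finset.sum_div]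

lemma integrable_normalizedGramWeight (a n : ℕ) :
    Integrable fun M : Fin a → Fin n → ℂ => normalizedGramWeight (of M) := by
  refine ((integrable_exp_neg_half_frobeniusSq a n).const_mul (2 ^ n)).mono'
    (continuous_normalizedGramWeight_of a n).aestronglyMeasurable (ae_of_all _ fun M => ?_)
  rw [Real.norm_of_nonneg (normalizedGramWeight_nonneg _)]
  simpa only [Fintype.card_fin] using normalizedGramWeight_le_exp (of M)

/-- The isometry `[[1], [0]]` including the first `n` coordinates into `n + k`. -/
def standardIsometry (n k : ℕ) : Matrix (Fin (n + k)) (Fin n) ℂ :=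
  (1 : Matrix (Fin (n + k)) (Fin (n + k)) ℂ).submatrix id (Fin.castAdd k)

lemma standardIsometry_isometry (n k : ℕ) :
    (standardIsometry n k)ᴴ * standardIsometry n k = 1 := by
  rw [standardIsometry, conjTranspose_submatrix, conjTranspose_one,
    ← submatrix_mul _ _ _ _ _ Function.bijective_id, Matrix.one_mul]
  exact submatrix_one _ (Fin.castAdd_injective n k)

lemma volume_superlevel_normalizedGramWeight_ne_zero (n k : ℕ) {δ : ℝ} (hδ : δ < 1) :
    volume {M : Fin (n + k) → Fin n → ℂ | δ < normalizedGramWeight (of M)} ≠ 0 := by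
  have hopen : IsOpen {M : Fin (n + k) → Fin n → ℂ | δ < normalizedGramWeight (of M)} :=
    isOpen_lt continuous_const (continuous_normalizedGramWeight_of _ _)
  refine (hopen.measure_pos volume ⟨of.symm (standardIsometry n k), ?_⟩).ne'
  rwa [Set.mem_ofPred_eq, Equiv.apply_symm_apply,
    (normalizedGramWeight_eq_one_iff _).2 (standardIsometry_isometry n k)]

lemma tendsto_integral_mul_normalizedGramWeight_pow_div {n k : ℕ} {L C : ℝ}
    {Ψ : (Fin (n + k) → Fin n → ℂ) → ℝ} (hΨ : Continuous Ψ) (hC : ∀ M, |Ψ M| ≤ C)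
    (hL : ∀ M, (of M)ᴴ * of M = 1 → Ψ M = L) :
    Tendsto (fun t : ℕ => (∫ M, Ψ M * normalizedGramWeight (of M) ^ t) /
      ∫ M : Fin (n + k) → Fin n → ℂ, normalizedGramWeight (of M) ^ t) atTop (𝓝 L) :=
  tendsto_integral_mul_pow_div (fun _ => normalizedGramWeight_nonneg _)
    (fun _ => normalizedGramWeight_le_one _) (integrable_normalizedGramWeight _ _)
    ((integrable_normalizedGramWeight _ _).bdd_mul hΨ.aestronglyMeasurable (ae_of_all _ hC))
    (fun _ => exists_superlevel_abs_sub_le (continuous_normalizedGramWeight_of _ _)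
      (fun _ => normalizedGramWeight_le_one _) (isCompact_half_le_normalizedGramWeight _ _)
      fun M hM => hL M ((normalizedGramWeight_eq_one_iff _).1 hM) ▸ hΨ.tendsto M)
    fun _ => volume_superlevel_normalizedGramWeight_ne_zero n k

end RectangularMatrices

/-! ### Haar measure as the limit of the weighted ensembles -/

section Haar

lemma isMulRightInvariant_of_isMulLeftInvariant {G : Type*} [Group G] [MeasurableSpace G]
    [MeasurableMul₂ G] [MeasurableInv G] (μ : Measure G) [IsProbabilityMeasure μ]
    [μ.IsMulLeftInvariant] : μ.IsMulRightInvariant := by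
  have hsnd : MeasurePreserving (fun p : G × G => p.1⁻¹) (μ.prod μ) μ :=
    measurePreserving_snd.comp (measurePreserving_mul_prod_inv μ μ)
  have hinv : μ.inv = μ := by
    rw [Measure.inv, ← (measurePreserving_fst (μ := μ) (ν := μ)).map_eq,
      Measure.map_map measurable_inv measurable_fst]
    exact hsnd.map_eq.trans (measurePreserving_fst (μ := μ) (ν := μ)).map_eq.symm
  rw [← hinv]
  infer_instance

instance borelSpace_matrix (m : ℕ) : BorelSpace (Matrix (Fin m) (Fin m) ℂ) :=
  inferInstanceAs (BorelSpace (Fin m → Fin m → ℂ))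

instance secondCountableTopology_matrix (m : ℕ) :
    SecondCountableTopology (Matrix (Fin m) (Fin m) ℂ) :=
  inferInstanceAs (SecondCountableTopology (Fin m → Fin m → ℂ))

instance secondCountableTopology_unitaryGroup (m : ℕ) :
    SecondCountableTopology (unitaryGroup (Fin m) ℂ) :=
  TopologicalSpace.Subtype.secondCountableTopology _

variable {m n : ℕ}

lemma continuous_leftMul_unitaryGroup :
    Continuous fun p : unitaryGroup (Fin m) ℂ × (Fin m → Fin n → ℂ) =>
      leftMul (Fin n) p.1.val p.2 :=
  (continuous_subtype_val.comp continuous_fst).matrix_mul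
    (B := fun p : unitaryGroup (Fin m) ℂ × (Fin m → Fin n → ℂ) => of p.2) continuous_snd

lemma conjTranspose_mul_self_unitaryGroup (U : unitaryGroup (Fin m) ℂ) : U.valᴴ * U.val = 1 :=
  mem_unitaryGroup_iff'.1 U.2

variable (ℙ : Measure (unitaryGroup (Fin m) ℂ)) {φ : (Fin m → Fin n → ℂ) → ℝ} {C : ℝ}

/-- The average `M ↦ 𝔼[φ(UM)]` of a function of rectangular matrices over left multiplication by
random unitary matrices. -/
def unitaryAverage (φ : (Fin m → Fin n → ℂ) → ℝ) (M : Fin m → Fin n → ℂ) : ℝ :=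
  ∫ U, φ (leftMul (Fin n) U.val M) ∂ℙ

lemma unitaryAverage_leftMul [ℙ.IsMulRightInvariant] (φ : (Fin m → Fin n → ℂ) → ℝ)
    (V : unitaryGroup (Fin m) ℂ) (M : Fin m → Fin n → ℂ) :
    unitaryAverage ℙ φ (leftMul (Fin n) V.val M) = unitaryAverage ℙ φ M := by
  rw [unitaryAverage, unitaryAverage,
    ← integral_mul_right_eq_self (fun U => φ (leftMul (Fin n) U.val M)) V]
  refine integral_congr_ae (ae_of_all _ fun U => congrArg φ (of.injective ?_))
  simp only [of_leftMul, UnitaryGroup.mul_val, Matrix.mul_assoc]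

variable [IsProbabilityMeasure ℙ]

lemma abs_unitaryAverage_le (hC : ∀ M, |φ M| ≤ C) (M : Fin m → Fin n → ℂ) :
    |unitaryAverage ℙ φ M| ≤ C := by
  simpa only [unitaryAverage, Real.norm_eq_abs, probReal_univ, mul_one] using
    norm_integral_le_of_norm_le_const (μ := ℙ)
      (f := fun U => φ (leftMul (Fin n) U.val M)) (ae_of_all _ fun U => hC _)

lemma continuous_unitaryAverage (hφ : Continuous φ) (hC : ∀ M, |φ M| ≤ C) :
    Continuous (unitaryAverage ℙ φ) := by
  have hcont := hφ.comp continuous_leftMul_unitaryGroup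
  exact continuous_of_dominated (bound := fun _ => C)
    (fun M => (hcont.comp (Continuous.prodMk_left M)).aestronglyMeasurable)
    (fun M => ae_of_all _ fun U => hC _) (integrable_const _)
    (ae_of_all _ fun U => hcont.comp (Continuous.prodMk_right U))

lemma integral_unitaryAverage_mul {w : (Fin m → Fin n → ℂ) → ℝ} (hφ : Continuous φ)
    (hC : ∀ M, |φ M| ≤ C) (hw : Integrable w)
    (hinv : ∀ (U : unitaryGroup (Fin m) ℂ) M, w (leftMul (Fin n) U.val M) = w M) :
    ∫ M, unitaryAverage ℙ φ M * w M = ∫ M, φ M * w M := by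
  have hcont := hφ.comp (continuous_leftMul_unitaryGroup (m := m) (n := n))
  have hint : Integrable (fun p : (Fin m → Fin n → ℂ) × unitaryGroup (Fin m) ℂ =>
      φ (leftMul (Fin n) p.2.val p.1) * w p.1) (volume.prod ℙ) :=
    (hw.comp_fst ℙ).bdd_mul (hcont.comp continuous_swap).aestronglyMeasurable
      (ae_of_all _ fun p => hC _)
  have hrot (U : unitaryGroup (Fin m) ℂ) :
      ∫ M, φ (leftMul (Fin n) U.val M) * w M = ∫ M, φ M * w M := by
    have hmp := measurePreserving_leftMul (κ := Fin n) (conjTranspose_mul_self_unitaryGroup U)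
    have hmeas : AEStronglyMeasurable (fun M => φ M * w M) (volume.map (leftMul (Fin n) U.val)) :=
      hmp.map_eq.symm ▸ hφ.aestronglyMeasurable.mul hw.aestronglyMeasurable
    conv_rhs => rw [← hmp.map_eq, integral_map hmp.aemeasurable hmeas]
    simp only [hinv]
  simp only [unitaryAverage, ← integral_mul_const]
  rw [integral_integral_swap hint]
  simp only [hrot, integral_const, probReal_univ, one_smul]

end Haar

section HaarLimit

variable {n k : ℕ} (ℙ : Measure (unitaryGroup (Fin (n + k)) ℂ)) [IsProbabilityMeasure ℙ]
  [ℙ.IsMulLeftInvariant] {φ : (Fin (n + k) → Fin n → ℂ) → ℝ} {C : ℝ}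

lemma exists_leftMul_standardIsometry_eq {M : Fin (n + k) → Fin n → ℂ}
    (hM : (of M)ᴴ * of M = 1) : ∃ V : unitaryGroup (Fin (n + k)) ℂ,
      leftMul (Fin n) V.val (of.symm (standardIsometry n k)) = M := by
  obtain ⟨V, hV⟩ := exists_unitary_extending_isometry (Fin.castAddEmb k) hM
  refine ⟨V, of.injective ?_⟩
  rw [of_leftMul, Equiv.apply_symm_apply, ← hV]
  exact mul_submatrix_one (Equiv.refl _) (Fin.castAdd k) V.val

lemma tendsto_integral_mul_normalizedGramWeight_pow_div_unitaryAverage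
    (hφ : Continuous φ) (hC : ∀ M, |φ M| ≤ C) :
    Tendsto (fun t : ℕ => (∫ M, φ M * normalizedGramWeight (of M) ^ t) /
      ∫ M : Fin (n + k) → Fin n → ℂ, normalizedGramWeight (of M) ^ t) atTop
      (𝓝 (unitaryAverage ℙ φ (of.symm (standardIsometry n k)))) := by
  have := isMulRightInvariant_of_isMulLeftInvariant ℙ
  have hisom (M : Fin (n + k) → Fin n → ℂ) (hM : (of M)ᴴ * of M = 1) :
      unitaryAverage ℙ φ M = unitaryAverage ℙ φ (of.symm (standardIsometry n k)) := by
    obtain ⟨V, rfl⟩ := exists_leftMul_standardIsometry_eq hM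
    exact unitaryAverage_leftMul ℙ φ V _
  refine (tendsto_integral_mul_normalizedGramWeight_pow_div (continuous_unitaryAverage ℙ hφ hC)
    (abs_unitaryAverage_le ℙ hC) hisom).congr' ?_
  filter_upwards [eventually_gt_atTop 0] with t ht
  obtain ⟨t, rfl⟩ := Nat.exists_eq_add_of_lt ht
  rw [integral_unitaryAverage_mul ℙ hφ hC]
  · exact integrable_pow_of_le_one (fun _ => normalizedGramWeight_nonneg _)
      (fun _ => normalizedGramWeight_le_one _) (integrable_normalizedGramWeight _ _) _
  · intro U M
    rw [of_leftMul, normalizedGramWeight,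
      gramWeight_isometry_mul 1 (conjTranspose_mul_self_unitaryGroup U), ← normalizedGramWeight]

end HaarLimit

section TopBlock

variable {n k : ℕ}

lemma measurePreserving_append (n k : ℕ) (α : Type*) [MeasureSpace α]
    [SigmaFinite (volume : Measure α)] :
    MeasurePreserving fun p : (Fin n → α) × (Fin k → α) => Fin.append p.1 p.2 := by
  have hcomp := (volume_preserving_arrowCongr' finSumFinEquiv (.refl α)
    (MeasurePreserving.id volume)).comp
      (volume_measurePreserving_sumPiEquivProdPi (fun _ : Fin n ⊕ Fin k => α)).symm
  have happend : (fun p : (Fin n → α) × (Fin k → α) => Fin.append p.1 p.2) =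
      MeasurableEquiv.arrowCongr' finSumFinEquiv (.refl α) ∘
        (MeasurableEquiv.sumPiEquivProdPi (fun _ : Fin n ⊕ Fin k => α)).symm := by
    funext p i
    change Fin.append p.1 p.2 i =
      Sum.rec (motive := fun _ => α) p.1 p.2 (finSumFinEquiv.symm i)
    refine Fin.addCases (fun i => ?_) (fun i => ?_) i <;> simp
  exact happend ▸ hcomp

/-- The square matrix formed by the first `n` rows. -/
def topBlock (M : Fin (n + k) → Fin n → ℂ) : Matrix (Fin n) (Fin n) ℂ :=
  of fun i => M (Fin.castAdd k i)

lemma continuous_lowerCoeffs_charpoly_topBlock :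
    Continuous fun M : Fin (n + k) → Fin n → ℂ => lowerCoeffs n (topBlock M).charpoly :=
  (ContinuousCoeffs.charpoly
    (continuous_pi fun i => continuous_apply (Fin.castAdd k i))).lowerCoeffs n

lemma gramWeight_append (t : ℕ) (A : Fin n → Fin n → ℂ) (B : Fin k → Fin n → ℂ) :
    gramWeight t (of (Fin.append A B)) = gramWeight t (fromRows (of B) (of A)) := by
  rw [← gramWeight_submatrix t (finSumFinEquiv.symm.trans (Equiv.sumComm _ _)) (Equiv.refl _)
    (fromRows (of B) (of A))]
  congr 1
  ext i j
  refine Fin.addCases (fun i => ?_) (fun i => ?_) i <;> simp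

lemma exists_lintegral_topBlock_gramWeight (t n k : ℕ) :
    ∃ c : ℝ≥0∞, ∀ g : (Fin n → ℂ) → ℝ≥0∞, Measurable g →
      ∫⁻ M : Fin (n + k) → Fin n → ℂ,
        g (lowerCoeffs n (topBlock M).charpoly) * ENNReal.ofReal (gramWeight t (of M)) =
      c * ∫⁻ ζ, g (vieta ζ) * eigenvalueWeight t k ζ := by
  obtain ⟨c, hc⟩ := hasEigenvalueLaw t k n
  refine ⟨c, fun g hg => ?_⟩
  have hweight : Continuous fun M : Fin (n + k) → Fin n → ℂ => gramWeight t (of M) :=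
    (continuous_gramWeight t).comp continuous_id
  have hmeas : Measurable fun M : Fin (n + k) → Fin n → ℂ =>
      g (lowerCoeffs n (topBlock M).charpoly) * ENNReal.ofReal (gramWeight t (of M)) :=
    (hg.comp continuous_lowerCoeffs_charpoly_topBlock.measurable).mul
      hweight.measurable.ennreal_ofReal
  rw [← hc g hg, ← (measurePreserving_append n k (Fin n → ℂ)).lintegral_comp hmeas]
  refine lintegral_congr fun p => ?_
  have htop : topBlock (Fin.append p.1 p.2) = of p.1 := by ext i j; simp [topBlock]
  rw [htop, gramWeight_append]

end TopBlock

/-! ### Radial integrals -/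

section RadialIntegrals

lemma lintegral_Ioi_comp_sq (F : ℝ → ℝ≥0∞) :
    ∫⁻ r in Set.Ioi (0 : ℝ), ENNReal.ofReal (2 * r) * F (r ^ 2) = ∫⁻ s in Set.Ioi (0 : ℝ), F s := by
  have himage : (fun r : ℝ => r ^ 2) '' Set.Ioi 0 = Set.Ioi 0 := by
    ext s
    constructor
    · rintro ⟨r, hr, rfl⟩
      exact pow_pos (Set.mem_Ioi.1 hr) 2
    · exact fun hs => ⟨√s, Real.sqrt_pos.2 hs, Real.sq_sqrt (le_of_lt hs)⟩
  have hinj : Set.InjOn (fun r : ℝ => r ^ 2) (Set.Ioi 0) := fun x hx y hy h =>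
    (pow_left_inj₀ (le_of_lt hx) (le_of_lt hy) two_ne_zero).1 h
  have hchange := lintegral_image_eq_lintegral_abs_deriv_mul measurableSet_Ioi
    (fun x _ => (hasDerivAt_pow 2 x).hasDerivWithinAt) hinj F
  rw [himage] at hchange
  rw [hchange]
  refine setLIntegral_congr_fun measurableSet_Ioi fun r hr => ?_
  have hr' : 0 < r := hr
  simp [abs_of_pos hr']

lemma lintegral_comp_norm_sq {F : ℝ → ℝ≥0∞} (hF : Measurable F) :
    ∫⁻ z : ℂ, F (‖z‖ ^ 2) = ENNReal.ofReal Real.pi * ∫⁻ s in Set.Ioi (0 : ℝ), F s := by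
  have hmeas : Measurable fun r : ℝ => ENNReal.ofReal r * F (|r| ^ 2) :=
    ENNReal.measurable_ofReal.mul (hF.comp (by fun_prop))
  have hmeas' : Measurable fun p : ℝ × ℝ => ENNReal.ofReal p.1 * F (|p.1| ^ 2) :=
    hmeas.comp measurable_fst
  have hradial : ∫⁻ s in Set.Ioi (0 : ℝ), F s =
      2 * ∫⁻ r in Set.Ioi (0 : ℝ), ENNReal.ofReal r * F (|r| ^ 2) := by
    rw [← lintegral_Ioi_comp_sq, ← lintegral_const_mul _ hmeas]
    refine lintegral_congr fun r => ?_
    rw [sq_abs, ENNReal.ofReal_mul zero_le_two, ENNReal.ofReal_ofNat, mul_assoc]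
  have htwoPi : ENNReal.ofReal (Real.pi - -Real.pi) = ENNReal.ofReal Real.pi * 2 := by
    rw [sub_neg_eq_add, ← mul_two, ENNReal.ofReal_mul Real.pi_pos.le, ENNReal.ofReal_ofNat]
  rw [← Complex.lintegral_comp_polarCoord_symm, hradial, polarCoord_target,
    Measure.volume_eq_prod, ← Measure.prod_restrict]
  simp only [Complex.norm_polarCoord_symm, smul_eq_mul]
  rw [lintegral_prod _ hmeas'.aemeasurable]
  simp only [lintegral_const, Measure.restrict_apply_univ, Real.volume_Ioo]
  rw [lintegral_mul_const _ hmeas, htwoPi, mul_comm, mul_assoc]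

/-- The truncated power `(R - a)₊ ^ k`, with value `0` at `R = a` also for `k = 0`. -/
def truncatedPow (k : ℕ) (a R : ℝ) : ℝ := if a < R then (R - a) ^ k else 0

lemma truncatedPow_nonneg (k : ℕ) (a R : ℝ) : 0 ≤ truncatedPow k a R := by
  unfold truncatedPow
  split_ifs with h
  · exact pow_nonneg (sub_nonneg.2 h.le) k
  · rfl

lemma measurable_truncatedPow (k : ℕ) : Measurable fun p : ℝ × ℝ => truncatedPow k p.1 p.2 :=
  Measurable.ite (measurableSet_lt measurable_fst measurable_snd) (by fun_prop) measurable_const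

lemma lintegral_Ioi_truncatedPow (k : ℕ) (a R : ℝ) :
    ∫⁻ s in Set.Ioi (0 : ℝ), ENNReal.ofReal (truncatedPow k (a + s) R) =
      ENNReal.ofReal ((k + 1 : ℝ)⁻¹ * truncatedPow (k + 1) a R) := by
  have hindicator (s : ℝ) : ENNReal.ofReal (truncatedPow k (a + s) R) =
      (Set.Iio (R - a)).indicator (fun s => ENNReal.ofReal ((R - a - s) ^ k)) s := by
    simp only [Set.indicator_apply, Set.mem_Iio, truncatedPow, lt_sub_iff_add_lt', sub_sub,
      apply_ite ENNReal.ofReal, ENNReal.ofReal_zero]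
  simp only [hindicator]
  rw [lintegral_indicator measurableSet_Iio, Measure.restrict_restrict measurableSet_Iio,
    Set.inter_comm, Set.Ioi_inter_Iio]
  by_cases h : a < R
  · rw [restrict_Ioo_eq_restrict_Ioc, ← ofReal_integral_eq_lintegral_ofReal
      (Continuous.integrableOn_Ioc (by fun_prop)) ((ae_restrict_iff' measurableSet_Ioc).2
        (ae_of_all _ fun s hs => pow_nonneg (sub_nonneg.2 hs.2) k)),
      ← intervalIntegral.integral_of_le (sub_nonneg.2 h.le),
      intervalIntegral.integral_comp_sub_left (fun x => x ^ k)]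
    simp [truncatedPow, h, div_eq_inv_mul]
  · rw [Set.Ioo_eq_empty (by simpa using h)]
    simp [truncatedPow, h]

lemma lintegral_truncatedPow_norm_sq (k : ℕ) (a R : ℝ) :
    ∫⁻ z : ℂ, ENNReal.ofReal (truncatedPow k (a + ‖z‖ ^ 2) R) =
      ENNReal.ofReal (Real.pi / (k + 1) * truncatedPow (k + 1) a R) := by
  have hmeas : Measurable fun s : ℝ => ENNReal.ofReal (truncatedPow k (a + s) R) :=
    ((measurable_truncatedPow k).comp
      (by fun_prop : Measurable fun s : ℝ => (a + s, R))).ennreal_ofReal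
  rw [lintegral_comp_norm_sq hmeas, lintegral_Ioi_truncatedPow,
    ← ENNReal.ofReal_mul Real.pi_pos.le, div_eq_mul_inv, mul_assoc]

lemma lintegral_comp_add_norm_sq {F : ℝ → ℝ≥0∞} (hF : Measurable F) (a : ℝ) :
    ∫⁻ z : ℂ, F (a + ‖z‖ ^ 2) =
      ENNReal.ofReal Real.pi * ∫⁻ R, ENNReal.ofReal (truncatedPow 0 a R) * F R := by
  rw [lintegral_comp_norm_sq (F := fun s => F (a + s)) (hF.comp (by fun_prop)),
    ← lintegral_indicator measurableSet_Ioi,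
    ← lintegral_add_left_eq_self (fun R => ENNReal.ofReal (truncatedPow 0 a R) * F R) a]
  congr 1
  refine lintegral_congr fun s => ?_
  by_cases hs : 0 < s <;> simp [truncatedPow, hs]

lemma lintegral_comp_add_sum_norm_sq_succ {F : ℝ → ℝ≥0∞} (hF : Measurable F) (k : ℕ) (a : ℝ) :
    ∫⁻ γ : Fin (k + 1) → ℂ, F (a + ∑ i, ‖γ i‖ ^ 2) =
      ∫⁻ z : ℂ, ∫⁻ γ : Fin k → ℂ, F (a + ‖z‖ ^ 2 + ∑ i, ‖γ i‖ ^ 2) := by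
  rw [← lintegral_finSucc (F := fun p : ℂ × (Fin k → ℂ) => F (a + ‖p.1‖ ^ 2 + ∑ i, ‖p.2 i‖ ^ 2))
    (hF.comp (by fun_prop))]
  simp only [Fin.sum_univ_succ, add_assoc]

lemma lintegral_comp_add_sum_norm_sq {F : ℝ → ℝ≥0∞} (hF : Measurable F) (k : ℕ) (a : ℝ) :
    ∫⁻ γ : Fin (k + 1) → ℂ, F (a + ∑ i, ‖γ i‖ ^ 2) =
      ENNReal.ofReal (Real.pi ^ (k + 1) / k.factorial) *
        ∫⁻ R, ENNReal.ofReal (truncatedPow k a R) * F R := by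
  rw [lintegral_comp_add_sum_norm_sq_succ hF]
  induction k generalizing a with
  | zero =>
    simp only [Finset.univ_eq_empty, Finset.sum_empty, add_zero, zero_add, pow_one,
      Nat.factorial_zero, Nat.cast_one, div_one, ← lintegral_comp_add_norm_sq hF a,
      Measure.volume_pi_eq_dirac (ι := Fin 0) 0, lintegral_const, measure_univ, mul_one]
  | succ k ih =>
    have hmeas : Measurable fun p : ℂ × ℝ =>
        ENNReal.ofReal (truncatedPow k (a + ‖p.1‖ ^ 2) p.2) * F p.2 :=
      (((measurable_truncatedPow k).comp
        (by fun_prop : Measurable fun p : ℂ × ℝ => (a + ‖p.1‖ ^ 2, p.2))).ennreal_ofReal).mul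
        (hF.comp measurable_snd)
    have hslice (R : ℝ) : Measurable fun z : ℂ =>
        ENNReal.ofReal (truncatedPow k (a + ‖z‖ ^ 2) R) :=
      ((measurable_truncatedPow k).comp
        (by fun_prop : Measurable fun z : ℂ => (a + ‖z‖ ^ 2, R))).ennreal_ofReal
    simp only [lintegral_comp_add_sum_norm_sq_succ hF, ih]
    rw [lintegral_const_mul' _ _ ENNReal.ofReal_ne_top,
      lintegral_lintegral_swap hmeas.aemeasurable, ← lintegral_const_mul' _ _ ENNReal.ofReal_ne_top,
      ← lintegral_const_mul' _ _ ENNReal.ofReal_ne_top]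
    refine lintegral_congr fun R => ?_
    rw [lintegral_mul_const _ (hslice R), lintegral_truncatedPow_norm_sq, ← mul_assoc, ← mul_assoc,
      ← ENNReal.ofReal_mul (by positivity), ← ENNReal.ofReal_mul (by positivity), ← mul_assoc,
      Nat.factorial_succ, Nat.cast_mul, Nat.cast_succ]
    congr 3
    field

end RadialIntegrals

/-! ### The radial weights as `t → ∞` -/

section NormalizedRadialWeight

/-- The weight `R₊ exp (1 - R)`, normalised so that its maximum, attained at `R = 1` only, is `1`;
its powers concentrate at `1`. -/
def normalizedRadialWeight (R : ℝ) : ℝ := max R 0 * Real.exp (1 - R)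

lemma continuous_normalizedRadialWeight : Continuous normalizedRadialWeight := by
  unfold normalizedRadialWeight
  fun_prop

lemma normalizedRadialWeight_nonneg (R : ℝ) : 0 ≤ normalizedRadialWeight R :=
  mul_nonneg (le_max_right _ _) (Real.exp_pos _).le

lemma normalizedRadialWeight_of_nonneg {R : ℝ} (hR : 0 ≤ R) :
    normalizedRadialWeight R = R * Real.exp (1 - R) := by
  rw [normalizedRadialWeight, max_eq_left hR]

lemma normalizedRadialWeight_of_nonpos {R : ℝ} (hR : R ≤ 0) : normalizedRadialWeight R = 0 := by
  rw [normalizedRadialWeight, max_eq_right hR, zero_mul]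

lemma normalizedRadialWeight_le_one (R : ℝ) : normalizedRadialWeight R ≤ 1 := by
  rcases le_total 0 R with hR | hR
  · exact (normalizedRadialWeight_of_nonneg hR).trans_le (mul_exp_one_sub_le_one R)
  · exact (normalizedRadialWeight_of_nonpos hR).trans_le zero_le_one

lemma normalizedRadialWeight_eq_one_iff {R : ℝ} : normalizedRadialWeight R = 1 ↔ R = 1 := by
  constructor
  · intro h
    rcases le_total 0 R with hR | hR
    · exact eq_one_of_mul_exp_one_sub_eq_one (normalizedRadialWeight_of_nonneg hR ▸ h)
    · exact absurd (normalizedRadialWeight_of_nonpos hR ▸ h) zero_ne_one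
  · rintro rfl
    simp [normalizedRadialWeight]

lemma normalizedRadialWeight_le_exp (R : ℝ) :
    normalizedRadialWeight R ≤ 2 * Real.exp (-(R / 2)) := by
  rcases le_total 0 R with hR | hR
  · exact (normalizedRadialWeight_of_nonneg hR).trans_le (mul_exp_one_sub_le R)
  · exact (normalizedRadialWeight_of_nonpos hR).trans_le (by positivity)

lemma isCompact_half_le_normalizedRadialWeight :
    IsCompact {R | 1 / 2 ≤ normalizedRadialWeight R} := by
  refine (isCompact_Icc (a := (0 : ℝ)) (b := 2 * Real.log 4)).of_isClosed_subset
    (isClosed_le continuous_const continuous_normalizedRadialWeight) fun R hR => ⟨?_, ?_⟩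
  · by_contra! hneg
    rw [Set.mem_ofPred_eq, normalizedRadialWeight_of_nonpos hneg.le] at hR
    norm_num at hR
  · have hexp := hR.out.trans (normalizedRadialWeight_le_exp R)
    have hle : Real.exp (-Real.log 4) ≤ Real.exp (-(R / 2)) := by
      rw [Real.exp_neg, Real.exp_log (by norm_num)]
      linarith
    linarith [Real.exp_le_exp.1 hle]

lemma one_add_pow_le_mul_exp {R : ℝ} (hR : 0 ≤ R) (N : ℕ) :
    (1 + R) ^ N ≤ 4 ^ N * N.factorial * Real.exp ((1 + R) / 4) := by
  have hpow := Real.pow_div_factorial_le_exp ((1 + R) / 4) (by positivity) N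
  rw [div_pow, div_div, div_le_iff₀ (by positivity)] at hpow
  linarith

lemma integrable_one_add_abs_pow_mul_normalizedRadialWeight (N : ℕ) :
    Integrable fun R => (1 + |R|) ^ N * normalizedRadialWeight R := by
  have hcont := continuous_normalizedRadialWeight
  have hdom : IntegrableOn (fun R => (4 ^ N * N.factorial * 2 * Real.exp (1 / 4)) *
      Real.exp (-(1 / 4) * R)) (Set.Ioi 0) :=
    (integrableOn_exp_mul_Ioi (by norm_num) 0).const_mul _
  have hsupp : Function.support (fun R => (1 + |R|) ^ N * normalizedRadialWeight R) ⊆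
      Set.Ioi 0 := fun R hR => by
    by_contra hneg
    exact hR (by simp only [normalizedRadialWeight_of_nonpos (not_lt.1 hneg), mul_zero])
  rw [← integrableOn_iff_integrable_of_support_subset hsupp]
  refine hdom.mono' (by fun_prop) (ae_restrict_of_forall_mem measurableSet_Ioi fun R hR => ?_)
  have hR0 : 0 < R := hR
  rw [Real.norm_of_nonneg (mul_nonneg (by positivity) (normalizedRadialWeight_nonneg R)),
    abs_of_pos hR0]
  calc (1 + R) ^ N * normalizedRadialWeight R
      ≤ (4 ^ N * N.factorial * Real.exp ((1 + R) / 4)) * (2 * Real.exp (-(R / 2))) :=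
        mul_le_mul (one_add_pow_le_mul_exp hR0.le N) (normalizedRadialWeight_le_exp R)
          (normalizedRadialWeight_nonneg R) (by positivity)
    _ = (4 ^ N * N.factorial * 2) * (Real.exp ((1 + R) / 4) * Real.exp (-(R / 2))) := by ring
    _ = (4 ^ N * N.factorial * 2) * (Real.exp (1 / 4) * Real.exp (-(1 / 4) * R)) := by
        rw [← Real.exp_add, ← Real.exp_add]
        ring_nf
    _ = _ := by ring

lemma integrable_normalizedRadialWeight : Integrable normalizedRadialWeight := by
  simpa only [pow_zero, one_mul] using integrable_one_add_abs_pow_mul_normalizedRadialWeight 0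

lemma volume_superlevel_normalizedRadialWeight_ne_zero (δ : ℝ) (hδ : δ < 1) :
    volume {R | δ < normalizedRadialWeight R} ≠ 0 :=
  ((isOpen_lt continuous_const continuous_normalizedRadialWeight).measure_pos volume
    ⟨1, by simpa only [Set.mem_ofPred_eq, normalizedRadialWeight_eq_one_iff.2 rfl]⟩).ne'

lemma integral_normalizedRadialWeight_pow_pos (t : ℕ) :
    0 < ∫ R, normalizedRadialWeight R ^ (t + 1) :=
  integral_pow_pos normalizedRadialWeight_nonneg normalizedRadialWeight_le_one
    integrable_normalizedRadialWeight volume_superlevel_normalizedRadialWeight_ne_zero t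

variable {Ψ : ℝ → ℝ} {N : ℕ}

lemma integrable_mul_normalizedRadialWeight (hΨ : Measurable Ψ) (hb : ∀ R, |Ψ R| ≤ (1 + |R|) ^ N) :
    Integrable fun R => Ψ R * normalizedRadialWeight R := by
  refine (integrable_one_add_abs_pow_mul_normalizedRadialWeight N).mono'
    (hΨ.mul continuous_normalizedRadialWeight.measurable).aestronglyMeasurable
    (ae_of_all _ fun R => ?_)
  rw [norm_mul, Real.norm_of_nonneg (normalizedRadialWeight_nonneg R)]
  exact mul_le_mul_of_nonneg_right (hb R) (normalizedRadialWeight_nonneg R)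

lemma integrable_mul_normalizedRadialWeight_pow (hΨ : Measurable Ψ)
    (hb : ∀ R, |Ψ R| ≤ (1 + |R|) ^ N) (t : ℕ) :
    Integrable fun R => Ψ R * normalizedRadialWeight R ^ (t + 1) :=
  integrable_mul_pow normalizedRadialWeight_nonneg normalizedRadialWeight_le_one
    continuous_normalizedRadialWeight.aestronglyMeasurable
    (integrable_mul_normalizedRadialWeight hΨ hb) t

lemma tendsto_integral_mul_normalizedRadialWeight_pow_div (hΨ : Measurable Ψ)
    (hb : ∀ R, |Ψ R| ≤ (1 + |R|) ^ N) (hcont : ContinuousAt Ψ 1) :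
    Tendsto (fun t : ℕ => (∫ R, Ψ R * normalizedRadialWeight R ^ t) /
      ∫ R, normalizedRadialWeight R ^ t) atTop (𝓝 (Ψ 1)) := by
  refine tendsto_integral_mul_pow_div normalizedRadialWeight_nonneg normalizedRadialWeight_le_one
    integrable_normalizedRadialWeight (integrable_mul_normalizedRadialWeight hΨ hb)
    (fun η hη => exists_superlevel_abs_sub_le continuous_normalizedRadialWeight
      normalizedRadialWeight_le_one isCompact_half_le_normalizedRadialWeight (fun R hR => ?_) hη)
    volume_superlevel_normalizedRadialWeight_ne_zero
  rw [normalizedRadialWeight_eq_one_iff.1 hR]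
  exact hcont

end NormalizedRadialWeight

section AveragedTruncatedPow

lemma measurable_truncatedPow_left (k : ℕ) (a : ℝ) : Measurable (truncatedPow k a) :=
  (measurable_truncatedPow k).comp (by fun_prop : Measurable fun R : ℝ => (a, R))

lemma measurable_truncatedPow_one (k : ℕ) : Measurable fun a => truncatedPow k a 1 :=
  (measurable_truncatedPow k).comp (by fun_prop : Measurable fun a : ℝ => (a, (1 : ℝ)))

lemma one_add_pow_mul_truncatedPow_le (N k : ℕ) {a : ℝ} (ha : 0 ≤ a) (R : ℝ) :
    (1 + a) ^ N * truncatedPow k a R ≤ (1 + |R|) ^ (N + k) := by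
  unfold truncatedPow
  split_ifs with h
  · have hR : 0 < R := ha.trans_lt h
    rw [abs_of_pos hR, pow_add]
    gcongr
    linarith
  · rw [mul_zero]
    positivity

lemma abs_truncatedPow_le (k : ℕ) {a : ℝ} (ha : 0 ≤ a) (R : ℝ) :
    |truncatedPow k a R| ≤ (1 + |R|) ^ k := by
  simpa only [abs_of_nonneg (truncatedPow_nonneg k a R), pow_zero, one_mul, zero_add]
    using one_add_pow_mul_truncatedPow_le 0 k ha R

lemma continuousAt_truncatedPow (k : ℕ) {a R : ℝ} (haR : a ≠ R) :
    ContinuousAt (truncatedPow k a) R := by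
  rcases lt_or_gt_of_ne haR with h | h
  · refine ContinuousAt.congr (f := fun S => (S - a) ^ k) (by fun_prop) ?_
    filter_upwards [lt_mem_nhds h] with S hS using (if_pos hS).symm
  · refine ContinuousAt.congr (f := fun _ => (0 : ℝ)) continuousAt_const ?_
    filter_upwards [gt_mem_nhds h] with S hS using (if_neg hS.not_gt).symm

/-- The average of `R ↦ (R - a)₊ ^ k` against the normalised `t`-th power of
`normalizedRadialWeight`; up to a constant this is `tailWeight t (k + 1) z` at `a = ‖z‖ ^ 2`. -/
def averagedTruncatedPow (k t : ℕ) (a : ℝ) : ℝ :=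
  (∫ R, truncatedPow k a R * normalizedRadialWeight R ^ t) / ∫ R, normalizedRadialWeight R ^ t

lemma averagedTruncatedPow_nonneg (k t : ℕ) (a : ℝ) : 0 ≤ averagedTruncatedPow k t a :=
  div_nonneg
    (integral_nonneg fun R =>
      mul_nonneg (truncatedPow_nonneg k a R) (pow_nonneg (normalizedRadialWeight_nonneg R) t))
    (integral_nonneg fun R => pow_nonneg (normalizedRadialWeight_nonneg R) t)

lemma measurable_averagedTruncatedPow (k t : ℕ) : Measurable (averagedTruncatedPow k t) := by
  have hmeas : Measurable fun p : ℝ × ℝ =>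
      truncatedPow k p.1 p.2 * normalizedRadialWeight p.2 ^ t :=
    (measurable_truncatedPow k).mul
      ((continuous_normalizedRadialWeight.measurable.comp measurable_snd).pow_const t)
  have hint := (hmeas.stronglyMeasurable.integral_prod_right' (ν := volume)).measurable
  exact hint.div_const _

lemma tendsto_averagedTruncatedPow (k : ℕ) {a : ℝ} (ha : 0 ≤ a) (ha1 : a ≠ 1) :
    Tendsto (fun t => averagedTruncatedPow k t a) atTop (𝓝 (truncatedPow k a 1)) :=
  tendsto_integral_mul_normalizedRadialWeight_pow_div (measurable_truncatedPow_left k a)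
    (abs_truncatedPow_le k ha) (continuousAt_truncatedPow k ha1)

lemma exists_one_add_pow_mul_averagedTruncatedPow_le (N k : ℕ) : ∃ B : ℝ, ∀ᶠ t in atTop,
    ∀ a, 0 ≤ a → (1 + a) ^ N * averagedTruncatedPow k t a ≤ B := by
  have hbound (R : ℝ) : |(1 + |R|) ^ (N + k)| ≤ (1 + |R|) ^ (N + k) :=
    (abs_of_nonneg (by positivity)).le
  have hmeas : Measurable fun R : ℝ => (1 + |R|) ^ (N + k) := by fun_prop
  have hlim := tendsto_integral_mul_normalizedRadialWeight_pow_div hmeas hbound (by fun_prop)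
  refine ⟨(1 + |1|) ^ (N + k) + 1, ?_⟩
  filter_upwards [hlim.eventually_lt_const (lt_add_one _), eventually_gt_atTop 0]
    with t ht ht0 a ha
  obtain ⟨t, rfl⟩ := Nat.exists_eq_succ_of_ne_zero ht0.ne'
  refine le_trans ?_ ht.le
  rw [averagedTruncatedPow, ← mul_div_assoc, ← integral_const_mul]
  refine div_le_div_of_nonneg_right (integral_mono
    ((integrable_mul_normalizedRadialWeight_pow (measurable_truncatedPow_left k a)
      (abs_truncatedPow_le k ha) t).const_mul _)
    (integrable_mul_normalizedRadialWeight_pow hmeas hbound t) fun R => ?_)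
    (integral_normalizedRadialWeight_pow_pos t).le
  rw [← mul_assoc]
  exact mul_le_mul_of_nonneg_right (one_add_pow_mul_truncatedPow_le N k ha R)
    (pow_nonneg (normalizedRadialWeight_nonneg R) _)

lemma ofReal_truncatedPow_mul_radialWeight (k t : ℕ) {a : ℝ} (ha : 0 ≤ a) (R : ℝ) :
    ENNReal.ofReal (truncatedPow k a R) * radialWeight t R =
      ENNReal.ofReal (Real.exp (-t) * (truncatedPow k a R * normalizedRadialWeight R ^ t)) := by
  by_cases hR : a < R
  · have hexp : Real.exp (-(t * R)) = Real.exp (-t) * Real.exp (t * (1 - R)) := by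
      rw [← Real.exp_add]
      ring_nf
    rw [radialWeight, ← ENNReal.ofReal_mul (truncatedPow_nonneg k a R),
      normalizedRadialWeight_of_nonneg (ha.trans hR.le), mul_pow, ← Real.exp_nat_mul, hexp]
    ring_nf
  · simp [truncatedPow, hR]

lemma exists_tailWeight_eq (k t : ℕ) : ∃ l : ℝ, 0 ≤ l ∧ ∀ z : ℂ, tailWeight (t + 1) (k + 1) z =
    ENNReal.ofReal (l * averagedTruncatedPow k (t + 1) (‖z‖ ^ 2)) := by
  have hpos := integral_normalizedRadialWeight_pow_pos t
  refine ⟨Real.pi ^ (k + 1) / k.factorial * (Real.exp (-(t + 1 : ℕ)) *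
    ∫ R, normalizedRadialWeight R ^ (t + 1)), by positivity, fun z => ?_⟩
  have ha : 0 ≤ ‖z‖ ^ 2 := by positivity
  have hint := (integrable_mul_normalizedRadialWeight_pow (measurable_truncatedPow_left k (‖z‖ ^ 2))
    (abs_truncatedPow_le k ha) t).const_mul (Real.exp (-(t + 1 : ℕ)))
  have hnonneg (R : ℝ) : 0 ≤ Real.exp (-(t + 1 : ℕ)) *
      (truncatedPow k (‖z‖ ^ 2) R * normalizedRadialWeight R ^ (t + 1)) :=
    mul_nonneg (Real.exp_pos _).le
      (mul_nonneg (truncatedPow_nonneg k _ R) (pow_nonneg (normalizedRadialWeight_nonneg R) _))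
  rw [tailWeight, lintegral_comp_add_sum_norm_sq (measurable_radialWeight (t + 1))]
  simp only [ofReal_truncatedPow_mul_radialWeight k (t + 1) ha]
  rw [← ofReal_integral_eq_lintegral_ofReal hint (ae_of_all _ hnonneg),
    ← ENNReal.ofReal_mul (by positivity), integral_const_mul, averagedTruncatedPow, mul_assoc,
    mul_assoc, mul_div_cancel₀ _ hpos.ne']

end AveragedTruncatedPow

/-! ### Passage to the limit in the eigenvalue law -/

section RadialDensity

variable {n : ℕ} {ρ : ℝ → ℝ}

/-- The density `|Δ(ζ)|² ∏ᵢ ρ(|ζᵢ|²)` of a radially symmetric determinantal ensemble. -/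
def radialDensity (ρ : ℝ → ℝ) (ζ : Fin n → ℂ) : ℝ := vandermondeSq ζ * ∏ i, ρ (‖ζ i‖ ^ 2)

lemma radialDensity_nonneg (hρ : ∀ a, 0 ≤ ρ a) (ζ : Fin n → ℂ) : 0 ≤ radialDensity ρ ζ :=
  mul_nonneg (vandermondeSq_nonneg ζ) (Finset.prod_nonneg fun _ _ => hρ _)

lemma measurable_radialDensity (hρ : Measurable ρ) :
    Measurable (radialDensity ρ : (Fin n → ℂ) → ℝ) :=
  continuous_vandermondeSq.measurable.mul
    (Finset.measurable_fun_prod _ fun i _ => hρ.comp (by fun_prop))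

lemma norm_sub_sq_le (z w : ℂ) : ‖z - w‖ ^ 2 ≤ 2 * ((1 + ‖z‖ ^ 2) * (1 + ‖w‖ ^ 2)) := by
  have hsq : ‖z - w‖ ^ 2 ≤ (‖z‖ + ‖w‖) ^ 2 := by
    gcongr
    exact norm_sub_le z w
  nlinarith [sq_nonneg (‖z‖ - ‖w‖), sq_nonneg (‖z‖ * ‖w‖)]

lemma vandermondeSq_le (ζ : Fin n → ℂ) :
    vandermondeSq ζ ≤ 2 ^ (n * n) * ∏ i, (1 + ‖ζ i‖ ^ 2) ^ (2 * n) := by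
  calc vandermondeSq ζ
      ≤ ∏ p : Fin n × Fin n, 2 * ((1 + ‖ζ p.1‖ ^ 2) * (1 + ‖ζ p.2‖ ^ 2)) := by
        rw [vandermondeSq, Finset.prod_filter]
        refine Finset.prod_le_prod (fun p _ => by split_ifs <;> positivity) fun p _ => ?_
        split_ifs
        · exact norm_sub_sq_le _ _
        · nlinarith [sq_nonneg ‖ζ p.1‖, sq_nonneg ‖ζ p.2‖, sq_nonneg (‖ζ p.1‖ * ‖ζ p.2‖)]
    _ = 2 ^ (n * n) * ∏ i, (1 + ‖ζ i‖ ^ 2) ^ (2 * n) := by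
        simp only [Finset.prod_mul_distrib, Fintype.prod_prod_type, Finset.prod_const,
          Finset.card_univ, Fintype.card_prod, Fintype.card_fin, Finset.prod_pow]
        ring

lemma radialDensity_le {B : ℝ} (hρ : ∀ a, 0 ≤ ρ a)
    (hB : ∀ a, 0 ≤ a → (1 + a) ^ (2 * n + 2) * ρ a ≤ B) (ζ : Fin n → ℂ) :
    radialDensity ρ ζ ≤ 2 ^ (n * n) * B ^ n * ∏ i, ((1 + ‖ζ i‖ ^ 2) ^ 2)⁻¹ := by
  have hfactor (i : Fin n) :
      (1 + ‖ζ i‖ ^ 2) ^ (2 * n) * ρ (‖ζ i‖ ^ 2) ≤ B * ((1 + ‖ζ i‖ ^ 2) ^ 2)⁻¹ := by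
    rw [← div_eq_mul_inv, le_div_iff₀ (by positivity), mul_right_comm, ← pow_add]
    exact hB _ (by positivity)
  calc radialDensity ρ ζ
      ≤ (2 ^ (n * n) * ∏ i, (1 + ‖ζ i‖ ^ 2) ^ (2 * n)) * ∏ i, ρ (‖ζ i‖ ^ 2) :=
        mul_le_mul_of_nonneg_right (vandermondeSq_le ζ) (Finset.prod_nonneg fun _ _ => hρ _)
    _ = 2 ^ (n * n) * ∏ i, (1 + ‖ζ i‖ ^ 2) ^ (2 * n) * ρ (‖ζ i‖ ^ 2) := by
        rw [Finset.prod_mul_distrib, mul_assoc]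
    _ ≤ 2 ^ (n * n) * ∏ i, B * ((1 + ‖ζ i‖ ^ 2) ^ 2)⁻¹ := by
        exact mul_le_mul_of_nonneg_left (Finset.prod_le_prod
          (fun i _ => mul_nonneg (by positivity) (hρ _)) fun i _ => hfactor i) (by positivity)
    _ = 2 ^ (n * n) * B ^ n * ∏ i, ((1 + ‖ζ i‖ ^ 2) ^ 2)⁻¹ := by
        simp only [Finset.prod_mul_distrib, Finset.prod_const, Finset.card_univ, Fintype.card_fin,
          mul_assoc]

lemma integrable_inv_one_add_norm_sq_sq : Integrable fun z : ℂ => ((1 + ‖z‖ ^ 2) ^ 2)⁻¹ := by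
  refine (integrable_rpow_neg_one_add_norm_sq (E := ℂ) (μ := volume) (r := 4)
    (by norm_num [Complex.finrank_real_complex])).congr (ae_of_all _ fun z => ?_)
  dsimp only
  rw [show (-(4 : ℝ) / 2) = -((2 : ℕ) : ℝ) by norm_num, Real.rpow_neg (by positivity),
    Real.rpow_natCast]

lemma integrable_prod_inv_one_add_norm_sq_sq (n : ℕ) :
    Integrable fun ζ : Fin n → ℂ => ∏ i, ((1 + ‖ζ i‖ ^ 2) ^ 2)⁻¹ :=
  Integrable.fintype_prod fun _ => integrable_inv_one_add_norm_sq_sq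

lemma integrable_radialDensity {B : ℝ} (hm : Measurable ρ) (hρ : ∀ a, 0 ≤ ρ a)
    (hB : ∀ a, 0 ≤ a → (1 + a) ^ (2 * n + 2) * ρ a ≤ B) :
    Integrable (radialDensity ρ : (Fin n → ℂ) → ℝ) := by
  refine ((integrable_prod_inv_one_add_norm_sq_sq n).const_mul (2 ^ (n * n) * B ^ n)).mono'
    (measurable_radialDensity hm).aestronglyMeasurable (ae_of_all _ fun ζ => ?_)
  rw [Real.norm_of_nonneg (radialDensity_nonneg hρ ζ)]
  exact radialDensity_le hρ hB ζ

lemma ae_norm_sq_ne_one (n : ℕ) : ∀ᵐ ζ : Fin n → ℂ, ∀ i, ‖ζ i‖ ^ 2 ≠ 1 := by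
  have hcircle : ∀ᵐ z : ℂ, ‖z‖ ^ 2 ≠ 1 :=
    (measure_eq_zero_iff_ae_notMem.1 (Measure.addHaar_sphere volume (0 : ℂ) 1)).mono fun z hz h =>
      hz (by simpa using (pow_eq_one_iff_of_nonneg (norm_nonneg z) two_ne_zero).1 h)
  exact ae_all_iff.2 fun i =>
    (Measure.quasiMeasurePreserving_eval (fun _ : Fin n => (volume : Measure ℂ)) i).ae hcircle

end RadialDensity

section Limit

variable {n k : ℕ} {φ : (Fin n → ℂ) → ℝ} {C : ℝ}

/-- The density `∏_{i<j} |ζᵢ - ζⱼ|² ∏ᵢ (1 - |ζᵢ|²)₊ ^ k` of the eigenvalues of an `n × n`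
truncation, up to normalisation. -/
def truncationDensity (k : ℕ) : (Fin n → ℂ) → ℝ := radialDensity fun a => truncatedPow k a 1

lemma truncationDensity_nonneg (k : ℕ) (ζ : Fin n → ℂ) : 0 ≤ truncationDensity k ζ :=
  radialDensity_nonneg (fun a => truncatedPow_nonneg k a 1) ζ

lemma measurable_truncationDensity (k : ℕ) :
    Measurable (truncationDensity k : (Fin n → ℂ) → ℝ) :=
  measurable_radialDensity (measurable_truncatedPow_one k)

lemma integrable_truncationDensity (k : ℕ) :
    Integrable (truncationDensity k : (Fin n → ℂ) → ℝ) :=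
  integrable_radialDensity (measurable_truncatedPow_one k) (fun a => truncatedPow_nonneg k a 1)
    fun _ ha => one_add_pow_mul_truncatedPow_le (2 * n + 2) k ha 1

lemma tendsto_integral_mul_radialDensity_averagedTruncatedPow (hφ : Measurable φ)
    (hC : ∀ ζ, |φ ζ| ≤ C) :
    Tendsto (fun t => ∫ ζ, φ ζ * radialDensity (averagedTruncatedPow k t) ζ) atTop
      (𝓝 (∫ ζ, φ ζ * truncationDensity k ζ)) := by
  obtain ⟨B, hB⟩ := exists_one_add_pow_mul_averagedTruncatedPow_le (2 * n + 2) k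
  refine tendsto_integral_filter_of_dominated_convergence
    (fun ζ => C * (2 ^ (n * n) * B ^ n * ∏ i, ((1 + ‖ζ i‖ ^ 2) ^ 2)⁻¹)) ?_ ?_
    (((integrable_prod_inv_one_add_norm_sq_sq n).const_mul _).const_mul C) ?_
  · exact Eventually.of_forall fun t => (hφ.mul
      (measurable_radialDensity (measurable_averagedTruncatedPow k t))).aestronglyMeasurable
  · filter_upwards [hB] with t ht
    refine ae_of_all _ fun ζ => ?_
    have hnonneg := radialDensity_nonneg (averagedTruncatedPow_nonneg k t) ζ
    rw [norm_mul, Real.norm_of_nonneg hnonneg]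
    exact mul_le_mul (hC ζ) (radialDensity_le (averagedTruncatedPow_nonneg k t) ht ζ) hnonneg
      ((abs_nonneg _).trans (hC ζ))
  · filter_upwards [ae_norm_sq_ne_one n] with ζ hζ
    exact Tendsto.const_mul _ (Tendsto.const_mul _ (tendsto_finsetProd _ fun i _ =>
      tendsto_averagedTruncatedPow k (by positivity) (hζ i)))

end Limit

/-! ### The normalising constant -/

section Andreief

variable {ι α : Type*} [Fintype ι] [DecidableEq ι] [MeasurableSpace α] {μ : Measure α}
  [SigmaFinite μ]

lemma sum_perm_sign_mul_prod_eq_sign_mul_det (M : Matrix ι ι ℂ) (σ : Equiv.Perm ι) :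
    ∑ τ : Equiv.Perm ι, ((Equiv.Perm.sign τ : ℤ) : ℂ) * ∏ i, M (σ i) (τ i) =
      ((Equiv.Perm.sign σ : ℤ) : ℂ) * M.det := by
  rw [← det_permute, ← det_transpose, det_apply']
  rfl

lemma integral_det_mul_det {f g : ι → α → ℂ} (hfg : ∀ i j, Integrable (fun x => f i x * g j x) μ) :
    ∫ x, (of fun i j => f i (x j)).det * (of fun i j => g i (x j)).det
        ∂Measure.pi (fun _ : ι => μ) =
      (Fintype.card ι).factorial * (of fun i j => ∫ x, f i x * g j x ∂μ).det := by
  have hprod (σ τ : Equiv.Perm ι) :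
      Integrable (fun x : ι → α => ∏ i, f (σ i) (x i) * g (τ i) (x i)) (Measure.pi fun _ => μ) :=
    Integrable.fintype_prod fun i => hfg (σ i) (τ i)
  have hexpand (x : ι → α) :
      (of fun i j => f i (x j)).det * (of fun i j => g i (x j)).det =
        ∑ σ : Equiv.Perm ι, ∑ τ : Equiv.Perm ι,
          ((Equiv.Perm.sign σ : ℤ) : ℂ) * (((Equiv.Perm.sign τ : ℤ) : ℂ) *
            ∏ i, f (σ i) (x i) * g (τ i) (x i)) := by
    simp only [det_apply', of_apply, Finset.sum_mul_sum, Finset.prod_mul_distrib]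
    exact Finset.sum_congr rfl fun σ _ => Finset.sum_congr rfl fun τ _ => by ring
  have hsign (σ : Equiv.Perm ι) :
      ((Equiv.Perm.sign σ : ℤ) : ℂ) * ((Equiv.Perm.sign σ : ℤ) : ℂ) = 1 := by
    exact_mod_cast Int.units_coe_mul_self (Equiv.Perm.sign σ)
  calc ∫ x, (of fun i j => f i (x j)).det * (of fun i j => g i (x j)).det
        ∂Measure.pi (fun _ : ι => μ)
      = ∑ σ : Equiv.Perm ι, ((Equiv.Perm.sign σ : ℤ) : ℂ) * ∑ τ : Equiv.Perm ι,
          ((Equiv.Perm.sign τ : ℤ) : ℂ) * ∏ i, ∫ x, f (σ i) x * g (τ i) x ∂μ := by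
        simp only [hexpand]
        rw [integral_finsetSum _ fun σ _ => integrable_finsetSum _ fun τ _ =>
          ((hprod σ τ).const_mul _).const_mul _]
        refine Finset.sum_congr rfl fun σ _ => ?_
        rw [integral_finsetSum _ fun τ _ => ((hprod σ τ).const_mul _).const_mul _, Finset.mul_sum]
        refine Finset.sum_congr rfl fun τ _ => ?_
        rw [integral_const_mul, integral_const_mul]
        exact congrArg _ (congrArg _
          (integral_fintype_prod_eq_prod fun i x => f (σ i) x * g (τ i) x))
    _ = ∑ _σ : Equiv.Perm ι, (of fun i j => ∫ x, f i x * g j x ∂μ).det := by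
        refine Finset.sum_congr rfl fun σ _ => ?_
        rw [← one_mul (det _), ← hsign σ, mul_assoc, ← sum_perm_sign_mul_prod_eq_sign_mul_det]
        rfl
    _ = (Fintype.card ι).factorial * (of fun i j => ∫ x, f i x * g j x ∂μ).det := by
        rw [Finset.sum_const, Finset.card_univ, Fintype.card_perm, nsmul_eq_mul]

end Andreief

section RadialMoments

variable {n : ℕ} {ρ : ℝ → ℝ}

lemma integral_comp_norm_sq {F : ℝ → ℝ} (hF : Measurable F) (hF0 : ∀ s, 0 ≤ s → 0 ≤ F s) :
    ∫ z : ℂ, F (‖z‖ ^ 2) = Real.pi * ∫ s in Set.Ioi (0 : ℝ), F s := by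
  have hnonneg : ∀ᵐ s ∂volume.restrict (Set.Ioi (0 : ℝ)), 0 ≤ F s :=
    ae_restrict_of_forall_mem measurableSet_Ioi fun s hs => hF0 s (le_of_lt hs)
  have hcomp : Measurable fun z : ℂ => F (‖z‖ ^ 2) := hF.comp (by fun_prop)
  rw [integral_eq_lintegral_of_nonneg_ae (ae_of_all _ fun z => hF0 _ (by positivity))
      hcomp.aestronglyMeasurable,
    integral_eq_lintegral_of_nonneg_ae hnonneg hF.aestronglyMeasurable,
    lintegral_comp_norm_sq hF.ennreal_ofReal, ENNReal.toReal_mul,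
    ENNReal.toReal_ofReal Real.pi_pos.le]

lemma integral_pow_mul_conj_pow_mul_of_ne {a b : ℕ} (hab : a ≠ b) (ρ : ℝ → ℝ) :
    ∫ z : ℂ, z ^ a * ρ (‖z‖ ^ 2) * starRingEnd ℂ z ^ b = 0 := by
  have hsub : (a : ℝ) - b ≠ 0 := sub_ne_zero.2 (by exact_mod_cast hab)
  set θ : ℝ := Real.pi / (a - b) with hθ
  have hpi : (Real.pi : ℂ) = a * θ - b * θ := by
    exact_mod_cast show Real.pi = a * θ - b * θ by rw [hθ]; field_simp
  have hphase : (Circle.exp θ : ℂ) ^ a * starRingEnd ℂ (Circle.exp θ : ℂ) ^ b = -1 := by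
    rw [Circle.coe_exp, ← Complex.exp_conj, ← Complex.exp_nat_mul, ← Complex.exp_nat_mul,
      ← Complex.exp_add, ← Complex.exp_pi_mul_I, hpi, map_mul, Complex.conj_I,
      Complex.conj_ofReal]
    ring_nf
  have hrot := (rotation (Circle.exp θ)).measurePreserving.integral_comp
    (rotation (Circle.exp θ)).toHomeomorph.measurableEmbedding
    fun z : ℂ => z ^ a * ρ (‖z‖ ^ 2) * starRingEnd ℂ z ^ b
  have hneg (z : ℂ) : rotation (Circle.exp θ) z ^ a * ρ (‖rotation (Circle.exp θ) z‖ ^ 2) *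
      starRingEnd ℂ (rotation (Circle.exp θ) z) ^ b =
        -(z ^ a * ρ (‖z‖ ^ 2) * starRingEnd ℂ z ^ b) := by
    rw [LinearIsometryEquiv.norm_map, rotation_apply, map_mul, mul_pow, mul_pow]
    linear_combination (z ^ a * ρ (‖z‖ ^ 2) * starRingEnd ℂ z ^ b) * hphase
  simp only [hneg, integral_neg] at hrot
  exact self_eq_neg.1 hrot.symm

lemma integral_pow_mul_conj_pow_self_mul (hm : Measurable ρ) (hρ : ∀ a, 0 ≤ ρ a) (a : ℕ) :
    ∫ z : ℂ, z ^ a * ρ (‖z‖ ^ 2) * starRingEnd ℂ z ^ a =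
      ((Real.pi * ∫ s in Set.Ioi (0 : ℝ), s ^ a * ρ s : ℝ) : ℂ) := by
  have hnorm (z : ℂ) : z ^ a * ρ (‖z‖ ^ 2) * starRingEnd ℂ z ^ a =
      (((‖z‖ ^ 2) ^ a * ρ (‖z‖ ^ 2) : ℝ) : ℂ) := by
    rw [mul_right_comm, ← mul_pow, Complex.mul_conj']
    push_cast
    ring
  simp only [hnorm]
  rw [integral_complex_ofReal, integral_comp_norm_sq (F := fun s => s ^ a * ρ s)
    ((measurable_id.pow_const a).mul hm) fun s hs => mul_nonneg (pow_nonneg hs a) (hρ s)]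

lemma radialDensity_eq_det_mul_det (ζ : Fin n → ℂ) :
    (radialDensity ρ ζ : ℂ) = (of fun i j : Fin n => ζ j ^ (i : ℕ) * ρ (‖ζ j‖ ^ 2)).det *
      (of fun i j : Fin n => starRingEnd ℂ (ζ j) ^ (i : ℕ)).det := by
  have hweight : (of fun i j : Fin n => ζ j ^ (i : ℕ) * (ρ (‖ζ j‖ ^ 2) : ℂ)) =
      (vandermonde ζ)ᵀ * diagonal fun j => (ρ (‖ζ j‖ ^ 2) : ℂ) := by
    ext i j
    simp [vandermonde_apply]
  have hconj : (of fun i j : Fin n => starRingEnd ℂ (ζ j) ^ (i : ℕ)) = (vandermonde ζ)ᴴ := by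
    ext i j
    simp [vandermonde_apply]
  rw [hweight, hconj, det_mul, det_transpose, det_diagonal, det_conjTranspose, radialDensity,
    vandermondeSq_eq_norm_det_sq]
  push_cast
  rw [← Complex.mul_conj']
  exact mul_right_comm _ _ _

lemma integral_radialDensity (hm : Measurable ρ) (hρ : ∀ a, 0 ≤ ρ a)
    (hint : ∀ a : ℕ, Integrable fun z : ℂ => ‖z‖ ^ a * ρ (‖z‖ ^ 2)) :
    ∫ ζ : Fin n → ℂ, radialDensity ρ ζ =
      n.factorial * ∏ i : Fin n, Real.pi * ∫ s in Set.Ioi (0 : ℝ), s ^ (i : ℕ) * ρ s := by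
  have hmoment (i j : Fin n) :
      Integrable fun z : ℂ => z ^ (i : ℕ) * ρ (‖z‖ ^ 2) * starRingEnd ℂ z ^ (j : ℕ) := by
    have hmz : Measurable fun z : ℂ => (ρ (‖z‖ ^ 2) : ℂ) :=
      Complex.measurable_ofReal.comp (hm.comp (by fun_prop))
    refine (hint (i + j)).mono' (((measurable_id.pow_const _).mul hmz).mul
      (Complex.continuous_conj.measurable.pow_const _)).aestronglyMeasurable
      (ae_of_all _ fun z => le_of_eq ?_)
    rw [norm_mul, norm_mul, norm_pow, norm_pow, Complex.norm_conj, Complex.norm_real,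
      Real.norm_of_nonneg (hρ _), mul_right_comm, pow_add]
  have hdiag : (of fun i j : Fin n =>
      ∫ z : ℂ, z ^ (i : ℕ) * ρ (‖z‖ ^ 2) * starRingEnd ℂ z ^ (j : ℕ)) =
      diagonal fun i : Fin n =>
        ((Real.pi * ∫ s in Set.Ioi (0 : ℝ), s ^ (i : ℕ) * ρ s : ℝ) : ℂ) := by
    ext i j
    rcases eq_or_ne i j with rfl | hij
    · rw [of_apply, diagonal_apply_eq, integral_pow_mul_conj_pow_self_mul hm hρ]
    · rw [of_apply, diagonal_apply_ne _ hij,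
        integral_pow_mul_conj_pow_mul_of_ne (Fin.val_ne_of_ne hij)]
  have hAndreief := integral_det_mul_det hmoment
  rw [hdiag, det_diagonal, Fintype.card_fin] at hAndreief
  have hcast : ((∫ ζ : Fin n → ℂ, radialDensity ρ ζ : ℝ) : ℂ) = _ :=
    integral_complex_ofReal.symm.trans
      ((integral_congr_ae (ae_of_all _ fun ζ => radialDensity_eq_det_mul_det ζ)).trans hAndreief)
  exact_mod_cast hcast

end RadialMoments

lemma intervalIntegral_pow_mul_one_sub_pow (a k : ℕ) :
    ∫ s in (0 : ℝ)..1, s ^ a * (1 - s) ^ k =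
      (a.factorial * k.factorial : ℝ) / (a + k + 1).factorial := by
  have hGamma := Complex.Gamma_mul_Gamma_eq_betaIntegral (s := (a : ℂ) + 1) (t := (k : ℂ) + 1)
    (by simpa using Nat.cast_add_one_pos a) (by simpa using Nat.cast_add_one_pos k)
  rw [Complex.Gamma_nat_eq_factorial, Complex.Gamma_nat_eq_factorial,
    show (a : ℂ) + 1 + (k + 1) = ((a + k + 1 : ℕ) : ℂ) + 1 by push_cast; ring,
    Complex.Gamma_nat_eq_factorial] at hGamma
  have hbeta : Complex.betaIntegral ((a : ℂ) + 1) ((k : ℂ) + 1) =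
      ((∫ s in (0 : ℝ)..1, s ^ a * (1 - s) ^ k : ℝ) : ℂ) := by
    simp [Complex.betaIntegral, ← intervalIntegral.integral_ofReal, Complex.cpow_natCast]
  rw [hbeta] at hGamma
  rw [eq_div_iff (by positivity), mul_comm]
  exact_mod_cast hGamma.symm

lemma integral_Ioi_pow_mul_truncatedPow_one (a k : ℕ) :
    ∫ s in Set.Ioi (0 : ℝ), s ^ a * truncatedPow k s 1 =
      (a.factorial * k.factorial : ℝ) / (a + k + 1).factorial := by
  rw [← intervalIntegral_pow_mul_one_sub_pow, intervalIntegral.integral_of_le zero_le_one,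
    integral_Ioc_eq_integral_Ioo, ← Set.Ioi_inter_Iio, ← setIntegral_indicator measurableSet_Iio]
  congr 1 with s
  simp only [truncatedPow, Set.indicator_apply, Set.mem_Iio, mul_ite, mul_zero]

lemma integrable_pow_mul_truncatedPow_norm_sq (a k : ℕ) :
    Integrable fun z : ℂ => ‖z‖ ^ a * truncatedPow k (‖z‖ ^ 2) 1 := by
  have hm : Measurable fun z : ℂ => truncatedPow k (‖z‖ ^ 2) 1 :=
    (measurable_truncatedPow_one k).comp (by fun_prop)
  refine (integrable_inv_one_add_norm_sq_sq.const_mul ((1 + |1|) ^ (a + 2 + k))).mono'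
    ((continuous_norm.pow a).measurable.mul hm).aestronglyMeasurable (ae_of_all _ fun z => ?_)
  have hnonneg := truncatedPow_nonneg k (‖z‖ ^ 2) 1
  rw [Real.norm_of_nonneg (by positivity), ← div_eq_mul_inv, le_div_iff₀ (by positivity)]
  have hle : ‖z‖ ≤ 1 + ‖z‖ ^ 2 := by nlinarith [sq_nonneg (‖z‖ - 1)]
  calc ‖z‖ ^ a * truncatedPow k (‖z‖ ^ 2) 1 * (1 + ‖z‖ ^ 2) ^ 2
      ≤ (1 + ‖z‖ ^ 2) ^ a * truncatedPow k (‖z‖ ^ 2) 1 * (1 + ‖z‖ ^ 2) ^ 2 := by gcongr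
    _ = (1 + ‖z‖ ^ 2) ^ (a + 2) * truncatedPow k (‖z‖ ^ 2) 1 := by ring
    _ ≤ (1 + |1|) ^ (a + 2 + k) := one_add_pow_mul_truncatedPow_le (a + 2) k (by positivity) 1

lemma factorial_mul_factorial_div_eq_inv_choose_mul_inv (i k : ℕ) :
    (i.factorial * k.factorial : ℝ) / (i + k + 1).factorial =
      (((k + i).choose i : ℕ) : ℝ)⁻¹ * ((k + i + 1 : ℕ) : ℝ)⁻¹ := by
  have hchoose : ((k + i).choose i : ℝ) * k.factorial * i.factorial = (k + i).factorial := by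
    exact_mod_cast Nat.add_choose_mul_factorial_mul_factorial k i
  have hne : ((k + i).choose i : ℝ) ≠ 0 := by
    exact_mod_cast (Nat.choose_pos (Nat.le_add_left i k)).ne'
  rw [add_comm i k, Nat.factorial_succ, Nat.cast_mul, ← hchoose]
  field_simp

lemma integral_truncationDensity (n k : ℕ) :
    ∫ ζ : Fin n → ℂ, truncationDensity k ζ = Cconst (n + (k + 1)) n := by
  rw [truncationDensity, integral_radialDensity (measurable_truncatedPow_one k)
    (fun a => truncatedPow_nonneg k a 1) fun a => integrable_pow_mul_truncatedPow_norm_sq a k]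
  simp only [integral_Ioi_pow_mul_truncatedPow_one, Finset.prod_mul_distrib, Finset.prod_const,
    Finset.card_univ, Fintype.card_fin, factorial_mul_factorial_div_eq_inv_choose_mul_inv]
  rw [Cconst, Finset.prod_range, ← Finset.prod_mul_distrib, ← mul_assoc, mul_comm (n.factorial : ℝ)]
  refine congrArg _ (Finset.prod_congr rfl fun i _ => ?_)
  rw [show n + (k + 1) - n + (i : ℕ) - 1 = k + i by omega,
    show n + (k + 1) - n + (i : ℕ) = k + i + 1 by omega]

lemma Cconst_pos (n k : ℕ) : 0 < Cconst (n + (k + 1)) n := by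
  refine mul_pos (by positivity) (Finset.prod_pos fun j _ => mul_pos ?_ ?_) <;>
    rw [inv_pos, Nat.cast_pos]
  · exact Nat.choose_pos (by omega)
  · omega

/-! ### The law of the characteristic polynomial -/

section Law

variable {n k : ℕ}

lemma integral_map_withDensity_ofReal {α β : Type*} [MeasurableSpace α] [MeasurableSpace β]
    {μ : Measure α} {ρ : α → ℝ} {T : α → β} {g : β → ℝ} (hρ : Measurable ρ) (hρ0 : ∀ x, 0 ≤ ρ x)
    (hT : Measurable T) (hg : Measurable g) :
    ∫ y, g y ∂(μ.withDensity fun x => ENNReal.ofReal (ρ x)).map T = ∫ x, g (T x) * ρ x ∂μ := by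
  rw [integral_map hT.aemeasurable hg.aestronglyMeasurable,
    integral_withDensity_eq_integral_toReal_smul hρ.ennreal_ofReal
      (ae_of_all _ fun _ => ENNReal.ofReal_lt_top)]
  simp only [ENNReal.toReal_ofReal (hρ0 _), smul_eq_mul, mul_comm]

lemma lintegral_map_withDensity_ofReal {α β : Type*} [MeasurableSpace α] [MeasurableSpace β]
    {μ : Measure α} {ρ : α → ℝ} {T : α → β} {g : β → ℝ≥0∞} (hρ : Measurable ρ)
    (hT : Measurable T) (hg : Measurable g) :
    ∫⁻ y, g y ∂(μ.withDensity fun x => ENNReal.ofReal (ρ x)).map T =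
      ∫⁻ x, g (T x) * ENNReal.ofReal (ρ x) ∂μ := by
  rw [lintegral_map hg hT]
  exact (lintegral_withDensity_eq_lintegral_mul _ hρ.ennreal_ofReal (hg.comp hT)).trans
    (lintegral_congr fun x => mul_comm _ _)

lemma exists_eigenvalueWeight_eq (n k t : ℕ) : ∃ l : ℝ≥0, ∀ ζ : Fin n → ℂ,
    eigenvalueWeight (t + 1) (k + 1) ζ =
      l * ENNReal.ofReal (radialDensity (averagedTruncatedPow k (t + 1)) ζ) := by
  obtain ⟨l, hl, htail⟩ := exists_tailWeight_eq k t
  refine ⟨(l ^ n).toNNReal, fun ζ => ?_⟩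
  change _ = ENNReal.ofReal (l ^ n) * _
  simp only [eigenvalueWeight, htail]
  rw [← ENNReal.ofReal_prod_of_nonneg fun i _ =>
      mul_nonneg hl (averagedTruncatedPow_nonneg k (t + 1) _),
    ← ENNReal.ofReal_mul (vandermondeSq_nonneg ζ), ← ENNReal.ofReal_mul (by positivity),
    Finset.prod_mul_distrib, Finset.prod_const, Finset.card_univ, Fintype.card_fin, radialDensity]
  ring_nf

lemma measurable_normalizedGramWeight_pow (a n t : ℕ) :
    Measurable fun M : Fin a → Fin n → ℂ => normalizedGramWeight (of M) ^ t :=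
  ((continuous_normalizedGramWeight_of a n).pow t).measurable

lemma exists_map_withDensity_normalizedGramWeight_pow (n k t : ℕ) : ∃ c : ℝ≥0∞,
    (volume.withDensity fun M : Fin (n + (k + 1)) → Fin n → ℂ =>
        ENNReal.ofReal (normalizedGramWeight (of M) ^ (t + 1))).map
      (fun M => lowerCoeffs n (topBlock M).charpoly) =
    c • (volume.withDensity fun ζ =>
        ENNReal.ofReal (radialDensity (averagedTruncatedPow k (t + 1)) ζ)).map vieta := by
  obtain ⟨c, hc⟩ := exists_lintegral_topBlock_gramWeight (t + 1) n (k + 1)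
  obtain ⟨l, hl⟩ := exists_eigenvalueWeight_eq n k t
  set e : ℝ≥0∞ := ENNReal.ofReal (Real.exp (n * (t + 1 : ℕ)))
  have hexp (M : Fin (n + (k + 1)) → Fin n → ℂ) :
      ENNReal.ofReal (normalizedGramWeight (of M) ^ (t + 1)) =
        e * ENNReal.ofReal (gramWeight (t + 1) (of M)) := by
    rw [normalizedGramWeight_pow, Fintype.card_fin, ENNReal.ofReal_mul (Real.exp_pos _).le]
  refine ⟨e * (c * l), Measure.ext_of_lintegral _ fun g hg => ?_⟩
  rw [lintegral_smul_measure,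
    lintegral_map_withDensity_ofReal (measurable_normalizedGramWeight_pow _ n (t + 1))
      continuous_lowerCoeffs_charpoly_topBlock.measurable hg,
    lintegral_map_withDensity_ofReal
      (measurable_radialDensity (measurable_averagedTruncatedPow k (t + 1)))
      continuous_vieta.measurable hg]
  simp only [hexp, mul_left_comm _ e]
  rw [lintegral_const_mul' e _ ENNReal.ofReal_ne_top, hc g hg]
  simp only [hl, mul_left_comm _ (l : ℝ≥0∞)]
  rw [lintegral_const_mul' _ _ ENNReal.coe_ne_top, smul_eq_mul, mul_assoc, mul_assoc]

lemma integral_normalizedGramWeight_pow_pos (n k t : ℕ) :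
    0 < ∫ M : Fin (n + k) → Fin n → ℂ, normalizedGramWeight (of M) ^ (t + 1) :=
  integral_pow_pos (fun M => normalizedGramWeight_nonneg (of M))
    (fun M => normalizedGramWeight_le_one (of M)) (integrable_normalizedGramWeight _ n)
    (fun _ hδ => volume_superlevel_normalizedGramWeight_ne_zero n k hδ) t

lemma integral_lowerCoeffs_charpoly_topBlock_div (t : ℕ) {g : (Fin n → ℂ) → ℝ}
    (hg : Measurable g) :
    (∫ M : Fin (n + (k + 1)) → Fin n → ℂ,
          g (lowerCoeffs n (topBlock M).charpoly) * normalizedGramWeight (of M) ^ (t + 1)) /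
        ∫ M : Fin (n + (k + 1)) → Fin n → ℂ, normalizedGramWeight (of M) ^ (t + 1) =
      (∫ ζ, g (vieta ζ) * radialDensity (averagedTruncatedPow k (t + 1)) ζ) /
        ∫ ζ : Fin n → ℂ, radialDensity (averagedTruncatedPow k (t + 1)) ζ := by
  obtain ⟨c, hc⟩ := exists_map_withDensity_normalizedGramWeight_pow n k t
  have hscale {h : (Fin n → ℂ) → ℝ} (hh : Measurable h) :
      ∫ M : Fin (n + (k + 1)) → Fin n → ℂ,
          h (lowerCoeffs n (topBlock M).charpoly) * normalizedGramWeight (of M) ^ (t + 1) =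
        c.toReal * ∫ ζ, h (vieta ζ) * radialDensity (averagedTruncatedPow k (t + 1)) ζ := by
    rw [← integral_map_withDensity_ofReal (measurable_normalizedGramWeight_pow _ n (t + 1))
        (fun M => pow_nonneg (normalizedGramWeight_nonneg _) _)
        continuous_lowerCoeffs_charpoly_topBlock.measurable hh, hc, integral_smul_measure,
      integral_map_withDensity_ofReal
        (measurable_radialDensity (measurable_averagedTruncatedPow k (t + 1)))
        (radialDensity_nonneg (averagedTruncatedPow_nonneg k (t + 1)))
        continuous_vieta.measurable hh, smul_eq_mul]
  have htotal := hscale (h := fun _ => 1) measurable_const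
  simp only [one_mul] at htotal
  have hc0 : c.toReal ≠ 0 := fun h => (integral_normalizedGramWeight_pow_pos n (k + 1) t).ne'
    (by rw [htotal, h, zero_mul])
  rw [hscale hg, htotal, mul_div_mul_left _ _ hc0]

lemma topBlock_leftMul_standardIsometry (U : Matrix (Fin (n + k)) (Fin (n + k)) ℂ) :
    topBlock (leftMul (Fin n) U (of.symm (standardIsometry n k))) = truncation (n + k) n U := by
  ext i j
  have hlt : (i : ℕ) < n + k ∧ (j : ℕ) < n + k := by omega
  rw [truncation, of_apply, dif_pos hlt]
  exact congrFun (congrFun (mul_submatrix_one (Equiv.refl _) (Fin.castAdd k) U) (Fin.castAdd k i)) j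

variable (ℙ : Measure (unitaryGroup (Fin (n + (k + 1))) ℂ)) [IsProbabilityMeasure ℙ]
  [ℙ.IsMulLeftInvariant]

lemma integral_lowerCoeffs_charpoly_truncation {g : (Fin n → ℂ) → ℝ} {C : ℝ} (hg : Continuous g)
    (hC : ∀ q, |g q| ≤ C) :
    ∫ U, g (lowerCoeffs n (truncation (n + (k + 1)) n U.val).charpoly) ∂ℙ =
      (∫ ζ, g (vieta ζ) * truncationDensity k ζ) / Cconst (n + (k + 1)) n := by
  have hHaar := tendsto_integral_mul_normalizedGramWeight_pow_div_unitaryAverage ℙ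
    (hg.comp continuous_lowerCoeffs_charpoly_topBlock) fun _ => hC _
  have hnum := tendsto_integral_mul_radialDensity_averagedTruncatedPow (k := k)
    (hg.comp continuous_vieta).measurable fun _ => hC _
  have hdenom := tendsto_integral_mul_radialDensity_averagedTruncatedPow (n := n) (k := k)
    (φ := fun _ => 1) (C := 1) measurable_const fun _ => by simp
  simp only [one_mul, integral_truncationDensity] at hdenom
  have hlim := (hnum.div hdenom (Cconst_pos n k).ne').comp (tendsto_add_atTop_nat 1)
  have hunique := tendsto_nhds_unique (hHaar.comp (tendsto_add_atTop_nat 1))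
    (hlim.congr fun t => (integral_lowerCoeffs_charpoly_topBlock_div t hg.measurable).symm)
  simpa only [unitaryAverage, Function.comp_apply, topBlock_leftMul_standardIsometry] using hunique

lemma measurable_lowerCoeffs_charpoly_truncation :
    Measurable fun U : unitaryGroup (Fin (n + k)) ℂ =>
      lowerCoeffs n (truncation (n + k) n U.val).charpoly := by
  simp only [← topBlock_leftMul_standardIsometry]
  exact (continuous_lowerCoeffs_charpoly_topBlock.comp
    (continuous_leftMul_unitaryGroup.comp (Continuous.prodMk_left _))).measurable

theorem smul_map_lowerCoeffs_charpoly_truncation :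
    ENNReal.ofReal (Cconst (n + (k + 1)) n) •
        ℙ.map (fun U => lowerCoeffs n (truncation (n + (k + 1)) n U.val).charpoly) =
      (volume.withDensity fun ζ => ENNReal.ofReal (truncationDensity k ζ)).map vieta := by
  have hC := Cconst_pos n k
  have := isFiniteMeasure_withDensity_ofReal (integrable_truncationDensity (n := n) k).2
  have := Measure.smul_finite
    (ℙ.map fun U => lowerCoeffs n (truncation (n + (k + 1)) n U.val).charpoly)
    (ENNReal.ofReal_ne_top (r := Cconst (n + (k + 1)) n))
  refine ext_of_forall_integral_eq_of_IsFiniteMeasure fun g => ?_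
  rw [integral_smul_measure, ENNReal.toReal_ofReal hC.le, smul_eq_mul,
    integral_map measurable_lowerCoeffs_charpoly_truncation.aemeasurable
      g.continuous.aestronglyMeasurable,
    integral_lowerCoeffs_charpoly_truncation ℙ g.continuous g.norm_coe_le_norm,
    integral_map_withDensity_ofReal (measurable_truncationDensity k) (truncationDensity_nonneg k)
      continuous_vieta.measurable g.continuous.measurable, mul_div_cancel₀ _ hC.ne']

end Law

section SymmetricObservables

variable {n k : ℕ}

lemma setIntegral_polydisc_eq (f : (Fin n → ℂ) → ℝ) :
    ∫ ζ in {ζ : Fin n → ℂ | ∀ i, ‖ζ i‖ ≤ 1}, f ζ * vandermondeSq ζ * ∏ i, (1 - ‖ζ i‖ ^ 2) ^ k =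
      ∫ ζ, f ζ * truncationDensity k ζ := by
  have hclosed : IsClosed {ζ : Fin n → ℂ | ∀ i, ‖ζ i‖ ≤ 1} := by
    rw [Set.ofPred_forall]
    exact isClosed_iInter fun i => isClosed_le (by fun_prop) continuous_const
  rw [← integral_indicator hclosed.measurableSet]
  refine integral_congr_ae ?_
  filter_upwards [ae_norm_sq_ne_one n] with ζ hζ
  rw [truncationDensity, radialDensity]
  by_cases hmem : ζ ∈ {ζ : Fin n → ℂ | ∀ i, ‖ζ i‖ ≤ 1}
  · have hlt (i : Fin n) : ‖ζ i‖ ^ 2 < 1 :=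
      (pow_le_one₀ (norm_nonneg _) (hmem i)).lt_of_ne (hζ i)
    rw [Set.indicator_of_mem hmem]
    simp only [truncatedPow, hlt, if_true, mul_assoc]
  · rw [Set.indicator_of_notMem hmem]
    obtain ⟨i, hi⟩ := not_forall.1 hmem
    have hzero : truncatedPow k (‖ζ i‖ ^ 2) 1 = 0 :=
      if_neg (one_le_pow₀ (le_of_not_ge hi)).not_gt
    rw [Finset.prod_eq_zero (Finset.mem_univ i) hzero, mul_zero, mul_zero]

lemma exists_measurable_comp_vieta_eq {f : (Fin n → ℂ) → ℝ} (hf : Measurable f)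
    (hsym : ∀ (σ : Equiv.Perm (Fin n)) (ζ : Fin n → ℂ), f (ζ ∘ σ) = f ζ) :
    ∃ g : (Fin n → ℂ) → ℝ, Measurable g ∧ ∀ ζ, g (vieta ζ) = f ζ := by
  have hcomp (ζ : Fin n → ℂ) : f (Function.surjInv vieta_surjective (vieta ζ)) = f ζ := by
    have hroots := (vieta_eq_iff (monicOfRoots_monic ζ) (monicOfRoots_natDegree ζ)).1
      (Function.surjInv_eq vieta_surjective (vieta ζ))
    obtain ⟨σ, hσ⟩ := exists_perm_of_monicOfRoots_eq hroots
    rw [← hσ, hsym]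
  refine ⟨f ∘ Function.surjInv vieta_surjective,
    (continuous_vieta.measurable.measurable_comp_iff_of_surjective vieta_surjective).1 ?_, hcomp⟩
  simpa only [Function.comp_def, hcomp] using hf

end SymmetricObservables

theorem truncated_haar_unitary_joint_eigenvalue_density_general
    {m n : ℕ} (hmn : n < m) (ℙ : Measure (Matrix.unitaryGroup (Fin m) ℂ))
    [IsProbabilityMeasure ℙ] [ℙ.IsMulLeftInvariant] {f : (Fin n → ℂ) → ℝ} (hmeas : Measurable f)
    (hsym : ∀ (σ : Equiv.Perm (Fin n)) (ζ : Fin n → ℂ), f (ζ ∘ σ) = f ζ) :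
    ∫ U, f (eigTuple (truncation m n U.val)) ∂ℙ =
      (Cconst m n)⁻¹ *
        ∫ ζ in {ζ : Fin n → ℂ | ∀ i, ‖ζ i‖ ≤ 1},
          f ζ * (∏ p ∈ Finset.univ.filter (fun p : Fin n × Fin n => p.1 < p.2),
              ‖ζ p.1 - ζ p.2‖ ^ 2) *
            ∏ i, (1 - ‖ζ i‖ ^ 2) ^ (m - n - 1) := by
  obtain ⟨k, rfl⟩ : ∃ k, m = n + (k + 1) := ⟨m - n - 1, by omega⟩
  obtain ⟨g, hg, hgf⟩ := exists_measurable_comp_vieta_eq hmeas hsym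
  have hlaw := congrArg (fun μ => ∫ q, g q ∂μ) (smul_map_lowerCoeffs_charpoly_truncation ℙ)
  have hC := Cconst_pos n k
  have heig (A : Matrix (Fin n) (Fin n) ℂ) : g (lowerCoeffs n A.charpoly) = f (eigTuple A) := by
    rw [← monicOfRoots_eigTuple, ← vieta, hgf]
  simp only [integral_smul_measure, ENNReal.toReal_ofReal hC.le, smul_eq_mul,
    integral_map measurable_lowerCoeffs_charpoly_truncation.aemeasurable hg.aestronglyMeasurable,
    integral_map_withDensity_ofReal (measurable_truncationDensity k) (truncationDensity_nonneg k)
      continuous_vieta.measurable hg, heig, hgf] at hlaw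
  rw [eq_inv_mul_iff_mul_eq₀ hC.ne', hlaw, ← setIntegral_polydisc_eq,
    show n + (k + 1) - n - 1 = k by omega]
  rfl

/-- **The joint eigenvalue density of a truncated Haar unitary matrix**
(Życzkowski–Sommers).  Here `ℙ` is the Haar probability measure on the `m × m` unitary
group (the unique left-invariant Borel probability measure), and for every bounded
measurable symmetric function `f` of the `n` eigenvalues of the `n × n` truncation,
`E[f(ζ₁,…,ζₙ)] = C_{[m,n]}⁻¹ ∫_{𝔻ⁿ} f(ζ) ∏_{i<j} |ζ_i-ζ_j|² ∏_i (1-|ζ_i|²)^{m-n-1} dζ`. -/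
theorem truncated_haar_unitary_joint_eigenvalue_density
    (m n : ℕ) (hn : 0 < n) (hmn : n < m)
    (ℙ : Measure (Matrix.unitaryGroup (Fin m) ℂ))
    (hprob : IsProbabilityMeasure ℙ)
    (hinv : ∀ V : Matrix.unitaryGroup (Fin m) ℂ,
      Measure.map (fun U => V * U) ℙ = ℙ)
    (f : (Fin n → ℂ) → ℝ) (hmeas : Measurable f)
    (hbdd : ∃ C : ℝ, ∀ ζ, |f ζ| ≤ C)
    (hsym : ∀ (σ : Equiv.Perm (Fin n)) (ζ : Fin n → ℂ), f (ζ ∘ σ) = f ζ) :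
    ∫ U, f (eigTuple (truncation m n U.val)) ∂ℙ =
      (Cconst m n)⁻¹ *
        ∫ ζ in {ζ : Fin n → ℂ | ∀ i, ‖ζ i‖ ≤ 1},
          f ζ * (∏ p ∈ Finset.univ.filter (fun p : Fin n × Fin n => p.1 < p.2),
              ‖ζ p.1 - ζ p.2‖ ^ 2) *
            ∏ i, (1 - ‖ζ i‖ ^ 2) ^ (m - n - 1) := by
  have : ℙ.IsMulLeftInvariant := ⟨hinv⟩
  exact truncated_haar_unitary_joint_eigenvalue_density_general hmn ℙ hmeas hsym
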